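/- arXiv:1110.5597 — 3 statements merged into one kernel-verified Lean document; each statement's English description precedes it below -/
import Mathlib

section
/- Let M be a von Neumann algebra acting on a separable complex Hilbert space, equipped with a faithful normal tracial state, and suppose M is hyperfinite, i.e., there exists an increasing sequence of finite-dimensional unital *-subalgebras of M whose union is dense in M in the strong operator topology. Let D be a finite-dimensional abelian unital *-subalgebra of M. Then there exists an increasing sequence A_0 ⊆ A_1 ⊆ A_2 ⊆ … of finite-dimensional unital *-subalgebras of M, each containing D (and one may take A_0 = D), whose union is dense in M in the strong operator topology. -/
open Filter Topology
open scoped InnerProductSpace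

/-!
Let `M` be the strong closure of the union of an increasing sequence of finite-dimensional algebras
`B n`. Choose maximal abelian subalgebras `E n` of the `B n` such that, for `n ≤ m`, `E m` is
generated by `E n` and elements commuting with `B n`. The minimal projections of `D` are close in
trace norm to a partition of unity in some `B n`, and a unitary close to `1` rotates them into
`E n`. Iterating with geometrically decreasing errors, the product of the unitaries converges to a
unitary `v` of `M` such that `v D v*` lies in the trace norm closure of `⋃ n, E n`.

Every projection in this closure has the form `∑ i, f i * t i`, where the `f i` are the minimal
projections of `E n` and the `t i` are commuting projections in the commutant of `B n`. Hence `B n`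
and `v D v*` together generate a finite-dimensional algebra, and conjugating back, so do `v* B n v`
and `D`. These algebras increase, and the union of the `v* B n v` is strongly dense in `M`.
-/

/-- A finite family of mutually orthogonal self-adjoint projections with sum `1`: a partition of
unity by projections. Some of the projections may vanish. -/
structure IsProjPartition {A ι : Type*} [Semiring A] [Star A] [Fintype ι] (f : ι → A) : Prop
    extends CompleteOrthogonalIdempotents f where
  isSelfAdjoint : ∀ i, IsSelfAdjoint (f i)

namespace IsProjPartition

section Star

variable {A A' ι κ : Type*} [Ring A] [StarRing A] [Ring A'] [StarRing A'] [Fintype ι] [Fintype κ]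
  {f : ι → A}

theorem isStarProjection (hf : IsProjPartition f) (i : ι) : IsStarProjection (f i) :=
  ⟨hf.idem i, hf.isSelfAdjoint i⟩

theorem map {F : Type*} [FunLike F A A'] [RingHomClass F A A'] [StarHomClass F A A']
    (hf : IsProjPartition f) (φ : F) : IsProjPartition fun i => φ (f i) where
  toCompleteOrthogonalIdempotents :=
    hf.toCompleteOrthogonalIdempotents.map (RingHomClass.toRingHom φ)
  isSelfAdjoint i := (hf.isSelfAdjoint i).map φ

theorem of_map {F : Type*} [FunLike F A A'] [RingHomClass F A A'] [StarHomClass F A A'] {φ : F}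
    (hφ : Function.Injective φ) (hf : IsProjPartition fun i => φ (f i)) : IsProjPartition f where
  idem i := hφ ((map_mul φ _ _).trans (hf.idem i))
  ortho _ _ hij := hφ ((map_mul φ _ _).trans ((hf.ortho hij).trans (map_zero φ).symm))
  complete := hφ (by rw [map_sum, hf.complete, map_one])
  isSelfAdjoint i := hφ ((map_star φ _).trans (hf.isSelfAdjoint i))

theorem sum_fiber [DecidableEq κ] (hf : IsProjPartition f) (g : ι → κ) :
    IsProjPartition fun j => ∑ i with g i = j, f i where
  idem _ := hf.isIdempotentElem_sum
  ortho j k hjk := by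
    simp only [Finset.sum_mul, Finset.mul_sum]
    refine Finset.sum_eq_zero fun i hi => Finset.sum_eq_zero fun i' hi' => hf.ortho ?_
    rintro rfl
    simp_all
  complete := (Finset.sum_fiberwise _ _ _).trans hf.complete
  isSelfAdjoint _ := isSelfAdjoint_sum _ fun i _ => hf.isSelfAdjoint i

theorem single_one [DecidableEq ι] (i : ι) : IsProjPartition (Pi.single i 1 : ι → A) where
  idem j := by rcases eq_or_ne j i with rfl | h <;> simp [IsIdempotentElem, *]
  ortho j k hjk := by
    rcases eq_or_ne j i with rfl | h
    · simp [hjk.symm]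
    · simp [h]
  complete := by simp
  isSelfAdjoint j := by rcases eq_or_ne j i with rfl | h <;> simp [*]

theorem sub_apply_eq_sum {f g : ι → A} (hf : IsProjPartition f) (hg : IsProjPartition g) (i : ι) :
    g i - f i = ∑ j, (g i * f j - g j * f i) := by
  rw [Finset.sum_sub_distrib, ← Finset.mul_sum, ← Finset.sum_mul, hf.complete, hg.complete, mul_one,
    one_mul]

end Star

section Diagonal

variable {A ι : Type*} [Ring A] [StarRing A] [Algebra ℂ A] [Fintype ι] {f : ι → A}

theorem sum_smul_mul (hf : IsProjPartition f) (c : ι → ℂ) (j : ι) :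
    (∑ i, c i • f i) * f j = c j • f j := by
  classical
  simp [Finset.sum_mul, hf.mul_eq, smul_ite]

theorem mul_sum_smul (hf : IsProjPartition f) (c : ι → ℂ) (j : ι) :
    f j * (∑ i, c i • f i) = c j • f j := by
  classical
  simp [Finset.mul_sum, hf.mul_eq, smul_ite]

theorem sum_smul_mul_sum_smul (hf : IsProjPartition f) (c d : ι → ℂ) :
    (∑ i, c i • f i) * (∑ i, d i • f i) = ∑ i, (c i * d i) • f i := by
  simp only [Finset.mul_sum, mul_smul_comm, hf.sum_smul_mul, smul_smul, mul_comm]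

theorem star_sum_smul [StarModule ℂ A] (hf : IsProjPartition f) (c : ι → ℂ) :
    star (∑ i, c i • f i) = ∑ i, star (c i) • f i := by
  simp only [star_sum, star_smul, (hf.isSelfAdjoint _).star_eq]

theorem one_eq_sum_smul (hf : IsProjPartition f) : 1 = ∑ i, (1 : ℂ) • f i := by
  simp only [one_smul, hf.complete]

theorem sum_re_smul_of_isSelfAdjoint [StarModule ℂ A] (hf : IsProjPartition f) {c : ι → ℂ}
    (hsa : IsSelfAdjoint (∑ i, c i • f i)) :
    ∑ i, ((c i).re : ℂ) • f i = ∑ i, c i • f i := by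
  refine Finset.sum_congr rfl fun i _ => ?_
  have hstar : star (c i) • f i = c i • f i := by
    rw [← hf.sum_smul_mul (fun i => star (c i)), ← hf.star_sum_smul, hsa.star_eq, hf.sum_smul_mul]
  calc ((c i).re : ℂ) • f i = (2⁻¹ : ℂ) • (c i • f i + star (c i) • f i) := by
        rw [← add_smul, smul_smul, RCLike.star_def, Complex.add_conj]
        congr 1
        push_cast
        ring
    _ = c i • f i := by rw [hstar]; module

theorem commute_of_commute_sum (hf : IsProjPartition f) {c : ι → ℂ} (hc : Function.Injective c)
    {x : A} (hx : Commute (∑ i, c i • f i) x) (j : ι) : Commute (f j) x := by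
  have off_diagonal : ∀ i k, i ≠ k → f i * x * f k = 0 := fun i k hik => by
    have h : c i • (f i * x * f k) = c k • (f i * x * f k) := by
      rw [← smul_mul_assoc, ← smul_mul_assoc, ← hf.mul_sum_smul, mul_assoc (f i), hx.eq,
        mul_assoc (f i), mul_assoc x, hf.sum_smul_mul, mul_smul_comm, mul_smul_comm, mul_assoc]
    rw [← sub_eq_zero, ← sub_smul] at h
    exact (smul_eq_zero.mp h).resolve_left (sub_ne_zero.mpr (hc.ne hik))
  have hr : f j * x = f j * x * f j := by
    conv_lhs => rw [← mul_one (f j * x), ← hf.complete, Finset.mul_sum]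
    exact Finset.sum_eq_single j (fun k _ hk => off_diagonal j k hk.symm) (by simp)
  have hl : x * f j = f j * x * f j := by
    conv_lhs => rw [← one_mul (x * f j), ← hf.complete, Finset.sum_mul]
    simp only [← mul_assoc]
    exact Finset.sum_eq_single j (fun k _ hk => off_diagonal k j hk) (by simp)
  exact hr.trans hl.symm

end Diagonal

end IsProjPartition

section Spectral

theorem finite_characterSpace (C : Type*) [CommCStarAlgebra C] [FiniteDimensional ℂ C] :
    Finite (WeakDual.characterSpace ℂ C) :=
  Finite.of_injective (β := C →ₐ[ℂ] ℂ) WeakDual.CharacterSpace.toAlgHom fun _ _ h =>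
    WeakDual.CharacterSpace.ext fun x => DFunLike.congr_fun h x

/-- By Gelfand duality such an algebra consists of the functions on a finite discrete space. -/
theorem exists_isProjPartition_forall_eq_sum (C : Type*) [CommCStarAlgebra C]
    [FiniteDimensional ℂ C] :
    ∃ (n : ℕ) (f : Fin n → C), IsProjPartition f ∧ ∀ x, ∃ c : Fin n → ℂ, x = ∑ i, c i • f i := by
  classical
  have := finite_characterSpace C
  obtain ⟨n, ⟨e⟩⟩ := Finite.exists_equiv_fin (WeakDual.characterSpace ℂ C)
  let δ (i : Fin n) : C(WeakDual.characterSpace ℂ C, ℂ) :=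
    ⟨fun χ => if e χ = i then 1 else 0, continuous_of_discreteTopology⟩
  have hδ : IsProjPartition δ :=
    { idem := fun i => by ext χ; simp [δ]
      ortho := fun i j hij => by
        ext χ
        by_cases h : e χ = i <;> simp_all [δ]
      complete := by ext χ; simp [δ]
      isSelfAdjoint := fun i => by ext χ; simp [δ, apply_ite] }
  let Φ := gelfandStarTransform C
  refine ⟨n, fun i => Φ.symm (δ i), hδ.map Φ.symm, fun x => ⟨fun i => Φ x (e.symm i), ?_⟩⟩
  have h : Φ x = ∑ i, Φ x (e.symm i) • δ i := by ext χ; simp [δ]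
  calc x = Φ.symm (Φ x) := (Φ.symm_apply_apply x).symm
    _ = Φ.symm (∑ i, Φ x (e.symm i) • δ i) := congrArg Φ.symm h
    _ = ∑ i, Φ x (e.symm i) • Φ.symm (δ i) := by simp only [map_sum, map_smul]

variable {A : Type*} [CStarAlgebra A]

instance [FiniteDimensional ℂ A] (B : StarSubalgebra ℂ A) : FiniteDimensional ℂ B :=
  inferInstanceAs (FiniteDimensional ℂ B.toSubalgebra.toSubmodule)

noncomputable instance (B : StarSubalgebra ℂ A) [FiniteDimensional ℂ B] : CStarAlgebra B :=
  StarSubalgebra.cstarAlgebra B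
    (h_closed := B.toSubalgebra.toSubmodule.closed_of_finiteDimensional)

open scoped IsMulCommutative in
theorem exists_isProjPartition_mem_forall_eq_sum (E : StarSubalgebra ℂ A) [FiniteDimensional ℂ E]
    [IsMulCommutative E] : ∃ (n : ℕ) (f : Fin n → A), IsProjPartition f ∧ (∀ i, f i ∈ E) ∧
      ∀ x ∈ E, ∃ c : Fin n → ℂ, x = ∑ i, c i • f i := by
  let _ : CommCStarAlgebra E := { __ := (inferInstance : CStarAlgebra E), mul_comm := mul_comm }
  obtain ⟨n, f, hf, hspan⟩ := exists_isProjPartition_forall_eq_sum E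
  refine ⟨n, fun i => (f i : A), hf.map E.subtype, fun i => (f i).2, fun x hx => ?_⟩
  obtain ⟨c, hc⟩ := hspan ⟨x, hx⟩
  exact ⟨c, by simpa using congrArg E.subtype hc⟩

theorem exists_isProjPartition_eq_sum_of_isSelfAdjoint [FiniteDimensional ℂ A] {y : A}
    (hy : IsSelfAdjoint y) :
    ∃ (n : ℕ) (f : Fin n → A) (l : Fin n → ℝ), IsProjPartition f ∧ y = ∑ i, (l i : ℂ) • f i := by
  have := hy.isStarNormal
  obtain ⟨n, f, hf, -, hspan⟩ :=
    exists_isProjPartition_mem_forall_eq_sum (StarAlgebra.adjoin ℂ {y})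
  obtain ⟨c, hc⟩ := hspan y (StarAlgebra.self_mem_adjoin_singleton ℂ y)
  exact ⟨n, f, fun i => (c i).re, hf, by rw [hf.sum_re_smul_of_isSelfAdjoint (hc ▸ hy), ← hc]⟩

end Spectral

section Trace

open scoped ComplexOrder

/-- A faithful positive tracial functional on a *-algebra, the abstract form of the trace of a
finite von Neumann algebra. It is not required to be normalized. -/
structure FaithfulTrace (A : Type*) [Ring A] [StarRing A] [Algebra ℂ A] extends A →ₗ[ℂ] ℂ where
  map_mul_comm' : ∀ x y, toFun (x * y) = toFun (y * x)
  map_star_mul_self_nonneg' : ∀ x, 0 ≤ toFun (star x * x)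
  eq_zero_of_map_star_mul_self' : ∀ x, toFun (star x * x) = 0 → x = 0

namespace FaithfulTrace

section Algebraic

variable {A : Type*} [Ring A] [StarRing A] [Algebra ℂ A] (τ : FaithfulTrace A)

instance : FunLike (FaithfulTrace A) A ℂ where
  coe τ := τ.toFun
  coe_injective τ₁ τ₂ h := by
    cases τ₁
    cases τ₂
    congr
    exact DFunLike.coe_injective h

instance : LinearMapClass (FaithfulTrace A) ℂ A ℂ where
  map_add τ := τ.map_add'
  map_smulₛₗ τ := τ.map_smul'

theorem map_mul_comm (x y : A) : τ (x * y) = τ (y * x) := τ.map_mul_comm' x y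

theorem map_star_mul_self_nonneg (x : A) : 0 ≤ τ (star x * x) := τ.map_star_mul_self_nonneg' x

variable [StarModule ℂ A]

theorem map_star (x : A) : τ (star x) = star (τ x) := by
  have him (y : A) : (τ (star y * y)).im = 0 :=
    (Complex.nonneg_iff.mp (τ.map_star_mul_self_nonneg y)).2.symm
  have h1 := him (x + 1)
  have hI := him (x + Complex.I • 1)
  have hx := him x
  have h₁ := him 1
  simp only [star_add, star_one, star_smul, add_mul, mul_add, mul_one, one_mul, map_add,
    mul_smul_comm, smul_mul_assoc, map_smul, Complex.add_im, smul_eq_mul, RCLike.star_def,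
    Complex.conj_I, Complex.mul_im, Complex.mul_re, Complex.neg_re, Complex.neg_im, Complex.I_re,
    Complex.I_im]
    at h1 hI hx h₁
  apply Complex.ext <;> simp only [RCLike.star_def, Complex.conj_re, Complex.conj_im] <;> linarith

/-- The sesquilinear form `⟨x, y⟩ = τ (x* y)`. -/
abbrev innerCore : PreInnerProductSpace.Core ℂ A where
  inner x y := τ (star x * y)
  conj_inner_symm x y := by
    change star _ = _
    rw [← map_star, star_mul, star_star]
  re_inner_nonneg x := (Complex.nonneg_iff.mp (τ.map_star_mul_self_nonneg x)).1
  add_left x y z := by rw [star_add, add_mul, map_add]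
  smul_left x y c := by rw [star_smul, smul_mul_assoc, map_smul]; rfl

/-- The trace norm `‖x‖₂ = τ (x* x) ^ (1 / 2)`. -/
noncomputable def twoNorm : Seminorm ℂ A :=
  letI := τ.innerCore
  letI : SeminormedAddCommGroup A := InnerProductSpace.Core.toSeminormedAddCommGroup (𝕜 := ℂ)
  letI : NormedSpace ℂ A := InnerProductSpace.Core.toNormedSpace
  normSeminorm ℂ A

theorem twoNorm_sq (x : A) : τ.twoNorm x ^ 2 = (τ (star x * x)).re :=
  Real.sq_sqrt (Complex.nonneg_iff.mp (τ.map_star_mul_self_nonneg x)).1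

theorem norm_map_star_mul_le (x y : A) : ‖τ (star x * y)‖ ≤ τ.twoNorm x * τ.twoNorm y :=
  letI := τ.innerCore
  InnerProductSpace.Core.norm_inner_le_norm (𝕜 := ℂ) x y

theorem twoNorm_sum_le {ι : Type*} (s : Finset ι) (f : ι → A) :
    τ.twoNorm (∑ i ∈ s, f i) ≤ ∑ i ∈ s, τ.twoNorm (f i) :=
  Finset.le_sum_of_subadditive _ (map_zero _).le (map_add_le_add _) _ _

theorem twoNorm_star (x : A) : τ.twoNorm (star x) = τ.twoNorm x := by
  rw [← sq_eq_sq₀ (apply_nonneg _ _) (apply_nonneg _ _), twoNorm_sq, twoNorm_sq, star_star,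
    map_mul_comm]

theorem eq_zero_of_twoNorm_eq_zero {x : A} (hx : τ.twoNorm x = 0) : x = 0 := by
  refine τ.eq_zero_of_map_star_mul_self' x (Complex.ext ?_ ?_)
  · exact (τ.twoNorm_sq x).symm.trans (by rw [hx]; norm_num)
  · exact (Complex.nonneg_iff.mp (τ.map_star_mul_self_nonneg x)).2.symm

theorem twoNorm_mem_unitary_mul {u : A} (hu : u ∈ unitary A) (x : A) :
    τ.twoNorm (u * x) = τ.twoNorm x := by
  rw [← sq_eq_sq₀ (apply_nonneg _ _) (apply_nonneg _ _), twoNorm_sq, twoNorm_sq, star_mul,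
    mul_assoc, ← mul_assoc (star u), Unitary.star_mul_self_of_mem hu, one_mul]

theorem twoNorm_mul_mem_unitary {u : A} (hu : u ∈ unitary A) (x : A) :
    τ.twoNorm (x * u) = τ.twoNorm x := by
  rw [← twoNorm_star, star_mul, τ.twoNorm_mem_unitary_mul (Unitary.star_mem hu), twoNorm_star]

theorem twoNorm_sum_smul_sq {ι : Type*} [Fintype ι] {f : ι → A} (hf : IsProjPartition f)
    (c : ι → ℂ) : τ.twoNorm (∑ i, c i • f i) ^ 2 = ∑ i, ‖c i‖ ^ 2 * τ.twoNorm (f i) ^ 2 := by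
  simp only [twoNorm_sq, hf.star_sum_smul, hf.sum_smul_mul_sum_smul, map_sum, map_smul,
    Complex.re_sum, (hf.isSelfAdjoint _).star_eq, (hf.idem _).eq, RCLike.star_def,
    Complex.conj_mul', smul_eq_mul, ← Complex.ofReal_pow, Complex.re_ofReal_mul]

theorem twoNorm_sum_smul_le {ι : Type*} [Fintype ι] {f : ι → A} (hf : IsProjPartition f)
    {c d : ι → ℂ} (h : ∀ i, ‖c i‖ ≤ ‖d i‖) :
    τ.twoNorm (∑ i, c i • f i) ≤ τ.twoNorm (∑ i, d i • f i) := by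
  rw [← sq_le_sq₀ (apply_nonneg _ _) (apply_nonneg _ _), twoNorm_sum_smul_sq _ hf,
    twoNorm_sum_smul_sq _ hf]
  gcongr
  exact h _

/-- The restriction of a faithful trace to a *-subalgebra. -/
def restrict (B : StarSubalgebra ℂ A) : FaithfulTrace B where
  toLinearMap := τ.toLinearMap ∘ₗ B.subtype.toAlgHom.toLinearMap
  map_mul_comm' x y := τ.map_mul_comm x y
  map_star_mul_self_nonneg' x := τ.map_star_mul_self_nonneg x
  eq_zero_of_map_star_mul_self' x hx := Subtype.ext (τ.eq_zero_of_map_star_mul_self' x hx)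

/-- The closure of a set in the metric of the trace norm. -/
def twoNormClosure (S : Set A) : Set A := {x | ∀ ε > 0, ∃ a ∈ S, τ.twoNorm (x - a) < ε}

end Algebraic

section CStar

variable {A : Type*} [CStarAlgebra A] (τ : FaithfulTrace A)

theorem twoNorm_mul_le (a x : A) : τ.twoNorm (a * x) ≤ ‖a‖ * τ.twoNorm x := by
  let _ := CStarAlgebra.spectralOrder A
  have := CStarAlgebra.spectralOrderedRing A
  obtain ⟨b, hb⟩ := CStarAlgebra.nonneg_iff_eq_star_mul_self.mp
    (sub_nonneg.mpr (CStarAlgebra.star_mul_le_algebraMap_norm_sq (a := a)))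
  have hdecomp : star (b * x) * (b * x) =
      ((‖a‖ ^ 2 : ℝ) : ℂ) • (star x * x) - star (a * x) * (a * x) := by
    have : algebraMap ℝ A (‖a‖ ^ 2) = ((‖a‖ ^ 2 : ℝ) : ℂ) • (1 : A) := by
      rw [Algebra.algebraMap_eq_smul_one, Complex.coe_smul]
    rw [star_mul, mul_assoc, ← mul_assoc (star b), ← hb, this]
    simp only [sub_mul, mul_sub, smul_mul_assoc, mul_smul_comm, one_mul, star_mul, mul_assoc]
  have hsq : τ.twoNorm (b * x) ^ 2 = ‖a‖ ^ 2 * τ.twoNorm x ^ 2 - τ.twoNorm (a * x) ^ 2 := by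
    rw [twoNorm_sq, hdecomp, map_sub, map_smul, Complex.sub_re, smul_eq_mul,
      Complex.re_ofReal_mul, ← twoNorm_sq, ← twoNorm_sq]
  rw [← sq_le_sq₀ (apply_nonneg _ _) (by positivity), mul_pow]
  linarith [sq_nonneg (τ.twoNorm (b * x))]

theorem twoNorm_mul_le' (x a : A) : τ.twoNorm (x * a) ≤ ‖a‖ * τ.twoNorm x := by
  rw [← twoNorm_star, star_mul, ← τ.twoNorm_star x, ← norm_star a]
  exact τ.twoNorm_mul_le _ _

theorem twoNorm_isStarProjection_mul_le {p : A} (hp : IsStarProjection p) (x : A) :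
    τ.twoNorm (p * x) ≤ τ.twoNorm x :=
  (τ.twoNorm_mul_le p x).trans (mul_le_of_le_one_left (apply_nonneg _ _) (hp.norm_le p))

theorem twoNorm_mul_isStarProjection_le (x : A) {p : A} (hp : IsStarProjection p) :
    τ.twoNorm (x * p) ≤ τ.twoNorm x :=
  (τ.twoNorm_mul_le' x p).trans (mul_le_of_le_one_left (apply_nonneg _ _) (hp.norm_le p))

theorem commute_of_mem_twoNormClosure {S : Set A} {z x : A} (hz : ∀ a ∈ S, Commute z a)
    (hx : x ∈ τ.twoNormClosure S) : Commute z x := by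
  refine sub_eq_zero.mp (τ.eq_zero_of_twoNorm_eq_zero (le_antisymm ?_ (apply_nonneg _ _)))
  refine le_of_forall_pos_le_add fun ε hε => ?_
  obtain ⟨a, ha, hxa⟩ := hx (ε / (2 * (‖z‖ + 1))) (by positivity)
  have hcomm : z * x - x * z = z * (x - a) - (x - a) * z := by
    rw [mul_sub, sub_mul, (hz a ha).eq]
    abel
  calc τ.twoNorm (z * x - x * z) ≤ τ.twoNorm (z * (x - a)) + τ.twoNorm ((x - a) * z) := by
        rw [hcomm]
        exact map_sub_le_add _ _ _
    _ ≤ ‖z‖ * τ.twoNorm (x - a) + ‖z‖ * τ.twoNorm (x - a) :=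
        add_le_add (τ.twoNorm_mul_le _ _) (τ.twoNorm_mul_le' _ _)
    _ ≤ (‖z‖ + 1) * (ε / (2 * (‖z‖ + 1))) + (‖z‖ + 1) * (ε / (2 * (‖z‖ + 1))) := by
        gcongr <;> linarith
    _ = 0 + ε := by field_simp; ring

end CStar

end FaithfulTrace

end Trace

section FiniteDimensional

variable {A A' : Type*} [Ring A] [StarRing A] [Algebra ℂ A] [StarModule ℂ A]
  [Ring A'] [StarRing A'] [Algebra ℂ A'] [StarModule ℂ A']

theorem finiteDimensional_starSubalgebra_of_le {S T : StarSubalgebra ℂ A} [FiniteDimensional ℂ T]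
    (h : S ≤ T) : FiniteDimensional ℂ S :=
  FiniteDimensional.of_injective (StarSubalgebra.inclusion h).toAlgHom.toLinearMap
    (StarSubalgebra.inclusion_injective h)

theorem finiteDimensional_starSubalgebra_map (f : A →⋆ₐ[ℂ] A') (S : StarSubalgebra ℂ A)
    [FiniteDimensional ℂ S] : FiniteDimensional ℂ (S.map f) :=
  inferInstanceAs (FiniteDimensional ℂ (S.toSubalgebra.toSubmodule.map f.toAlgHom.toLinearMap))

theorem finiteDimensional_starSubalgebra_comap {f : A →⋆ₐ[ℂ] A'} (hf : Function.Injective f)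
    (S : StarSubalgebra ℂ A') [FiniteDimensional ℂ S] : FiniteDimensional ℂ (S.comap f) :=
  FiniteDimensional.of_injective
    ((f.toAlgHom.toLinearMap ∘ₗ (S.comap f).subtype.toAlgHom.toLinearMap).codRestrict
      S.toSubalgebra.toSubmodule fun x => x.2)
    fun _ _ h => Subtype.ext (hf (congrArg Subtype.val h))

theorem commute_of_mem_centralizer {B : StarSubalgebra ℂ A} {b x : A} (hb : b ∈ B)
    (hx : x ∈ StarSubalgebra.centralizer ℂ (B : Set A)) : Commute b x :=
  ((StarSubalgebra.mem_centralizer_iff ℂ).mp hx b hb).1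

theorem mem_centralizer_of_forall_commute {B : StarSubalgebra ℂ A} {x : A}
    (hx : ∀ b ∈ B, Commute b x) : x ∈ StarSubalgebra.centralizer ℂ (B : Set A) :=
  (StarSubalgebra.mem_centralizer_iff ℂ).mpr fun b hb => ⟨hx b hb, hx _ (star_mem hb)⟩

theorem finiteDimensional_sup_of_le_centralizer {B C : StarSubalgebra ℂ A}
    [FiniteDimensional ℂ B] [FiniteDimensional ℂ C]
    (h : C ≤ StarSubalgebra.centralizer ℂ (B : Set A)) :
    FiniteDimensional ℂ (B ⊔ C : StarSubalgebra ℂ A) := by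
  let Φ : TensorProduct ℂ B C →ₐ[ℂ] A := Algebra.TensorProduct.lift B.subtype.toAlgHom
    C.subtype.toAlgHom fun b c => commute_of_mem_centralizer b.2 (h c.2)
  have hle : (B ⊔ C).toSubalgebra ≤ Φ.range := by
    have hmem : (B : Set A) ∪ C ⊆ Φ.range := by
      rintro x (hx | hx)
      · exact ⟨⟨x, hx⟩ ⊗ₜ 1, by simp [Φ]⟩
      · exact ⟨1 ⊗ₜ ⟨x, hx⟩, by simp [Φ]⟩
    refine Algebra.adjoin_le (Set.union_subset hmem fun x hx => ?_)
    rw [← star_star x]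
    exact hmem (hx.imp star_mem star_mem)
  have : FiniteDimensional ℂ Φ.range := inferInstanceAs (FiniteDimensional ℂ Φ.toLinearMap.range)
  exact Submodule.finiteDimensional_of_le (S₁ := (B ⊔ C).toSubalgebra.toSubmodule)
    (S₂ := Φ.range.toSubmodule) hle

theorem finiteDimensional_adjoin_singleton {p : A} (hp : IsStarProjection p) :
    FiniteDimensional ℂ (StarAlgebra.adjoin ℂ {p}) := by
  have hint : IsIntegral ℂ p :=
    ⟨Polynomial.X ^ 2 - Polynomial.X, by monicity!, by simp [sq, hp.isIdempotentElem.eq]⟩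
  have hsub : (StarAlgebra.adjoin ℂ {p}).toSubalgebra = Algebra.adjoin ℂ {p} := by
    rw [StarAlgebra.adjoin_toSubalgebra, Set.star_singleton, hp.isSelfAdjoint.star_eq,
      Set.union_self]
  change FiniteDimensional ℂ (StarAlgebra.adjoin ℂ {p}).toSubalgebra
  rw [hsub]
  exact Module.Finite.iff_fg.mpr hint.fg_adjoin_singleton

theorem adjoin_le_centralizer_adjoin {s t : Set A}
    (h : t ⊆ StarSubalgebra.centralizer ℂ s) :
    StarAlgebra.adjoin ℂ s ≤ StarSubalgebra.centralizer ℂ (StarAlgebra.adjoin ℂ t : Set A) :=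
  (StarAlgebra.adjoin_le_centralizer_centralizer ℂ s).trans
    (StarSubalgebra.centralizer_le ℂ _ _ (StarAlgebra.adjoin_le h))

theorem commute_of_mem_adjoin {s : Set A} (hstar : ∀ x ∈ s, star x ∈ s)
    (hcomm : ∀ x ∈ s, ∀ y ∈ s, Commute x y) {x y : A} (hx : x ∈ StarAlgebra.adjoin ℂ s)
    (hy : y ∈ StarAlgebra.adjoin ℂ s) : Commute x y := by
  refine commute_of_mem_centralizer hx (adjoin_le_centralizer_adjoin (fun z hz => ?_) hy)
  rw [SetLike.mem_coe, StarSubalgebra.mem_centralizer_iff]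
  exact fun g hg => ⟨hcomm g hg z hz, hcomm _ (hstar g hg) z hz⟩

theorem le_of_forall_isSelfAdjoint_mem {S T : StarSubalgebra ℂ A}
    (h : ∀ y ∈ S, IsSelfAdjoint y → y ∈ T) : S ≤ T := fun x hx => by
  have hre : (realPart x : A) ∈ T := h _ (by
    rw [realPart_apply_coe]
    exact S.smul_mem (add_mem hx (star_mem hx)) ((2⁻¹ : ℝ) : ℂ)) (realPart x).2
  have him : (imaginaryPart x : A) ∈ T := h _ (by
    rw [imaginaryPart_apply_coe]
    exact S.smul_mem (S.smul_mem (sub_mem hx (star_mem hx)) ((2⁻¹ : ℝ) : ℂ)) _)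
    (imaginaryPart x).2
  rw [← realPart_add_I_smul_imaginaryPart x]
  exact add_mem hre (T.smul_mem him _)

theorem finiteDimensional_adjoin_of_finite {s : Set A} (hs : s.Finite)
    (hproj : ∀ p ∈ s, IsStarProjection p) (hcomm : ∀ p ∈ s, ∀ q ∈ s, Commute p q) :
    FiniteDimensional ℂ (StarAlgebra.adjoin ℂ s) := by
  induction s, hs using Set.Finite.induction_on with
  | empty =>
    have hbot : StarAlgebra.adjoin ℂ (∅ : Set A) = ⊥ := (StarAlgebra.gc (R := ℂ)).l_bot
    rw [hbot]
    exact inferInstanceAs (FiniteDimensional ℂ (⊥ : Subalgebra ℂ A))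
  | @insert p s _ _ ih =>
    have hp := hproj p (Set.mem_insert p s)
    have := finiteDimensional_adjoin_singleton hp
    have := ih (fun q hq => hproj q (.inr hq)) fun q hq r hr => hcomm q (.inr hq) r (.inr hr)
    have hsup : StarAlgebra.adjoin ℂ (insert p s) = StarAlgebra.adjoin ℂ {p} ⊔
        StarAlgebra.adjoin ℂ s := (StarAlgebra.gc (R := ℂ)).l_sup
    rw [hsup]
    refine finiteDimensional_sup_of_le_centralizer (adjoin_le_centralizer_adjoin ?_)
    rw [Set.singleton_subset_iff, SetLike.mem_coe, StarSubalgebra.mem_centralizer_iff]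
    intro q hq
    rw [(hproj q (.inr hq)).isSelfAdjoint.star_eq]
    have := hcomm q (.inr hq) p (.inl rfl)
    exact ⟨this, this⟩

end FiniteDimensional

section Columns

section Algebraic

variable {A κ : Type*} [Ring A] [StarRing A] [Algebra ℂ A] [Fintype κ]

/-- The map `x ↦ ∑ k, v k * x * (v k)*`. For a frame of the column of a minimal projection `e` it
spreads `e x` over the central support of `e`, as an element commuting with `B`. -/
def columnMap (v : κ → A) : A →ₗ[ℂ] A := ∑ k, LinearMap.mulLeftRight ℂ (v k, star (v k))

theorem columnMap_apply (v : κ → A) (x : A) : columnMap v x = ∑ k, v k * x * star (v k) := by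
  simp [columnMap, LinearMap.sum_apply]

theorem star_columnMap (v : κ → A) (x : A) : star (columnMap v x) = columnMap v (star x) := by
  simp [columnMap_apply, mul_assoc]

variable [StarModule ℂ A]

/-- `e` is a projection of `B` with `e B e = ℂ e`: a minimal projection of `B`, or zero. -/
structure IsMinimalProj (B : StarSubalgebra ℂ A) (e : A) : Prop extends IsStarProjection e where
  mem : e ∈ B
  corner : ∀ b ∈ B, ∃ c : ℂ, e * b * e = c • e

/-- A finite family in `B e` such that `∑ k, v k * (v k)*` acts as the identity on `B e`. If `e` is
minimal, this says that the family spans the column `B e` of `B`. -/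
structure IsColumnFrame (B : StarSubalgebra ℂ A) (e : A) (v : κ → A) : Prop where
  mem : ∀ k, v k ∈ B
  mul_right : ∀ k, v k * e = v k
  sum_mul : ∀ b ∈ B, (∑ k, v k * star (v k)) * (b * e) = b * e

variable {B : StarSubalgebra ℂ A} {e : A} {v : κ → A}

theorem columnMap_mem (hv : ∀ k, v k ∈ B) {x : A} (hx : x ∈ B) : columnMap v x ∈ B := by
  rw [columnMap_apply]
  exact sum_mem fun k _ => mul_mem (mul_mem (hv k) hx) (star_mem (hv k))

theorem commute_columnMap (hv : ∀ k, v k ∈ B) {x z : A} (hz : ∀ b ∈ B, Commute z b)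
    (hx : Commute z x) : Commute z (columnMap v x) := by
  rw [columnMap_apply]
  exact Commute.sum_right _ _ _ fun k _ =>
    ((hz _ (hv k)).mul_right hx).mul_right (hz _ (star_mem (hv k)))

namespace IsColumnFrame

variable (hv : IsColumnFrame B e v)
include hv

theorem mul_eq_sum {b : A} (hb : b ∈ B) (k : κ) :
    b * v k = ∑ l, v l * (star (v l) * b * v k) := by
  have h := hv.sum_mul (b * v k) (mul_mem hb (hv.mem k))
  rw [mul_assoc b, hv.mul_right, Finset.sum_mul] at h
  simpa only [mul_assoc] using h.symm

theorem star_mul_eq_sum {b : A} (hb : b ∈ B) (k : κ) :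
    star (v k) * b = ∑ l, star (v k) * b * v l * star (v l) := by
  simpa [mul_assoc] using congrArg star (hv.mul_eq_sum (star_mem hb) k)

variable (he : IsMinimalProj B e)
include he

theorem mul_star (k : κ) : e * star (v k) = star (v k) := by
  conv_rhs => rw [← hv.mul_right k, star_mul, he.isSelfAdjoint.star_eq]

theorem commute_coefficient {x b : A} (hx : Commute e x) (hb : b ∈ B) (k l : κ) :
    Commute (star (v k) * b * v l) x := by
  obtain ⟨c, hc⟩ := he.corner _ (mul_mem (mul_mem (star_mem (hv.mem k)) hb) (hv.mem l))
  rw [← mul_assoc, ← mul_assoc, hv.mul_star he, mul_assoc _ (v l), hv.mul_right] at hc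
  rw [hc]
  exact hx.smul_left c

theorem commute_columnMap {x b : A} (hx : Commute e x) (hb : b ∈ B) :
    Commute b (columnMap v x) := by
  have hl : b * columnMap v x = ∑ k, ∑ l, v l * (star (v l) * b * v k) * x * star (v k) := by
    simp only [columnMap_apply, Finset.mul_sum, ← mul_assoc b, hv.mul_eq_sum hb, Finset.sum_mul]
  have hr : columnMap v x * b = ∑ l, ∑ k, v l * x * (star (v l) * b * v k * star (v k)) := by
    rw [columnMap_apply, Finset.sum_mul]
    refine Finset.sum_congr rfl fun l _ => ?_
    conv_lhs => rw [mul_assoc, hv.star_mul_eq_sum hb, Finset.mul_sum]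
  rw [commute_iff_eq, hl, hr, Finset.sum_comm]
  refine Finset.sum_congr rfl fun l _ => Finset.sum_congr rfl fun k _ => ?_
  rw [mul_assoc (v l), (hv.commute_coefficient he hx hb l k).eq]
  simp only [mul_assoc]

theorem mul_columnMap {x : A} (hx : Commute e x) : e * columnMap v x = e * x := by
  have hterm : ∀ k, v k * x * star (v k) * e = v k * star (v k) * e * x := fun k => by
    obtain ⟨c, hc⟩ := he.corner _ (star_mem (hv.mem k))
    rw [hv.mul_star he] at hc
    simp only [mul_assoc _ _ e, hc, mul_smul_comm, smul_mul_assoc, mul_assoc, hx.eq]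
  have hsum := hv.sum_mul 1 (one_mem B)
  rw [one_mul, Finset.sum_mul] at hsum
  rw [(hv.commute_columnMap he hx he.mem).eq, columnMap_apply, Finset.sum_mul]
  simp only [hterm]
  rw [← Finset.sum_mul, hsum]

theorem columnMap_mul {x y : A} (hx : Commute e x) (hy : Commute e y) :
    columnMap v x * columnMap v y = columnMap v (x * y) := by
  have hTy : ∀ b ∈ B, Commute b (columnMap v y) := fun b hb => hv.commute_columnMap he hy hb
  have habsorb : ∀ k, v k * (x * columnMap v y) = v k * (x * y) := fun k => by
    rw [← hv.mul_right k, mul_assoc, mul_assoc, ← mul_assoc e, ← mul_assoc e, hx.eq, mul_assoc,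
      hv.mul_columnMap he hy, mul_assoc]
  rw [columnMap_apply, columnMap_apply v (x * y), Finset.sum_mul]
  refine Finset.sum_congr rfl fun k _ => ?_
  rw [mul_assoc, (hTy _ (star_mem (hv.mem k))).eq, ← mul_assoc, mul_assoc (v k), habsorb]

theorem isStarProjection_columnMap {p : A} (hp : IsStarProjection p) (hc : Commute e p) :
    IsStarProjection (columnMap v p) where
  isIdempotentElem := by
    rw [IsIdempotentElem, hv.columnMap_mul he hc hc, hp.isIdempotentElem.eq]
  isSelfAdjoint := by rw [isSelfAdjoint_iff, star_columnMap, hp.isSelfAdjoint.star_eq]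

end IsColumnFrame

theorem FaithfulTrace.exists_forall_eq_sum (τ : FaithfulTrace A) (V : Submodule ℂ A)
    [FiniteDimensional ℂ V] :
    ∃ (n : ℕ) (w : Fin n → A), (∀ k, w k ∈ V) ∧ ∀ y ∈ V, y = ∑ k, τ (star (w k) * y) • w k := by
  let _ : InnerProductSpace.Core ℂ A :=
    { τ.innerCore with definite := τ.eq_zero_of_map_star_mul_self' }
  let _ : NormedAddCommGroup A := InnerProductSpace.Core.toNormedAddCommGroup (𝕜 := ℂ)
  let _ : InnerProductSpace ℂ A := InnerProductSpace.ofCore _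
  let w := stdOrthonormalBasis ℂ V
  refine ⟨_, fun k => w k, fun k => (w k).2, fun y hy => ?_⟩
  have h := congrArg Subtype.val (w.sum_repr' ⟨y, hy⟩)
  rw [Submodule.coe_sum] at h
  exact h.symm

theorem IsMinimalProj.exists_isColumnFrame {B : StarSubalgebra ℂ A} [FiniteDimensional ℂ B] {e : A}
    (he : IsMinimalProj B e) (τ : FaithfulTrace A) :
    ∃ (n : ℕ) (v : Fin n → A), IsColumnFrame B e v := by
  have : FiniteDimensional ℂ B.toSubalgebra.toSubmodule := ‹FiniteDimensional ℂ B›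
  have hmem : ∀ y, y ∈ B.toSubalgebra.toSubmodule.map (LinearMap.mulRight ℂ e) →
      y ∈ B ∧ y * e = y := by
    rintro _ ⟨b, hb, rfl⟩
    exact ⟨mul_mem hb he.mem, by simp [mul_assoc, he.isIdempotentElem.eq]⟩
  obtain ⟨n, w, hw, hrepr⟩ := τ.exists_forall_eq_sum
    (B.toSubalgebra.toSubmodule.map (LinearMap.mulRight ℂ e))
  let r := √(τ e).re
  have hr : ((r * r : ℝ) : ℂ) = τ e := by
    have h := Complex.nonneg_iff.mp (τ.map_star_mul_self_nonneg e)
    rw [he.isSelfAdjoint.star_eq, he.isIdempotentElem.eq] at h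
    exact Complex.ext (Real.mul_self_sqrt h.1) h.2
  have hcoef : ∀ k, ∀ y ∈ B, y * e = y → τ e • (w k * (star (w k) * y)) =
      τ (star (w k) * y) • w k := fun k y hy hye => by
    obtain ⟨hwB, hwe⟩ := hmem _ (hw k)
    obtain ⟨c, hc⟩ := he.corner _ (mul_mem (star_mem hwB) hy)
    have hsw : e * star (w k) = star (w k) := by
      conv_rhs => rw [← hwe, star_mul, he.isSelfAdjoint.star_eq]
    rw [← mul_assoc, hsw, mul_assoc, hye] at hc
    rw [hc, map_smul, mul_smul_comm, hwe, smul_smul, smul_eq_mul, mul_comm]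
  refine ⟨n, fun k => (r : ℂ) • w k, fun k => B.smul_mem (hmem _ (hw k)).1 _, fun k => ?_,
    fun b hb => ?_⟩
  · rw [smul_mul_assoc, (hmem _ (hw k)).2]
  · have hbe : b * e * e = b * e := by rw [mul_assoc, he.isIdempotentElem.eq]
    conv_rhs => rw [hrepr (b * e) ⟨b, hb, rfl⟩]
    rw [Finset.sum_mul]
    refine Finset.sum_congr rfl fun k _ => ?_
    rw [← hcoef k _ (mul_mem hb he.mem) hbe, star_smul, smul_mul_smul_comm, smul_mul_assoc,
      RCLike.star_def, Complex.conj_ofReal, ← Complex.ofReal_mul, hr, mul_assoc (w k)]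

theorem eq_sum_mul_columnMap {B : StarSubalgebra ℂ A} {ι : Type*} {κ : ι → Type*} [Fintype ι]
    [∀ i, Fintype (κ i)] {f : ι → A} {v : ∀ i, κ i → A} (hf : ∑ i, f i = 1)
    (hv : ∀ i, IsMinimalProj B (f i) ∧ IsColumnFrame B (f i) (v i)) {x : A}
    (hx : ∀ i, Commute (f i) x) : x = ∑ i, f i * columnMap (v i) x := by
  simp only [fun i => (hv i).2.mul_columnMap (hv i).1 (hx i)]
  rw [← Finset.sum_mul, hf, one_mul]

end Algebraic

namespace FaithfulTrace

variable {A κ : Type*} [CStarAlgebra A] (τ : FaithfulTrace A)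

theorem twoNorm_columnMap_le [Fintype κ] (v : κ → A) (x : A) :
    τ.twoNorm (columnMap v x) ≤ (∑ k, ‖v k‖ * ‖v k‖) * τ.twoNorm x := by
  rw [columnMap_apply, Finset.sum_mul]
  refine (τ.twoNorm_sum_le _ _).trans (Finset.sum_le_sum fun k _ => ?_)
  calc τ.twoNorm (v k * x * star (v k)) ≤ ‖v k‖ * τ.twoNorm (v k * x) := by
        simpa using τ.twoNorm_mul_le' (v k * x) (star (v k))
    _ ≤ ‖v k‖ * (‖v k‖ * τ.twoNorm x) := by gcongr; exact τ.twoNorm_mul_le _ _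
    _ = ‖v k‖ * ‖v k‖ * τ.twoNorm x := (mul_assoc _ _ _).symm

theorem columnMap_mem_twoNormClosure [Fintype κ] {v : κ → A} {S : Set A}
    (hS : ∀ x ∈ S, columnMap v x ∈ S) {x : A} (hx : x ∈ τ.twoNormClosure S) :
    columnMap v x ∈ τ.twoNormClosure S := fun ε hε => by
  obtain ⟨a, ha, hxa⟩ := hx (ε / ((∑ k, ‖v k‖ * ‖v k‖) + 1)) (by positivity)
  refine ⟨columnMap v a, hS a ha, ?_⟩
  rw [← map_sub]
  calc τ.twoNorm (columnMap v (x - a)) ≤ (∑ k, ‖v k‖ * ‖v k‖) * τ.twoNorm (x - a) :=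
        τ.twoNorm_columnMap_le v _
    _ ≤ ((∑ k, ‖v k‖ * ‖v k‖) + 1) * τ.twoNorm (x - a) := by gcongr; linarith
    _ < ε := by rwa [lt_div_iff₀' (by positivity)] at hxa

end FaithfulTrace

end Columns

section Masa

section Algebraic

variable {A : Type*} [Ring A] [StarRing A] [Algebra ℂ A] [StarModule ℂ A]
  {B E : StarSubalgebra ℂ A}

/-- `E` is a maximal abelian *-subalgebra of `B`: it is its own commutant in `B`. -/
def IsMasa (E B : StarSubalgebra ℂ A) : Prop :=
  B ⊓ StarSubalgebra.centralizer ℂ (E : Set A) = E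

namespace IsMasa

theorem le (h : IsMasa E B) : E ≤ B := h.symm.le.trans inf_le_left

theorem mem_of_commute (h : IsMasa E B) {x : A} (hx : x ∈ B) (hcomm : ∀ g ∈ E, Commute g x) :
    x ∈ E :=
  (le_of_eq h) ⟨hx, mem_centralizer_of_forall_commute hcomm⟩

theorem commute (h : IsMasa E B) {x y : A} (hx : x ∈ E) (hy : y ∈ E) : Commute x y :=
  commute_of_mem_centralizer hx (h.symm.le hy).2

theorem comap_subtype (h : IsMasa E B) : IsMasa (E.comap B.subtype) ⊤ := by
  refine le_antisymm (fun x hx => h.mem_of_commute x.2 fun g hg => ?_) fun x hx => ⟨trivial,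
    mem_centralizer_of_forall_commute fun y hy => Subtype.ext (h.commute hy hx)⟩
  exact congrArg Subtype.val
    (commute_of_mem_centralizer (B := E.comap B.subtype) (b := ⟨g, h.le hg⟩) hg hx.2)

theorem isMulCommutative (h : IsMasa E B) : IsMulCommutative E :=
  ⟨⟨fun x y => Subtype.ext (h.commute x.2 y.2)⟩⟩

end IsMasa

end Algebraic

variable {A : Type*} [CStarAlgebra A] {B B' E F : StarSubalgebra ℂ A}

namespace IsMasa

theorem isMinimalProj (h : IsMasa E B) {n : ℕ} {f : Fin n → A} (hf : IsProjPartition f)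
    (hfE : ∀ i, f i ∈ E) (hspan : ∀ x ∈ E, ∃ c : Fin n → ℂ, x = ∑ i, c i • f i) (i : Fin n) :
    IsMinimalProj B (f i) where
  toIsStarProjection := hf.isStarProjection i
  mem := h.le (hfE i)
  corner b hb := by
    have hcomm : ∀ g ∈ E, Commute g (f i * b * f i) := fun g hg => by
      obtain ⟨c, rfl⟩ := hspan g hg
      rw [commute_iff_eq, ← mul_assoc, ← mul_assoc, hf.sum_smul_mul, mul_assoc _ (f i),
        hf.mul_sum_smul, smul_mul_assoc, smul_mul_assoc, mul_smul_comm]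
    obtain ⟨c, hc⟩ := hspan _ (h.mem_of_commute
      (mul_mem (mul_mem (h.le (hfE i)) hb) (h.le (hfE i))) hcomm)
    refine ⟨c i, ?_⟩
    rw [← hf.mul_sum_smul, ← hc, ← mul_assoc, ← mul_assoc, (hf.idem i).eq]

theorem exists_columnFrames [FiniteDimensional ℂ B] (h : IsMasa E B) (τ : FaithfulTrace A) :
    ∃ (n : ℕ) (f : Fin n → A) (κ : Fin n → ℕ) (v : ∀ i, Fin (κ i) → A), IsProjPartition f ∧
      (∀ i, f i ∈ E) ∧ ∀ i, IsMinimalProj B (f i) ∧ IsColumnFrame B (f i) (v i) := by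
  have := finiteDimensional_starSubalgebra_of_le h.le
  have := h.isMulCommutative
  obtain ⟨n, f, hf, hfE, hspan⟩ := exists_isProjPartition_mem_forall_eq_sum E
  have hmin := h.isMinimalProj hf hfE hspan
  choose κ v hv using fun i => (hmin i).exists_isColumnFrame τ
  exact ⟨n, f, κ, v, hf, hfE, fun i => ⟨hmin i, hv i⟩⟩

theorem sup [FiniteDimensional ℂ B] (hE : IsMasa E B) (hBB' : B ≤ B')
    (hF : IsMasa F (B' ⊓ StarSubalgebra.centralizer ℂ (B : Set A))) (τ : FaithfulTrace A) :
    IsMasa (E ⊔ F) B' := by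
  obtain ⟨n, f, κ, v, hf, hfE, hv⟩ := hE.exists_columnFrames τ
  refine le_antisymm (fun x hx => ?_)
    (le_inf (sup_le (hE.le.trans hBB') (hF.le.trans inf_le_left)) fun x hx => ?_)
  · have hfx : ∀ i, Commute (f i) x := fun i =>
      commute_of_mem_centralizer (le_sup_left (a := E) (hfE i)) hx.2
    have hTF : ∀ i, columnMap (v i) x ∈ F := fun i => by
      refine hF.mem_of_commute ⟨columnMap_mem (fun k => hBB' ((hv i).2.mem k)) hx.1,
        mem_centralizer_of_forall_commute fun b hb =>
          (hv i).2.commute_columnMap (hv i).1 (hfx i) hb⟩ fun g hg => ?_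
      exact commute_columnMap (hv i).2.mem
        (fun b hb => (commute_of_mem_centralizer hb (hF.le hg).2).symm)
        (commute_of_mem_centralizer (le_sup_right (a := E) hg) hx.2)
    rw [eq_sum_mul_columnMap hf.complete hv hfx]
    exact sum_mem fun i _ => StarSubalgebra.mul_mem_sup (hfE i) (hTF i)
  · have hcross : ∀ x ∈ E, ∀ y ∈ F, Commute x y := fun x hx y hy =>
      commute_of_mem_centralizer (hE.le hx) (hF.le hy).2
    refine mem_centralizer_of_forall_commute fun y hy => commute_of_mem_adjoin ?_ ?_ hy hx
    · exact fun x hx => hx.imp star_mem star_mem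
    · rintro x (hx | hx) y (hy | hy)
      exacts [hE.commute hx hy, hcross x hx y hy, (hcross y hy x hx).symm, hF.commute hx hy]

end IsMasa

theorem exists_isMasa (B : StarSubalgebra ℂ A) [FiniteDimensional ℂ B] : ∃ E, IsMasa E B := by
  have : FiniteDimensional ℂ B.toSubalgebra.toSubmodule := ‹FiniteDimensional ℂ B›
  let P (E : StarSubalgebra ℂ A) : Prop := E ≤ B ∧ ∀ x ∈ E, ∀ y ∈ E, Commute x y
  let toSub (E : StarSubalgebra ℂ A) : Submodule ℂ B.toSubalgebra.toSubmodule :=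
    E.toSubalgebra.toSubmodule.comap B.toSubalgebra.toSubmodule.subtype
  obtain ⟨E, ⟨hEB, hE⟩, hmax⟩ := exists_maximalFor_of_wellFoundedGT P toSub
    ⟨⊥, bot_le, fun x hx y _ => by obtain ⟨c, rfl⟩ := hx; exact Algebra.commutes c y⟩
  refine ⟨E, le_antisymm (le_of_forall_isSelfAdjoint_mem fun y hy hsa => ?_)
    (le_inf hEB fun x hx => mem_centralizer_of_forall_commute fun y hy => hE y hy x hx)⟩
  have hinsert : P (StarAlgebra.adjoin ℂ (insert y E)) := by
    refine ⟨StarAlgebra.adjoin_le (Set.insert_subset hy.1 hEB), fun _ hx _ hz =>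
      commute_of_mem_adjoin ?_ ?_ hx hz⟩
    · rintro x (rfl | hx)
      exacts [.inl hsa.star_eq, .inr (star_mem hx)]
    · have hcross : ∀ x ∈ E, Commute x y := fun x hx => commute_of_mem_centralizer hx hy.2
      rintro a (ha | ha) b (hb | hb)
      exacts [ha ▸ hb ▸ .refl y, ha ▸ (hcross b hb).symm, hb ▸ hcross a ha, hE a ha b hb]
  exact hmax hinsert (fun x hx => StarAlgebra.subset_adjoin ℂ _ (.inr hx))
    (show (⟨y, hy.1⟩ : B.toSubalgebra.toSubmodule) ∈ _ from
      StarAlgebra.subset_adjoin ℂ _ (.inl rfl))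

end Masa

section MasaChain

variable {A : Type*} [CStarAlgebra A] {B E : ℕ → StarSubalgebra ℂ A}

/-- Maximal abelian *-subalgebras `E n` of the algebras `B n` such that `E m`, for `n ≤ m`, is
generated by `E n` and elements commuting with `B n`. -/
structure IsMasaChain (E B : ℕ → StarSubalgebra ℂ A) : Prop where
  monotone : Monotone E
  isMasa : ∀ n, IsMasa (E n) (B n)
  le_sup : ∀ ⦃n m⦄, n ≤ m → E m ≤ E n ⊔ (E m ⊓ StarSubalgebra.centralizer ℂ (B n : Set A))

theorem exists_isMasaChain [∀ n, FiniteDimensional ℂ (B n)] (hB : Monotone B)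
    (τ : FaithfulTrace A) : ∃ E, IsMasaChain E B := by
  have hstep : ∀ n (E : {E // IsMasa E (B n)}), ∃ E' : {E' // IsMasa E' (B (n + 1))}, E.1 ≤ E'.1 ∧
      E'.1 ≤ E.1 ⊔ (E'.1 ⊓ StarSubalgebra.centralizer ℂ (B n : Set A)) := fun n ⟨E, hE⟩ => by
    have := finiteDimensional_starSubalgebra_of_le
      (inf_le_left : B (n + 1) ⊓ StarSubalgebra.centralizer ℂ (B n : Set A) ≤ _)
    obtain ⟨F, hF⟩ := exists_isMasa (B (n + 1) ⊓ StarSubalgebra.centralizer ℂ (B n : Set A))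
    exact ⟨⟨E ⊔ F, hE.sup (hB n.le_succ) hF τ⟩, le_sup_left,
      sup_le_sup_left (le_inf le_sup_right (hF.le.trans inf_le_right)) E⟩
  choose next le_next next_le using hstep
  obtain ⟨E₀, hE₀⟩ := exists_isMasa (B 0)
  let E (n : ℕ) : {E // IsMasa E (B n)} := Nat.rec ⟨E₀, hE₀⟩ next n
  have hmono : Monotone fun n => (E n).1 := monotone_nat_of_le_succ fun n => le_next n (E n)
  refine ⟨fun n => (E n).1, hmono, fun n => (E n).2, fun n m hnm => ?_⟩
  induction m, hnm using Nat.le_induction with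
  | base => exact le_sup_left
  | succ m hnm ih =>
    refine (next_le m (E m)).trans (sup_le (ih.trans (sup_le_sup_left ?_ _)) ?_)
    · exact inf_le_inf_right _ (hmono m.le_succ)
    · exact le_sup_of_le_right
        (inf_le_inf_left _ (StarSubalgebra.centralizer_le ℂ _ _ (hB hnm)))

namespace IsMasaChain

variable (hE : IsMasaChain E B)
include hE

theorem columnMap_mem_iUnion (hB : Monotone B) {κ : Type*} [Fintype κ] {n : ℕ} {e : A}
    {v : κ → A} (heE : e ∈ E n) (he : IsMinimalProj (B n) e) (hv : IsColumnFrame (B n) e v) {x : A}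
    (hx : x ∈ ⋃ m, (E m : Set A)) : columnMap v x ∈ ⋃ m, (E m : Set A) := by
  obtain ⟨k, hxk⟩ := Set.mem_iUnion.mp hx
  let m := max k n
  have hnm : n ≤ m := le_max_right k n
  have hxm : x ∈ E m := hE.monotone (le_max_left k n) hxk
  have hfst : ∀ z ∈ E n, ∀ y ∈ E m, Commute z (columnMap v y) := fun z hz y hy =>
    hv.commute_columnMap he ((hE.isMasa m).commute (hE.monotone hnm heE) hy)
      ((hE.isMasa n).le hz)
  have hsnd : ∀ z ∈ E m ⊓ StarSubalgebra.centralizer ℂ (B n : Set A), ∀ y ∈ E m,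
      Commute z (columnMap v y) := fun z hz y hy =>
    commute_columnMap hv.mem (fun b hb => (commute_of_mem_centralizer hb hz.2).symm)
      ((hE.isMasa m).commute hz.1 hy)
  have hle : E m ≤ StarSubalgebra.centralizer ℂ {columnMap v x} := by
    refine (hE.le_sup hnm).trans (sup_le (fun z hz => ?_) fun z hz => ?_)
    all_goals
      rw [StarSubalgebra.mem_centralizer_iff]
      rintro _ rfl
      rw [star_columnMap]
    · exact ⟨(hfst z hz x hxm).eq.symm, (hfst z hz _ (star_mem hxm)).eq.symm⟩
    · exact ⟨(hsnd z hz x hxm).eq.symm, (hsnd z hz _ (star_mem hxm)).eq.symm⟩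
  refine Set.mem_iUnion.mpr ⟨m, (hE.isMasa m).mem_of_commute
    (columnMap_mem (fun k => hB hnm (hv.mem k)) ((hE.isMasa m).le hxm)) fun g hg => ?_⟩
  exact ((StarSubalgebra.mem_centralizer_iff ℂ).mp (hle hg) _ rfl).1.symm

theorem commute_of_mem_twoNormClosure {τ : FaithfulTrace A} {x y : A}
    (hx : x ∈ τ.twoNormClosure (⋃ n, (E n : Set A)))
    (hy : y ∈ τ.twoNormClosure (⋃ n, (E n : Set A))) : Commute x y := by
  refine τ.commute_of_mem_twoNormClosure (fun b hb => ?_) hy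
  refine (τ.commute_of_mem_twoNormClosure (fun a ha => ?_) hx).symm
  obtain ⟨n, hn⟩ := Set.mem_iUnion.mp ha
  obtain ⟨m, hm⟩ := Set.mem_iUnion.mp hb
  exact (hE.isMasa (max n m)).commute (hE.monotone (le_max_right n m) hm)
    (hE.monotone (le_max_left n m) hn)

/-- If `T i` are the column maps of the minimal projections `f i` of `E n`, then
`e j = ∑ i, f i * T i (e j)`, and the `T i (e j)` are commuting projections in the commutant of
`B n`. -/
theorem finiteDimensional_sup [∀ n, FiniteDimensional ℂ (B n)] (hB : Monotone B)
    (τ : FaithfulTrace A) {D : StarSubalgebra ℂ A} {l : ℕ} {e : Fin l → A} (he : IsProjPartition e)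
    (hspan : ∀ x ∈ D, ∃ c : Fin l → ℂ, x = ∑ j, c j • e j)
    (heC : ∀ j, e j ∈ τ.twoNormClosure (⋃ n, (E n : Set A))) (n : ℕ) :
    FiniteDimensional ℂ (B n ⊔ D : StarSubalgebra ℂ A) := by
  obtain ⟨k, f, κ, v, hf, hfE, hv⟩ := (hE.isMasa n).exists_columnFrames τ
  have hfe : ∀ i j, Commute (f i) (e j) := fun i j => hE.commute_of_mem_twoNormClosure
    (fun ε hε => ⟨f i, Set.mem_iUnion.mpr ⟨n, hfE i⟩, by simpa using hε⟩) (heC j)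
  let T : Set A := Set.range fun ij : Fin k × Fin l => columnMap (v ij.1) (e ij.2)
  have hTC : T ⊆ τ.twoNormClosure (⋃ m, (E m : Set A)) := by
    rintro _ ⟨⟨i, j⟩, rfl⟩
    exact τ.columnMap_mem_twoNormClosure
      (fun x hx => hE.columnMap_mem_iUnion hB (hfE i) (hv i).1 (hv i).2 hx) (heC j)
  have hproj : ∀ p ∈ T, IsStarProjection p := by
    rintro _ ⟨⟨i, j⟩, rfl⟩
    exact (hv i).2.isStarProjection_columnMap (hv i).1 (he.isStarProjection j) (hfe i j)
  have hTcomm : T ⊆ StarSubalgebra.centralizer ℂ (B n : Set A) := by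
    rintro _ ⟨⟨i, j⟩, rfl⟩
    exact mem_centralizer_of_forall_commute fun b hb =>
      (hv i).2.commute_columnMap (hv i).1 (hfe i j) hb
  have := finiteDimensional_adjoin_of_finite (Set.finite_range _) hproj fun p hp q hq =>
    hE.commute_of_mem_twoNormClosure (hTC hp) (hTC hq)
  have := finiteDimensional_sup_of_le_centralizer (StarAlgebra.adjoin_le hTcomm)
  refine finiteDimensional_starSubalgebra_of_le (sup_le le_sup_left fun d hd =>
    ?_ : B n ⊔ D ≤ B n ⊔ StarAlgebra.adjoin ℂ T)
  obtain ⟨c, rfl⟩ := hspan d hd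
  refine sum_mem fun j _ => (B n ⊔ StarAlgebra.adjoin ℂ T).smul_mem ?_ _
  rw [eq_sum_mul_columnMap hf.complete hv fun i => hfe i j]
  exact sum_mem fun i _ => StarSubalgebra.mul_mem_sup ((hE.isMasa n).le (hfE i))
    (StarAlgebra.subset_adjoin ℂ T ⟨(i, j), rfl⟩)

end IsMasaChain

end MasaChain

theorem hasDerivAt_exp_smul_zero {A : Type*} [NormedRing A] [NormedAlgebra ℝ A] [CompleteSpace A]
    (a : A) : HasDerivAt (fun t : ℝ => NormedSpace.exp (t • a)) a 0 := by
  simpa using hasDerivAt_exp_smul_const a (0 : ℝ)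

theorem exp_smul_mem_unitary {A : Type*} [CStarAlgebra A] {a : A} (ha : a ∈ skewAdjoint A) (t : ℝ) :
    NormedSpace.exp (t • a) ∈ unitary A :=
  letI := NormedAlgebra.restrictScalars ℚ ℂ A
  NormedSpace.exp_mem_unitary_of_mem_skewAdjoint (skewAdjoint.smul_mem t ha)

theorem norm_le_one_of_mem_unitary {A : Type*} [CStarAlgebra A] {u : A} (hu : u ∈ unitary A) :
    ‖u‖ ≤ 1 := by
  nontriviality A
  exact (CStarRing.norm_of_mem_unitary hu).le

theorem isCompact_unitary (C : Type*) [CStarAlgebra C] [FiniteDimensional ℂ C] :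
    IsCompact (unitary C : Set C) := by
  have := FiniteDimensional.proper ℂ C
  refine Metric.isCompact_of_isClosed_isBounded isClosed_unitary
    ((Metric.isBounded_iff_subset_closedBall 0).mpr ⟨1, fun u hu => ?_⟩)
  exact mem_closedBall_zero_iff.mpr (norm_le_one_of_mem_unitary hu)

theorem abs_sign_sub_le (l : ℝ) : |(if 0 ≤ l then 1 else -1) - l| ≤ |1 - l ^ 2| := by
  split_ifs with hl
  · rw [show 1 - l ^ 2 = (1 - l) * (1 + l) by ring, abs_mul, abs_of_nonneg (a := 1 + l)] <;>
      nlinarith [abs_nonneg (1 - l)]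
  · rw [show 1 - l ^ 2 = (-1 - l) * (-1 + l) by ring, abs_mul, abs_of_neg (a := -1 + l)] <;>
      nlinarith [abs_nonneg (-1 - l)]

theorem IsProjPartition.sum_smul_mem_unitary {A ι : Type*} [Fintype ι] [Ring A] [StarRing A]
    [Algebra ℂ A] [StarModule ℂ A] {f : ι → A} (hf : IsProjPartition f) {c : ι → ℂ}
    (hc : ∀ i, c i ∈ unitary ℂ) : ∑ i, c i • f i ∈ unitary A := by
  rw [Unitary.mem_iff, hf.star_sum_smul, hf.sum_smul_mul_sum_smul, hf.sum_smul_mul_sum_smul]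
  simp only [fun i => Unitary.star_mul_self_of_mem (hc i),
    fun i => Unitary.mul_star_self_of_mem (hc i), ← hf.one_eq_sum_smul, and_self]

namespace FaithfulTrace

section Variational

variable {C : Type*} [CStarAlgebra C] (τ : FaithfulTrace C)

theorem eq_zero_of_mem_skewAdjoint {a : C} (ha : a ∈ skewAdjoint C) (h : (τ (a * a)).re = 0) :
    a = 0 := by
  refine τ.eq_zero_of_twoNorm_eq_zero (pow_eq_zero_iff two_ne_zero |>.mp ?_)
  rw [twoNorm_sq, skewAdjoint.mem_iff.mp ha, neg_mul, map_neg, Complex.neg_re, h, neg_zero]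

variable [FiniteDimensional ℂ C]

protected theorem continuous : Continuous τ :=
  τ.toLinearMap.continuous_of_finiteDimensional

theorem hasDerivAt_re_map {γ : ℝ → C} {γ' : C} {t : ℝ} (hγ : HasDerivAt γ γ' t) :
    HasDerivAt (fun s => (τ (γ s)).re) (τ γ').re t :=
  (Complex.reCLM.comp (τ.toLinearMap.toContinuousLinearMap.restrictScalars ℝ)).hasFDerivAt
    |>.comp_hasDerivAt t hγ

theorem isSelfAdjoint_of_forall_re_map_le {p : C}
    (hmax : ∀ u ∈ unitary C, (τ (u * p)).re ≤ (τ p).re) : IsSelfAdjoint p := by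
  let a := p - star p
  have ha : a ∈ skewAdjoint C := by rw [skewAdjoint.mem_iff, star_sub, star_star, neg_sub]
  have hcrit : (τ (a * p)).re = 0 := by
    refine IsLocalMax.hasDerivAt_eq_zero (f := fun t : ℝ => (τ (NormedSpace.exp (t • a) * p)).re)
      (.of_forall fun t => ?_) (τ.hasDerivAt_re_map ((hasDerivAt_exp_smul_zero a).mul_const p))
    simpa using hmax _ (exp_smul_mem_unitary ha t)
  have hstar : (τ (a * star p)).re = -(τ (a * p)).re := by
    rw [← Complex.conj_re, ← RCLike.star_def, ← map_star, star_mul, star_star,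
      skewAdjoint.mem_iff.mp ha, mul_neg, map_neg, Complex.neg_re, map_mul_comm]
  refine (sub_eq_zero.mp (τ.eq_zero_of_mem_skewAdjoint ha ?_)).symm
  conv_lhs => rw [show a * a = a * p - a * star p from mul_sub _ _ _]
  rw [map_sub, Complex.sub_re, hstar, hcrit, neg_zero, sub_zero]

theorem commute_of_forall_re_map_le {k d : C} (hk : IsSelfAdjoint k) (hd : IsSelfAdjoint d)
    (hmax : ∀ u ∈ unitary C, (τ (u * k * star u * d)).re ≤ (τ (k * d)).re) : Commute k d := by
  let a := k * d - d * k
  have ha : a ∈ skewAdjoint C := by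
    rw [skewAdjoint.mem_iff, star_sub, star_mul, star_mul, hk.star_eq, hd.star_eq, neg_sub]
  have hderiv := (((hasDerivAt_exp_smul_zero a).mul_const k).mul
    (hasDerivAt_exp_smul_zero (-a))).mul_const d
  have hcrit := IsLocalMax.hasDerivAt_eq_zero (.of_forall fun t => ?_) (τ.hasDerivAt_re_map hderiv)
  · have hcomm : τ (k * -a * d) = -τ (a * (d * k)) := by
      rw [mul_neg, neg_mul, map_neg, mul_assoc, map_mul_comm, mul_assoc]
    simp only [zero_smul, NormedSpace.exp_zero, one_mul, mul_one, add_mul, map_add, hcomm] at hcrit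
    refine sub_eq_zero.mp (τ.eq_zero_of_mem_skewAdjoint ha ?_)
    rw [← hcrit, mul_assoc, ← sub_eq_add_neg, ← map_sub, ← mul_sub]
  · have hstar : NormedSpace.exp (-(t • a)) = star (NormedSpace.exp (t • a)) := by
      rw [NormedSpace.star_exp, star_smul, skewAdjoint.mem_iff.mp ha, star_trivial, smul_neg]
    simpa [hstar] using hmax _ (exp_smul_mem_unitary ha t)

/-- For a unitary `v` maximizing `re (τ (v * y))`, the element `v * y` is self-adjoint; up to signs
`v` is the adjoint of the unitary part in a polar decomposition of `y`. -/
theorem exists_unitary_twoNorm_sub_le (y : C) :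
    ∃ u ∈ unitary C, τ.twoNorm (u - y) ≤ τ.twoNorm (1 - star y * y) := by
  obtain ⟨v, hv, hmax⟩ := (isCompact_unitary C).exists_isMaxOn ⟨1, one_mem _⟩
    (Complex.continuous_re.comp (τ.continuous.comp (continuous_mul_const y))).continuousOn
  have hsa : IsSelfAdjoint (v * y) := τ.isSelfAdjoint_of_forall_re_map_le fun u hu => by
    simpa [mul_assoc] using hmax (mul_mem hu hv)
  obtain ⟨n, f, l, hf, hl⟩ := exists_isProjPartition_eq_sum_of_isSelfAdjoint hsa
  let s (i : Fin n) : ℝ := if 0 ≤ l i then 1 else -1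
  have hs : ∑ i, (s i : ℂ) • f i ∈ unitary C := hf.sum_smul_mem_unitary fun i => by
    simp only [s]
    split_ifs <;> simp [Unitary.mem_iff]
  have hy : star y * y = ∑ i, ((l i : ℂ) * l i) • f i := by
    rw [← hf.sum_smul_mul_sum_smul, ← hl]
    nth_rw 1 [← hsa.star_eq]
    rw [star_mul, mul_assoc, ← mul_assoc (star v), Unitary.star_mul_self_of_mem hv, one_mul]
  refine ⟨_, mul_mem (Unitary.star_mem hv) hs, ?_⟩
  calc τ.twoNorm (star v * ∑ i, (s i : ℂ) • f i - y)
      = τ.twoNorm (∑ i, (s i : ℂ) • f i - v * y) := by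
        rw [← τ.twoNorm_mem_unitary_mul hv, mul_sub, ← mul_assoc, Unitary.mul_star_self_of_mem hv,
          one_mul]
    _ = τ.twoNorm (∑ i, ((s i : ℂ) - l i) • f i) := by
        rw [hl, ← Finset.sum_sub_distrib]
        simp only [sub_smul]
    _ ≤ τ.twoNorm (∑ i, (1 - (l i : ℂ) * l i) • f i) := by
        refine τ.twoNorm_sum_smul_le hf fun i => ?_
        simp only [← sq, ← Complex.ofReal_sub, ← Complex.ofReal_pow, ← Complex.ofReal_one,
          Complex.norm_real]
        exact abs_sign_sub_le (l i)
    _ = τ.twoNorm (1 - star y * y) := by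
        simp only [hy, sub_smul, Finset.sum_sub_distrib, ← hf.one_eq_sum_smul]

theorem exists_unitary_conj_commute {h d : C} (hh : IsSelfAdjoint h) (hd : IsSelfAdjoint d) :
    ∃ w ∈ unitary C, Commute (w * h * star w) d ∧
      τ.twoNorm (w * h * star w - d) ≤ τ.twoNorm (h - d) := by
  obtain ⟨w, hw, hmax⟩ := (isCompact_unitary C).exists_isMaxOn
    (f := fun w => (τ (w * h * star w * d)).re) ⟨1, one_mem _⟩
    (Complex.continuous_re.comp (τ.continuous.comp (by fun_prop))).continuousOn
  have hk : IsSelfAdjoint (w * h * star w) := hh.conjugate w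
  have hconj : star w * w = 1 := Unitary.star_mul_self_of_mem hw
  refine ⟨w, hw, τ.commute_of_forall_re_map_le hk hd fun u hu => ?_, ?_⟩
  · simpa [mul_assoc] using hmax (mul_mem hu hw)
  · have hexpand : ∀ x : C, IsSelfAdjoint x → τ.twoNorm (x - d) ^ 2 =
        (τ (x * x)).re + (τ (d * d)).re - 2 * (τ (x * d)).re := fun x hx => by
      rw [twoNorm_sq, star_sub, hx.star_eq, hd.star_eq, sub_mul, mul_sub, mul_sub, map_sub, map_sub,
        map_sub, τ.map_mul_comm d x]
      simp only [Complex.sub_re]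
      ring
    have hsq : τ (w * h * star w * (w * h * star w)) = τ (h * h) := by
      have hkk : w * h * star w * (w * h * star w) = w * (h * h * star w) := by
        simp only [mul_assoc, ← mul_assoc (star w) w, hconj, one_mul]
      rw [hkk, map_mul_comm, mul_assoc, hconj, mul_one]
    rw [← sq_le_sq₀ (apply_nonneg _ _) (apply_nonneg _ _), hexpand _ hk, hexpand h hh, hsq]
    have : (τ (h * d)).re ≤ (τ (w * h * star w * d)).re := by
      simpa using hmax (one_mem (unitary C))
    linarith

end Variational

end FaithfulTrace

theorem IsProjPartition.conj_unitary {A ι : Type*} [Fintype ι] [Ring A] [StarRing A] [Algebra ℂ A]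
    {f : ι → A} (hf : IsProjPartition f) {u : A} (hu : u ∈ unitary A) :
    IsProjPartition fun i => u * f i * star u := by
  simpa only [Unitary.conjStarAlgAut_apply] using hf.map (Unitary.conjStarAlgAut ℂ A ⟨u, hu⟩)

theorem IsProjPartition.isSelfAdjoint_sum_smul {A ι : Type*} [Fintype ι] [Ring A] [StarRing A]
    [Algebra ℂ A] [StarModule ℂ A] {f : ι → A} (hf : IsProjPartition f) (c : ι → ℝ) :
    IsSelfAdjoint (∑ i, (c i : ℂ) • f i) := by
  simp only [isSelfAdjoint_iff, hf.star_sum_smul, RCLike.star_def, Complex.conj_ofReal]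

section Pinching

variable {A ι : Type*} [Ring A] [Fintype ι]

/-- The block diagonal part of `x` with respect to the family `q`. -/
def pinching (q : ι → A) (x : A) : A := ∑ j, q j * x * q j

variable [StarRing A] {q : ι → A}

theorem IsProjPartition.star_pinching (hq : IsProjPartition q) (x : A) :
    star (pinching q x) = pinching q (star x) := by
  simp only [pinching, star_sum, star_mul, (hq.isSelfAdjoint _).star_eq, mul_assoc]

theorem IsProjPartition.mul_pinching (hq : IsProjPartition q) (x : A) (j : ι) :
    q j * pinching q x = q j * x * q j := by
  rw [pinching, Finset.mul_sum, Finset.sum_eq_single j, ← mul_assoc, ← mul_assoc, (hq.idem j).eq]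
  · exact fun i _ hij => by rw [← mul_assoc, ← mul_assoc, hq.ortho hij.symm, zero_mul, zero_mul]
  · simp

theorem IsProjPartition.pinching_mul (hq : IsProjPartition q) (x : A) (j : ι) :
    pinching q x * q j = q j * x * q j := by
  rw [pinching, Finset.sum_mul, Finset.sum_eq_single j, mul_assoc _ (q j), (hq.idem j).eq]
  · exact fun i _ hij => by rw [mul_assoc, hq.ortho hij, mul_zero]
  · simp

theorem IsProjPartition.pinching_mem_centralizer [Algebra ℂ A] [StarModule ℂ A]
    (hq : IsProjPartition q) (x : A) :
    pinching q x ∈ StarSubalgebra.centralizer ℂ (Set.range q) := by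
  rw [StarSubalgebra.mem_centralizer_iff]
  rintro _ ⟨j, rfl⟩
  rw [(hq.isSelfAdjoint j).star_eq, hq.mul_pinching, hq.pinching_mul]
  exact ⟨rfl, rfl⟩

end Pinching

theorem exists_pairwise_one_le_norm_sub (ι : Type*) [Fintype ι] :
    ∃ m : ι → ℝ, (Pairwise fun i j => 1 ≤ ‖(m i : ℂ) - m j‖) ∧
      ∀ j, ‖(m j : ℂ)‖ ≤ Fintype.card ι := by
  refine ⟨fun j => Fintype.equivFin ι j, fun i j hij => ?_, fun j => ?_⟩
  · have hne : ((Fintype.equivFin ι i : ℕ) : ℤ) - (Fintype.equivFin ι j : ℕ) ≠ 0 := by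
      simpa [sub_eq_zero, Fin.val_inj] using hij
    beta_reduce
    rw [← Complex.ofReal_sub, Complex.norm_real, Real.norm_eq_abs]
    exact_mod_cast Int.one_le_abs hne
  · simp [(Fintype.equivFin ι j).is_lt.le]

namespace FaithfulTrace

section Diagonalization

theorem twoNorm_sum_smul_sub_le {A ι : Type*} [Ring A] [StarRing A] [Algebra ℂ A]
    [StarModule ℂ A] [Fintype ι] (τ : FaithfulTrace A) (f g : ι → A) {m : ι → ℂ} {K : ℝ}
    (hm : ∀ i, ‖m i‖ ≤ K) :
    τ.twoNorm (∑ i, m i • f i - ∑ i, m i • g i) ≤ K * ∑ i, τ.twoNorm (f i - g i) := by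
  rw [← Finset.sum_sub_distrib, Finset.mul_sum]
  refine (τ.twoNorm_sum_le _ _).trans (Finset.sum_le_sum fun i _ => ?_)
  rw [← smul_sub, map_smul_eq_mul]
  exact mul_le_mul_of_nonneg_right (hm i) (apply_nonneg _ _)

theorem exists_injective_twoNorm_sub_lt {A ι : Type*} [Ring A] [StarRing A] [Algebra ℂ A]
    [StarModule ℂ A] [Fintype ι] (τ : FaithfulTrace A) (f : ι → A) (μ : ι → ℝ) {ε : ℝ}
    (hε : 0 < ε) :
    ∃ l : ι → ℝ, Function.Injective l ∧
      τ.twoNorm (∑ i, (l i : ℂ) • f i - ∑ i, (μ i : ℂ) • f i) < ε := by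
  let e (i : ι) : ℝ := Fintype.equivFin ι i
  have he : Function.Injective e := fun i j h => by
    simpa [e, Fin.val_inj] using h
  have hinj : ∀ᶠ t in 𝓝[≠] (0 : ℝ), ∀ i j, i ≠ j → μ i + t * e i ≠ μ j + t * e j := by
    refine eventually_all.mpr fun i => eventually_all.mpr fun j => ?_
    by_cases hij : i = j
    · simp [hij]
    have hderiv : HasDerivAt (fun t => t * (e i - e j)) (e i - e j) 0 := by
      simpa using (hasDerivAt_id (0 : ℝ)).mul_const (e i - e j)
    filter_upwards [hderiv.eventually_ne (c := μ j - μ i) (sub_ne_zero.mpr (he.ne hij))]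
      with t ht _ h
    exact ht (by linarith)
  have hsmall : ∀ᶠ t in 𝓝[≠] (0 : ℝ), |t| * τ.twoNorm (∑ i, (e i : ℂ) • f i) < ε := by
    have hcont : Continuous fun t : ℝ => |t| * τ.twoNorm (∑ i, (e i : ℂ) • f i) := by fun_prop
    exact nhdsWithin_le_nhds ((hcont.tendsto' 0 0 (by simp)).eventually_lt_const hε)
  obtain ⟨t, ht, ht'⟩ := (hinj.and hsmall).exists
  refine ⟨fun i => μ i + t * e i, fun i j h => by_contra fun hij => ht i j hij h, ?_⟩
  convert ht' using 1
  rw [← Finset.sum_sub_distrib, ← Real.norm_eq_abs, ← Complex.norm_real, ← map_smul_eq_mul,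
    Finset.smul_sum]
  congr 1
  refine Finset.sum_congr rfl fun i _ => ?_
  rw [← sub_smul, smul_smul]
  simp

variable {C ι : Type*} [CStarAlgebra C] [Fintype ι] (τ : FaithfulTrace C)

theorem twoNorm_sub_le_of_one_le_norm_sub {p q : ι → C} (hp : IsProjPartition p)
    (hq : IsProjPartition q) {m : ι → ℂ} (hm : Pairwise fun i j => 1 ≤ ‖m i - m j‖) (j : ι) :
    τ.twoNorm (q j - p j) ≤
      Fintype.card ι * (2 * τ.twoNorm (∑ i, m i • q i - ∑ i, m i • p i)) := by
  let x := ∑ i, m i • q i - ∑ i, m i • p i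
  have hcross : ∀ i j, i ≠ j → τ.twoNorm (p i * q j) ≤ τ.twoNorm x := fun i j hij => by
    have hx : p i * x * q j = (m j - m i) • (p i * q j) := by
      rw [mul_sub, sub_mul, mul_assoc, hq.sum_smul_mul, hp.mul_sum_smul, mul_smul_comm,
        smul_mul_assoc, sub_smul]
    calc τ.twoNorm (p i * q j) ≤ ‖m j - m i‖ * τ.twoNorm (p i * q j) :=
          le_mul_of_one_le_left (apply_nonneg _ _) (hm hij.symm)
      _ = τ.twoNorm (p i * x * q j) := by rw [hx, map_smul_eq_mul]
      _ ≤ τ.twoNorm (p i * x) := τ.twoNorm_mul_isStarProjection_le _ (hq.isStarProjection j)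
      _ ≤ τ.twoNorm x := τ.twoNorm_isStarProjection_mul_le (hp.isStarProjection i) _
  have hterm : ∀ i, τ.twoNorm (q j * p i - q i * p j) ≤ 2 * τ.twoNorm x := fun i => by
    rcases eq_or_ne i j with rfl | hij
    · rw [sub_self, map_zero]
      positivity
    have hswap : ∀ i j, τ.twoNorm (q j * p i) = τ.twoNorm (p i * q j) := fun i j => by
      rw [← twoNorm_star, star_mul, (hp.isSelfAdjoint i).star_eq, (hq.isSelfAdjoint j).star_eq]
    refine (map_sub_le_add _ _ _).trans ?_
    rw [hswap, hswap, two_mul]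
    exact add_le_add (hcross i j hij) (hcross j i hij.symm)
  rw [hp.sub_apply_eq_sum hq]
  refine (τ.twoNorm_sum_le _ _).trans ((Finset.sum_le_sum fun i _ => hterm i).trans_eq ?_)
  rw [Finset.sum_const, Finset.card_univ, nsmul_eq_mul]

variable {q r : ι → C}

theorem twoNorm_one_sub_star_pinching_mul_le (hq : IsProjPartition q) (w : C) :
    τ.twoNorm (1 - star (pinching q (star w)) * pinching q (star w)) ≤
      ∑ j, τ.twoNorm (q j - w * q j * star w) := by
  have hdefect : 1 - star (pinching q (star w)) * pinching q (star w) =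
      ∑ j, q j * (q j - w * q j * star w) * q j := by
    rw [hq.star_pinching, star_star]
    conv_lhs => arg 2; arg 2; rw [pinching]
    simp only [Finset.mul_sum, ← mul_assoc, hq.pinching_mul, mul_sub, sub_mul,
      Finset.sum_sub_distrib, (hq.idem _).eq, hq.complete]
  rw [hdefect]
  refine (τ.twoNorm_sum_le _ _).trans (Finset.sum_le_sum fun j _ => ?_)
  exact (τ.twoNorm_mul_isStarProjection_le _ (hq.isStarProjection j)).trans
    (τ.twoNorm_isStarProjection_mul_le (hq.isStarProjection j) _)

theorem twoNorm_pinching_sub_le (hq : IsProjPartition q) {w : C} (hw : w ∈ unitary C) :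
    τ.twoNorm (pinching q (star w) - star w) ≤ ∑ j, τ.twoNorm (q j - w * q j * star w) := by
  have hoff : pinching q (star w) - star w = ∑ j, star w * (w * q j * star w - q j) * q j := by
    simp only [mul_sub, sub_mul, ← mul_assoc, Unitary.star_mul_self_of_mem hw, one_mul,
      Finset.sum_sub_distrib, mul_assoc (star w) (q _), (hq.idem _).eq, ← Finset.mul_sum,
      hq.complete, mul_one, pinching]
  rw [hoff]
  refine (τ.twoNorm_sum_le _ _).trans (Finset.sum_le_sum fun j _ => ?_)
  refine (τ.twoNorm_mul_isStarProjection_le _ (hq.isStarProjection j)).trans_eq ?_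
  rw [τ.twoNorm_mem_unitary_mul (Unitary.star_mem hw), map_sub_rev]

variable [FiniteDimensional ℂ C]

theorem exists_unitary_conj_eq_twoNorm_sub_one_le (hq : IsProjPartition q) {w : C}
    (hw : w ∈ unitary C) : ∃ W ∈ unitary C, (∀ j, W * q j * star W = w * q j * star w) ∧
      τ.twoNorm (W - 1) ≤ 2 * ∑ j, τ.twoNorm (q j - w * q j * star w) := by
  let N := StarSubalgebra.centralizer ℂ (Set.range q)
  let y := pinching q (star w)
  obtain ⟨⟨u, huN⟩, hu, huy⟩ :=
    (τ.restrict N).exists_unitary_twoNorm_sub_le ⟨y, hq.pinching_mem_centralizer _⟩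
  replace hu : u ∈ unitary C := Unitary.map_mem N.subtype hu
  replace huy : τ.twoNorm (u - y) ≤ τ.twoNorm (1 - star y * y) := huy
  have huq : ∀ j, u * q j * star u = q j := fun j => by
    rw [← ((StarSubalgebra.mem_centralizer_iff ℂ).mp huN _ ⟨j, rfl⟩).1, mul_assoc,
      Unitary.mul_star_self_of_mem hu, mul_one]
  refine ⟨w * u, mul_mem hw hu, fun j => ?_, ?_⟩
  · conv_rhs => rw [← huq j]
    simp only [star_mul, mul_assoc]
  calc τ.twoNorm (w * u - 1) = τ.twoNorm ((u - y) + (y - star w)) := by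
        rw [← τ.twoNorm_mem_unitary_mul (Unitary.star_mem hw), mul_sub, ← mul_assoc,
          Unitary.star_mul_self_of_mem hw, one_mul, mul_one, sub_add_sub_cancel]
    _ ≤ τ.twoNorm (1 - star y * y) + τ.twoNorm (y - star w) :=
        (map_add_le_add _ _ _).trans (add_le_add_left huy _)
    _ ≤ 2 * ∑ j, τ.twoNorm (q j - w * q j * star w) := by
        rw [two_mul]
        exact add_le_add (τ.twoNorm_one_sub_star_pinching_mul_le hq w)
          (τ.twoNorm_pinching_sub_le hq hw)

theorem exists_isSelfAdjoint_twoNorm_sub_lt_forall_mem_of_commute {E : StarSubalgebra ℂ C}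
    (hE : IsMasa E ⊤) {d₀ : C} (hd₀ : d₀ ∈ E) (hsa : IsSelfAdjoint d₀) {ε : ℝ} (hε : 0 < ε) :
    ∃ d, IsSelfAdjoint d ∧ τ.twoNorm (d - d₀) < ε ∧ ∀ x, Commute x d → x ∈ E := by
  have := hE.isMulCommutative
  obtain ⟨n, f, hf, -, hspan⟩ := exists_isProjPartition_mem_forall_eq_sum E
  obtain ⟨c, rfl⟩ := hspan d₀ hd₀
  obtain ⟨l, hl, hlt⟩ := τ.exists_injective_twoNorm_sub_lt f (fun i => (c i).re) hε
  rw [hf.sum_re_smul_of_isSelfAdjoint hsa] at hlt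
  refine ⟨_, hf.isSelfAdjoint_sum_smul l, hlt, fun x hx => hE.mem_of_commute trivial fun g hg => ?_⟩
  obtain ⟨c, rfl⟩ := hspan g hg
  exact .sum_left _ _ _ fun i _ => .smul_left (hf.commute_of_commute_sum
    (Complex.ofReal_injective.comp hl) hx.symm i) _

theorem exists_unitary_conj_mem_twoNorm_sub_le {E : StarSubalgebra ℂ C} (hE : IsMasa E ⊤)
    (hq : IsProjPartition q) (hr : IsProjPartition r) (hrE : ∀ j, r j ∈ E) {ε : ℝ} (hε : 0 < ε) :
    ∃ w ∈ unitary C, (∀ j, w * q j * star w ∈ E) ∧ ∀ j, τ.twoNorm (q j - w * q j * star w) ≤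
      Fintype.card ι * (4 * (Fintype.card ι * ∑ j, τ.twoNorm (q j - r j) + ε)) := by
  obtain ⟨m, hm, hm_le⟩ := exists_pairwise_one_le_norm_sub ι
  have hm_inj : Function.Injective fun j => (m j : ℂ) := fun i j h => by_contra fun hij => by
    simpa [sub_eq_zero.mpr h] using (hm hij).not_gt
  let h := ∑ j, (m j : ℂ) • q j
  let d₀ := ∑ j, (m j : ℂ) • r j
  obtain ⟨d, hd, hdd₀, hdE⟩ := τ.exists_isSelfAdjoint_twoNorm_sub_lt_forall_mem_of_commute hE
    (sum_mem fun j _ => E.smul_mem (hrE j) _ : d₀ ∈ E) (hr.isSelfAdjoint_sum_smul m) hε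
  obtain ⟨w, hw, hcomm, hwd⟩ := τ.exists_unitary_conj_commute (hq.isSelfAdjoint_sum_smul m) hd
  have hk : w * h * star w = ∑ j, (m j : ℂ) • (w * q j * star w) := by
    simp only [h, Finset.mul_sum, Finset.sum_mul, mul_smul_comm, smul_mul_assoc]
  have hhd : τ.twoNorm (h - d) ≤ Fintype.card ι * ∑ j, τ.twoNorm (q j - r j) + ε :=
    calc τ.twoNorm (h - d) = τ.twoNorm ((h - d₀) - (d - d₀)) := by rw [sub_sub_sub_cancel_right]
      _ ≤ τ.twoNorm (h - d₀) + τ.twoNorm (d - d₀) := map_sub_le_add _ _ _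
      _ ≤ _ := add_le_add (τ.twoNorm_sum_smul_sub_le q r hm_le) hdd₀.le
  have hhw : τ.twoNorm (h - w * h * star w) ≤ 2 * τ.twoNorm (h - d) :=
    calc τ.twoNorm (h - w * h * star w) = τ.twoNorm ((h - d) - (w * h * star w - d)) := by
          rw [sub_sub_sub_cancel_right]
      _ ≤ τ.twoNorm (h - d) + τ.twoNorm (w * h * star w - d) := map_sub_le_add _ _ _
      _ ≤ 2 * τ.twoNorm (h - d) := by linarith
  refine ⟨w, hw, fun j => hdE _ ?_, fun j => ?_⟩
  · exact (hq.conj_unitary hw).commute_of_commute_sum hm_inj (hk ▸ hcomm) j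
  · refine (τ.twoNorm_sub_le_of_one_le_norm_sub (hq.conj_unitary hw) hq hm j).trans ?_
    rw [← hk]
    exact mul_le_mul_of_nonneg_left (by linarith) (Nat.cast_nonneg _)

theorem exists_unitary_conj_mem_twoNorm_sub_one_le {A : Type*} [CStarAlgebra A]
    (τ : FaithfulTrace A) {B E : StarSubalgebra ℂ A} [FiniteDimensional ℂ B] (hE : IsMasa E B)
    {q r : ι → A} (hq : IsProjPartition q) (hr : IsProjPartition r) (hqB : ∀ j, q j ∈ B)
    (hrE : ∀ j, r j ∈ E) {ε : ℝ} (hε : 0 < ε) :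
    ∃ w ∈ unitary A, (∀ j, w * q j * star w ∈ E) ∧ τ.twoNorm (w - 1) ≤
      8 * Fintype.card ι ^ 2 * (Fintype.card ι * ∑ j, τ.twoNorm (q j - r j) + ε) := by
  let q' (j : ι) : B := ⟨q j, hqB j⟩
  let r' (j : ι) : B := ⟨r j, hE.le (hrE j)⟩
  have hq' : IsProjPartition q' := .of_map (φ := B.subtype) Subtype.val_injective hq
  have hr' : IsProjPartition r' := .of_map (φ := B.subtype) Subtype.val_injective hr
  obtain ⟨w, hw, hwE, hqw⟩ := (τ.restrict B).exists_unitary_conj_mem_twoNorm_sub_le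
    hE.comap_subtype hq' hr' hrE hε
  obtain ⟨W, hW, hWw, hWone⟩ := (τ.restrict B).exists_unitary_conj_eq_twoNorm_sub_one_le hq' hw
  refine ⟨W, Unitary.map_mem B.subtype hW, fun j => ?_, hWone.trans ?_⟩
  · have hWw' : (W : A) * q j * star (W : A) = w * q j * star (w : A) :=
      congrArg Subtype.val (hWw j)
    exact hWw'.symm ▸ hwE j
  · refine (mul_le_mul_of_nonneg_left (Finset.sum_le_sum fun j _ => hqw j) zero_le_two).trans_eq ?_
    rw [Finset.sum_const, Finset.card_univ, nsmul_eq_mul]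
    change 2 * (_ * (_ * (4 * (_ * ∑ j, τ.twoNorm (q j - r j) + ε)))) = _
    ring

end Diagonalization

section Approximation

variable {A : Type*} [CStarAlgebra A] (τ : FaithfulTrace A) {ι : Type*} [Fintype ι]

/-- The unit ball of `A` is complete for the trace norm. Completeness is expressed by geometrically
convergent sequences. -/
def IsBallComplete : Prop :=
  ∀ (C : ℝ) (x : ℕ → A), (∀ n, ‖x n‖ ≤ 1) →
    (∀ n, τ.twoNorm (x (n + 1) - x n) ≤ C * (1 / 2) ^ n) →
    ∃ y, Tendsto (fun n => τ.twoNorm (x n - y)) atTop (𝓝 0)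

/-- The family `q` is within `δ`, in trace norm, of a partition of unity into projections of one
of the algebras `B n`. -/
def IsNearlyIn (B : ℕ → StarSubalgebra ℂ A) (q : ι → A) (δ : ℝ) : Prop :=
  ∃ n, ∃ r : ι → A, IsProjPartition r ∧ (∀ j, r j ∈ B n) ∧ ∑ j, τ.twoNorm (q j - r j) ≤ δ

variable {τ} {B E : ℕ → StarSubalgebra ℂ A} {p q : ι → A}

theorem sum_twoNorm_sub_le (p q r : ι → A) :
    ∑ j, τ.twoNorm (p j - r j) ≤ ∑ j, τ.twoNorm (p j - q j) + ∑ j, τ.twoNorm (q j - r j) := by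
  rw [← Finset.sum_add_distrib]
  refine Finset.sum_le_sum fun j _ => ?_
  rw [← sub_add_sub_cancel (p j) (q j)]
  exact map_add_le_add _ _ _

theorem IsNearlyIn.of_sum_le {δ ε : ℝ} (h : τ.IsNearlyIn B q δ)
    (hpq : ∑ j, τ.twoNorm (p j - q j) ≤ ε) : τ.IsNearlyIn B p (ε + δ) := by
  obtain ⟨n, r, hr, hrB, hqr⟩ := h
  exact ⟨n, r, hr, hrB, (sum_twoNorm_sub_le p q r).trans (add_le_add hpq hqr)⟩

theorem exists_isNearlyIn (hp : IsProjPartition p) (B : ℕ → StarSubalgebra ℂ A) :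
    ∃ δ, τ.IsNearlyIn B p δ := by
  classical
  rcases isEmpty_or_nonempty ι with _ | ⟨⟨i⟩⟩
  · exact ⟨_, 0, p, hp, isEmptyElim, le_rfl⟩
  · refine ⟨_, 0, Pi.single i 1, .single_one i, fun j => ?_, le_rfl⟩
    obtain rfl | hij := eq_or_ne j i
    · rw [Pi.single_eq_same]
      exact one_mem _
    · rw [Pi.single_eq_of_ne hij]
      exact zero_mem _

theorem IsNearlyIn.exists_unitary_mul [∀ n, FiniteDimensional ℂ (B n)] (hB : Monotone B)
    (happrox : ∀ q : ι → A, IsProjPartition q → ∀ ε > 0, τ.IsNearlyIn B q ε)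
    (hE : IsMasaChain E B) (hq : IsProjPartition q) {δ ε : ℝ} (h : τ.IsNearlyIn E q δ)
    (hε : 0 < ε) :
    ∃ w ∈ unitary A, τ.IsNearlyIn E (fun j => w * q j * star w) ε ∧
      τ.twoNorm (w - 1) ≤ 8 * Fintype.card ι ^ 2 * (Fintype.card ι + 1) * (δ + ε) := by
  obtain ⟨m, r, hr, hrE, hqr⟩ := h
  obtain ⟨k, q', hq', hqB', hqq'⟩ := happrox q hq ε hε
  have hδ : 0 ≤ δ := (Finset.sum_nonneg fun j _ => apply_nonneg _ _).trans hqr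
  have hqr' : ∑ j, τ.twoNorm (q' j - r j) ≤ δ + ε :=
    calc ∑ j, τ.twoNorm (q' j - r j)
        ≤ ∑ j, τ.twoNorm (q' j - q j) + ∑ j, τ.twoNorm (q j - r j) := sum_twoNorm_sub_le _ _ _
      _ = ∑ j, τ.twoNorm (q j - q' j) + ∑ j, τ.twoNorm (q j - r j) := by
        simp only [map_sub_rev τ.twoNorm (q' _)]
      _ ≤ δ + ε := by linarith
  obtain ⟨w, hw, hwE, hw_one⟩ := τ.exists_unitary_conj_mem_twoNorm_sub_one_le
    (hE.isMasa (max k m)) hq' hr (fun j => hB (le_max_left k m) (hqB' j))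
    (fun j => hE.monotone (le_max_right k m) (hrE j)) hε
  refine ⟨w, hw, ⟨max k m, _, hq'.conj_unitary hw, hwE, ?_⟩, hw_one.trans ?_⟩
  · simpa only [← sub_mul, ← mul_sub, τ.twoNorm_mul_mem_unitary (Unitary.star_mem hw),
      τ.twoNorm_mem_unitary_mul hw] using hqq'
  · rw [mul_assoc _ (_ + 1 : ℝ)]
    gcongr
    nlinarith [mul_le_mul_of_nonneg_left hqr' (Nat.cast_nonneg (α := ℝ) (Fintype.card ι))]

theorem twoNorm_conj_sub_conj_le {u : A} (hu : u ∈ unitary A) (v x : A) :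
    τ.twoNorm (v * x * star v - u * x * star u) ≤
      (‖v * x‖ + ‖x‖) * τ.twoNorm (u - v) := by
  have hdecomp : v * x * star v - u * x * star u =
      -(v * x * star (u - v) + (u - v) * x * star u) := by
    rw [star_sub]
    noncomm_ring
  calc τ.twoNorm (v * x * star v - u * x * star u)
      = τ.twoNorm (v * x * star (u - v) + (u - v) * x * star u) := by rw [hdecomp, map_neg_eq_map]
    _ ≤ τ.twoNorm (v * x * star (u - v)) + τ.twoNorm ((u - v) * x * star u) :=
        map_add_le_add _ _ _
    _ ≤ ‖v * x‖ * τ.twoNorm (u - v) + ‖x‖ * τ.twoNorm (u - v) := by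
        rw [τ.twoNorm_mul_mem_unitary (Unitary.star_mem hu), ← τ.twoNorm_star (u - v)]
        refine add_le_add (τ.twoNorm_mul_le _ _) ?_
        rw [τ.twoNorm_star]
        exact τ.twoNorm_mul_le' _ _
    _ = _ := (add_mul _ _ _).symm

section Limit

variable {u : ℕ → A} {v : A} (hu : ∀ n, u n ∈ unitary A)
  (huv : Tendsto (fun n => τ.twoNorm (u n - v)) atTop (𝓝 0))
include hu huv

theorem tendsto_twoNorm_conj_sub_conj (x : A) :
    Tendsto (fun n => τ.twoNorm (v * x * star v - u n * x * star (u n))) atTop (𝓝 0) :=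
  squeeze_zero (fun _ => apply_nonneg _ _) (fun n => twoNorm_conj_sub_conj_le (hu n) v x)
    (by simpa using huv.const_mul (‖v * x‖ + ‖x‖))

theorem mul_star_eq_one_of_tendsto : v * star v = 1 := by
  refine sub_eq_zero.mp (τ.eq_zero_of_twoNorm_eq_zero
    (tendsto_nhds_unique (tendsto_const_nhds (f := atTop (α := ℕ))) ?_))
  simpa only [mul_one, Unitary.mul_star_self_of_mem (hu _)] using
    tendsto_twoNorm_conj_sub_conj hu huv 1

theorem mem_unitary_of_tendsto : v ∈ unitary A := by
  refine Unitary.mem_iff.mpr ⟨?_, mul_star_eq_one_of_tendsto hu huv⟩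
  have hstar : Tendsto (fun n => τ.twoNorm (star (u n) - star v)) atTop (𝓝 0) := by
    simpa only [← star_sub, twoNorm_star] using huv
  simpa only [star_star] using
    mul_star_eq_one_of_tendsto (fun n => Unitary.star_mem (hu n)) hstar

theorem isNearlyIn_conj_of_tendsto
    (h : ∀ n, τ.IsNearlyIn E (fun j => u n * p j * star (u n)) ((1 / 2) ^ n)) {ε : ℝ}
    (hε : 0 < ε) : τ.IsNearlyIn E (fun j => v * p j * star v) ε := by
  have hsum : Tendsto (fun n => ∑ j, τ.twoNorm (v * p j * star v - u n * p j * star (u n)) +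
      (1 / 2) ^ n) atTop (𝓝 0) := by
    simpa using (tendsto_finsetSum _ fun j _ => tendsto_twoNorm_conj_sub_conj hu huv (p j)).add
      (tendsto_pow_atTop_nhds_zero_of_lt_one (r := (1 / 2 : ℝ)) (by norm_num) (by norm_num))
  obtain ⟨n, hn⟩ := (hsum.eventually_lt_const hε).exists
  obtain ⟨m, r, hr, hrE, hle⟩ := (h n).of_sum_le le_rfl
  exact ⟨m, r, hr, hrE, hle.trans hn.le⟩

end Limit

variable [∀ n, FiniteDimensional ℂ (B n)]

theorem exists_unitary_forall_isNearlyIn (hτ : τ.IsBallComplete) (hB : Monotone B)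
    (happrox : ∀ q : ι → A, IsProjPartition q → ∀ ε > 0, τ.IsNearlyIn B q ε)
    (hE : IsMasaChain E B) (hp : IsProjPartition p) :
    ∃ v ∈ unitary A, ∀ ε > 0, τ.IsNearlyIn E (fun j => v * p j * star v) ε := by
  let K : ℝ := 8 * Fintype.card ι ^ 2 * (Fintype.card ι + 1)
  let S (n : ℕ) : Set A :=
    {u | u ∈ unitary A ∧ τ.IsNearlyIn E (fun j => u * p j * star u) ((1 / 2) ^ n)}
  have hstep : ∀ u ∈ unitary A, ∀ δ, τ.IsNearlyIn E (fun j => u * p j * star u) δ → ∀ n,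
      ∃ u' ∈ S n, τ.twoNorm (u' - u) ≤ K * (δ + (1 / 2) ^ n) := fun u hu δ h n => by
    obtain ⟨w, hw, hwE, hw_one⟩ :=
      h.exists_unitary_mul hB happrox hE (hp.conj_unitary hu) (pow_pos one_half_pos n)
    refine ⟨w * u, ⟨mul_mem hw hu, by simpa only [star_mul, mul_assoc] using hwE⟩, ?_⟩
    rwa [← τ.twoNorm_mul_mem_unitary hu, sub_mul, one_mul] at hw_one
  obtain ⟨δ, hδ⟩ := exists_isNearlyIn (τ := τ) hp E
  obtain ⟨u₀, hu₀, -⟩ := hstep 1 (one_mem _) δ (by simpa using hδ) 0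
  choose next hnext hnext_le using fun n (u : S n) => hstep u u.2.1 _ u.2.2 (n + 1)
  let u (n : ℕ) : S n := Nat.rec ⟨u₀, hu₀⟩ (fun n u => ⟨next n u, hnext n u⟩) n
  have hle : ∀ n, τ.twoNorm ((u (n + 1)).1 - (u n).1) ≤ 2 * K * (1 / 2) ^ n := fun n => by
    refine (hnext_le n (u n)).trans ?_
    have hK : 0 ≤ K * (1 / 2) ^ n := by positivity
    rw [pow_succ]
    linarith
  obtain ⟨v, hv⟩ :=
    hτ (2 * K) (fun n => (u n).1) (fun n => norm_le_one_of_mem_unitary (u n).2.1) hle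
  exact ⟨v, mem_unitary_of_tendsto (fun n => (u n).2.1) hv, fun ε hε =>
    isNearlyIn_conj_of_tendsto (fun n => (u n).2.1) hv (fun n => (u n).2.2) hε⟩

/-- Conjugation by `v` moves `D` into the trace norm closure of a union of maximal abelian
subalgebras `E n` of the `B n`. -/
theorem exists_unitary_finiteDimensional_sup (hτ : τ.IsBallComplete) (hB : Monotone B)
    (happrox : ∀ (n : ℕ) (q : Fin n → A), IsProjPartition q → ∀ ε > 0, τ.IsNearlyIn B q ε)
    (D : StarSubalgebra ℂ A) [FiniteDimensional ℂ D] [IsMulCommutative D] :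
    ∃ v : unitary A, ∀ n,
      FiniteDimensional ℂ (B n ⊔ D.map (Unitary.conjStarAlgAut ℂ A v : A →⋆ₐ[ℂ] A) :
        StarSubalgebra ℂ A) := by
  obtain ⟨E, hE⟩ := exists_isMasaChain hB τ
  obtain ⟨k, p, hp, -, hspan⟩ := exists_isProjPartition_mem_forall_eq_sum D
  obtain ⟨v, hv, hvE⟩ := exists_unitary_forall_isNearlyIn hτ hB (happrox k) hE hp
  refine ⟨⟨v, hv⟩, hE.finiteDimensional_sup hB τ (hp.conj_unitary hv) ?_ fun j ε hε => ?_⟩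
  · rintro _ ⟨x, hx, rfl⟩
    obtain ⟨c, rfl⟩ := hspan x hx
    exact ⟨c, by simp⟩
  · obtain ⟨m, r, -, hrE, hle⟩ := hvE (ε / 2) (half_pos hε)
    refine ⟨r j, Set.mem_iUnion.mpr ⟨m, hrE j⟩, ?_⟩
    have := Finset.single_le_sum (fun i _ => apply_nonneg τ.twoNorm _) (Finset.mem_univ j)
      |>.trans hle
    linarith

theorem exists_unitary_finiteDimensional_map_sup (hτ : τ.IsBallComplete) (hB : Monotone B)
    (happrox : ∀ (n : ℕ) (q : Fin n → A), IsProjPartition q → ∀ ε > 0, τ.IsNearlyIn B q ε)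
    (D : StarSubalgebra ℂ A) [FiniteDimensional ℂ D] [IsMulCommutative D] :
    ∃ u : unitary A, ∀ n,
      FiniteDimensional ℂ ((B n).map (Unitary.conjStarAlgAut ℂ A u : A →⋆ₐ[ℂ] A) ⊔ D :
        StarSubalgebra ℂ A) := by
  obtain ⟨v, hv⟩ := exists_unitary_finiteDimensional_sup hτ hB happrox D
  refine ⟨star v, fun n => ?_⟩
  let C := B n ⊔ D.map (Unitary.conjStarAlgAut ℂ A v : A →⋆ₐ[ℂ] A)
  let φ : A →⋆ₐ[ℂ] A := (Unitary.conjStarAlgAut ℂ A v).symm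
  have : FiniteDimensional ℂ C := hv n
  have := finiteDimensional_starSubalgebra_map φ C
  rw [← Unitary.conjStarAlgAut_symm]
  exact finiteDimensional_starSubalgebra_of_le (T := C.map φ) <|
    sup_le (StarSubalgebra.map_mono le_sup_left) fun x hx =>
      ⟨_, StarSubalgebra.mem_sup_right ⟨x, hx, rfl⟩,
        (Unitary.conjStarAlgAut ℂ A v).symm_apply_apply x⟩

end Approximation

end FaithfulTrace

section WeakOperator

theorem isClosed_setOf_cauchySeq_of_equicontinuous {X α : Type*} [TopologicalSpace X]
    [PseudoMetricSpace α] {F : ℕ → X → α} (hF : Equicontinuous F) :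
    IsClosed {x | CauchySeq fun n => F n x} := by
  refine isClosed_of_closure_subset fun x hx => Metric.cauchySeq_iff'.mpr fun ε hε => ?_
  obtain ⟨y, hy, hxy⟩ := mem_closure_iff_frequently.mp hx |>.and_eventually
    (Metric.equicontinuousAt_iff_right.mp (hF x) (ε / 3) (by positivity)) |>.exists
  obtain ⟨N, hN⟩ := Metric.cauchySeq_iff'.mp hy (ε / 3) (by positivity)
  refine ⟨N, fun n hn => (dist_triangle4 _ (F n y) (F N y) _).trans_lt ?_⟩
  have := hxy N
  rw [dist_comm] at this
  linarith [hxy n, hN n hn]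

variable {H : Type*} [NormedAddCommGroup H] [InnerProductSpace ℂ H]

/-- Convergence of a sequence in the weak operator topology. -/
def WeaklyTendsto (x : ℕ → H →L[ℂ] H) (y : H →L[ℂ] H) : Prop :=
  ∀ ξ η : H, Tendsto (fun n => ⟪ξ, x n η⟫_ℂ) atTop (𝓝 ⟪ξ, y η⟫_ℂ)

theorem norm_inner_apply_le_of_norm_le_one {x : H →L[ℂ] H} (hx : ‖x‖ ≤ 1) (ξ η : H) :
    ‖⟪ξ, x η⟫_ℂ‖ ≤ ‖ξ‖ * ‖η‖ :=
  (norm_inner_le_norm _ _).trans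
    (mul_le_mul_of_nonneg_left (by simpa using x.le_of_opNorm_le hx η) (norm_nonneg _))

section BoundedSequence

variable {x : ℕ → H →L[ℂ] H} (hx : ∀ n, ‖x n‖ ≤ 1)
include hx

theorem equicontinuous_inner_apply (ξ : H) : Equicontinuous fun n η => ⟪ξ, x n η⟫_ℂ :=
  (LipschitzWith.uniformEquicontinuous _ ‖ξ‖₊ fun n => LipschitzWith.of_dist_le_mul fun η η' => by
    rw [dist_eq_norm, dist_eq_norm, ← inner_sub_right, ← map_sub]
    exact norm_inner_apply_le_of_norm_le_one (hx n) _ _).equicontinuous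

theorem equicontinuous_inner_apply_left (η : H) : Equicontinuous fun n ξ => ⟪ξ, x n η⟫_ℂ :=
  (LipschitzWith.uniformEquicontinuous _ ‖η‖₊ fun n => LipschitzWith.of_dist_le_mul fun ξ ξ' => by
    rw [dist_eq_norm, dist_eq_norm, ← inner_sub_left, mul_comm]
    exact norm_inner_apply_le_of_norm_le_one (hx n) _ _).equicontinuous

theorem exists_strictMono_cauchySeq_inner [TopologicalSpace.SeparableSpace H] :
    ∃ φ : ℕ → ℕ, StrictMono φ ∧ ∀ ξ η, CauchySeq fun n => ⟪ξ, x (φ n) η⟫_ℂ := by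
  let e := TopologicalSpace.denseSeq H
  have he := TopologicalSpace.denseRange_denseSeq H
  have hcpt : IsCompact (Set.univ.pi fun t : ℕ × ℕ =>
      Metric.closedBall (0 : ℂ) (‖e t.1‖ * ‖e t.2‖)) :=
    isCompact_univ_pi fun t => isCompact_closedBall _ _
  obtain ⟨L, -, φ, hφ, hL⟩ := hcpt.tendsto_subseq
    (x := fun n t => ⟪e t.1, x n (e t.2)⟫_ℂ) fun n t _ => by
      simpa using norm_inner_apply_le_of_norm_le_one (hx n) (e t.1) (e t.2)
  have hdense : ∀ i j, CauchySeq fun n => ⟪e i, x (φ n) (e j)⟫_ℂ := fun i j =>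
    (tendsto_pi_nhds.mp hL (i, j)).cauchySeq
  have hright : ∀ i η, CauchySeq fun n => ⟪e i, x (φ n) η⟫_ℂ := fun i η =>
    he.induction_on η (isClosed_setOf_cauchySeq_of_equicontinuous
      (equicontinuous_inner_apply (fun n => hx (φ n)) (e i))) (hdense i)
  exact ⟨φ, hφ, fun ξ η => he.induction_on ξ (isClosed_setOf_cauchySeq_of_equicontinuous
    (equicontinuous_inner_apply_left (fun n => hx (φ n)) η)) fun i => hright i η⟩

variable [CompleteSpace H]

theorem exists_weaklyTendsto_of_cauchySeq_inner
    (hc : ∀ ξ η, CauchySeq fun n => ⟪ξ, x n η⟫_ℂ) : ∃ y, WeaklyTendsto x y := by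
  choose L hL using fun ξ η => cauchySeq_tendsto_of_complete (hc ξ η)
  let form : H →ₗ⋆[ℂ] H →ₗ[ℂ] ℂ := LinearMap.mk₂'ₛₗ (starRingEnd ℂ) (RingHom.id ℂ) L
    (fun ξ ξ' η => tendsto_nhds_unique (hL _ _)
      (((hL ξ η).add (hL ξ' η)).congr fun n => (inner_add_left _ _ _).symm))
    (fun c ξ η => tendsto_nhds_unique (hL _ _)
      (((hL ξ η).const_mul _).congr fun n => (inner_smul_left _ _ _).symm))
    (fun ξ η η' => tendsto_nhds_unique (hL _ _)
      (((hL ξ η).add (hL ξ η')).congr fun n => by rw [map_add, inner_add_right]))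
    (fun c ξ η => tendsto_nhds_unique (hL _ _)
      (((hL ξ η).const_mul c).congr fun n => by rw [map_smul, inner_smul_right]))
  have hform : ∀ ξ η, ‖form ξ η‖ ≤ 1 * ‖ξ‖ * ‖η‖ := fun ξ η => by
    rw [one_mul]
    exact le_of_tendsto' (hL ξ η).norm fun n => norm_inner_apply_le_of_norm_le_one (hx n) _ _
  let z := InnerProductSpace.continuousLinearMapOfBilin (form.mkContinuous₂ 1 hform)
  have hz : ∀ ξ η, ⟪ξ, ContinuousLinearMap.adjoint z η⟫_ℂ = L ξ η := fun ξ η => by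
    rw [ContinuousLinearMap.adjoint_inner_right]
    exact InnerProductSpace.continuousLinearMapOfBilin_apply _ _ _
  exact ⟨ContinuousLinearMap.adjoint z, fun ξ η => by simpa only [hz] using hL ξ η⟩

theorem exists_strictMono_weaklyTendsto [TopologicalSpace.SeparableSpace H] :
    ∃ (y : H →L[ℂ] H) (φ : ℕ → ℕ), StrictMono φ ∧ WeaklyTendsto (fun n => x (φ n)) y := by
  obtain ⟨φ, hφ, hc⟩ := exists_strictMono_cauchySeq_inner hx
  obtain ⟨y, hy⟩ := exists_weaklyTendsto_of_cauchySeq_inner (fun n => hx (φ n)) hc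
  exact ⟨y, φ, hφ, hy⟩

end BoundedSequence

namespace WeaklyTendsto

variable {x : ℕ → H →L[ℂ] H} {y : H →L[ℂ] H} (h : WeaklyTendsto x y)
include h

theorem const_smul (c : ℂ) : WeaklyTendsto (fun n => c • x n) (c • y) := fun ξ η => by
  simpa only [smul_apply, inner_smul_right] using (h ξ η).const_mul c

theorem const_sub (a : H →L[ℂ] H) : WeaklyTendsto (fun n => a - x n) (a - y) := fun ξ η => by
  simpa only [sub_apply, inner_sub_right] using (h ξ η).const_sub _

theorem mul_const (a : H →L[ℂ] H) : WeaklyTendsto (fun n => x n * a) (y * a) :=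
  fun ξ η => h ξ (a η)

theorem unique {z : H →L[ℂ] H} (h' : WeaklyTendsto x z) : y = z :=
  ContinuousLinearMap.ext fun η => ext_inner_left ℂ fun ξ => tendsto_nhds_unique (h ξ η) (h' ξ η)

variable [CompleteSpace H]

theorem const_mul (a : H →L[ℂ] H) : WeaklyTendsto (fun n => a * x n) (a * y) := fun ξ η => by
  simpa only [mul_apply_eq_comp, ContinuousLinearMap.star_eq_adjoint,
    ContinuousLinearMap.adjoint_inner_left] using h (star a ξ) η

theorem mem {M : VonNeumannAlgebra H} (hx : ∀ n, x n ∈ M) : y ∈ M := by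
  rw [← M.commutant_commutant, VonNeumannAlgebra.mem_commutant_iff]
  intro g hg
  rw [VonNeumannAlgebra.mem_commutant_iff] at hg
  refine (h.const_mul g).unique ?_
  simpa only [← hg _ (hx _)] using h.mul_const g

end WeaklyTendsto

variable [CompleteSpace H]

theorem isClosed_vonNeumannAlgebra (M : VonNeumannAlgebra H) :
    IsClosed (M.toStarSubalgebra : Set (H →L[ℂ] H)) := by
  refine IsSeqClosed.isClosed fun x y hx hxy => ?_
  refine WeaklyTendsto.mem (M := M) (x := x) (fun ξ η => ?_) hx
  exact tendsto_const_nhds.inner (((ContinuousLinearMap.apply ℂ H η).continuous.tendsto y).comp hxy)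

end WeakOperator

section NormalTrace

variable {H : Type*} [NormedAddCommGroup H] [InnerProductSpace ℂ H] [CompleteSpace H]
  {M : VonNeumannAlgebra H}

noncomputable instance (M : VonNeumannAlgebra H) : CStarAlgebra M.toStarSubalgebra :=
  StarSubalgebra.cstarAlgebra _ (h_closed := isClosed_vonNeumannAlgebra M)

namespace FaithfulTrace

/-- Normality, expressed as weak sequential continuity on the unit ball. -/
def IsNormal (τ : FaithfulTrace M.toStarSubalgebra) : Prop :=
  ∀ (x : ℕ → M.toStarSubalgebra) (y : M.toStarSubalgebra), (∀ n, ‖x n‖ ≤ 1) →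
    WeaklyTendsto (fun n => (x n : H →L[ℂ] H)) y → Tendsto (fun n => τ (x n)) atTop (𝓝 (τ y))

variable {τ : FaithfulTrace M.toStarSubalgebra} {x : ℕ → M.toStarSubalgebra} {C : ℝ}

theorem IsNormal.tendsto (hτ : τ.IsNormal) (hx : ∀ n, ‖x n‖ ≤ C) {y : M.toStarSubalgebra}
    (h : WeaklyTendsto (fun n => (x n : H →L[ℂ] H)) y) :
    Tendsto (fun n => τ (x n)) atTop (𝓝 (τ y)) := by
  obtain ⟨c, hc, hCc⟩ : ∃ c : ℝ, 0 < c ∧ C ≤ c := ⟨max C 1, by simp, le_max_left _ _⟩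
  have hscale : Tendsto (fun n => τ ((c : ℂ)⁻¹ • x n)) atTop (𝓝 (τ ((c : ℂ)⁻¹ • y))) := by
    refine hτ _ _ (fun n => ?_) (h.const_smul (c : ℂ)⁻¹)
    rw [norm_smul, norm_inv, Complex.norm_of_nonneg hc.le, inv_mul_le_iff₀ hc, mul_one]
    exact (hx n).trans hCc
  simpa [hc.ne'] using hscale.const_mul (c : ℂ)

theorem IsNormal.twoNorm_le_of_weaklyTendsto (hτ : τ.IsNormal) (hx : ∀ n, ‖x n‖ ≤ C)
    {y : M.toStarSubalgebra} (h : WeaklyTendsto (fun n => (x n : H →L[ℂ] H)) y) {c : ℝ}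
    (hc : ∀ᶠ n in atTop, τ.twoNorm (x n) ≤ c) : τ.twoNorm y ≤ c := by
  obtain ⟨k, hk⟩ := hc.exists
  have hlim : Tendsto (fun n => (τ (star y * x n)).re) atTop (𝓝 (τ.twoNorm y ^ 2)) := by
    rw [twoNorm_sq]
    refine (Complex.continuous_re.tendsto _).comp
      (hτ.tendsto (C := ‖star y‖ * C) (fun n => ?_) (h.const_mul _))
    exact (norm_mul_le _ _).trans (mul_le_mul_of_nonneg_left (hx n) (norm_nonneg _))
  have hle : τ.twoNorm y ^ 2 ≤ τ.twoNorm y * c := le_of_tendsto hlim <| hc.mono fun n hn =>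
    (Complex.re_le_norm _).trans ((τ.norm_map_star_mul_le y (x n)).trans
      (mul_le_mul_of_nonneg_left hn (apply_nonneg _ _)))
  nlinarith [apply_nonneg τ.twoNorm y, (apply_nonneg τ.twoNorm (x k)).trans hk]

theorem IsNormal.tendsto_twoNorm_zero (hτ : τ.IsNormal) (hx : ∀ n, ‖x n‖ ≤ C)
    (h : ∀ ξ, Tendsto (fun n => (x n : H →L[ℂ] H) ξ) atTop (𝓝 0)) :
    Tendsto (fun n => τ.twoNorm (x n)) atTop (𝓝 0) := by
  have hlim : Tendsto (fun n => τ (star (x n) * x n)) atTop (𝓝 (τ 0)) := by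
    refine hτ.tendsto (C := C * C) (fun n => ?_) fun ξ η => ?_
    · refine (norm_mul_le _ _).trans ?_
      rw [norm_star]
      exact mul_self_le_mul_self (norm_nonneg _) (hx n)
    · simpa [ContinuousLinearMap.star_eq_adjoint, ContinuousLinearMap.adjoint_inner_right] using
        (h ξ).inner (𝕜 := ℂ) (h η)
  have hsq : Tendsto (fun n => τ.twoNorm (x n) ^ 2) atTop (𝓝 0) := by
    simpa [twoNorm_sq, Function.comp_def] using (Complex.continuous_re.tendsto _).comp hlim
  simpa [Real.sqrt_sq (apply_nonneg τ.twoNorm _)] using hsq.sqrt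

end FaithfulTrace

theorem map_sub_le_of_map_sub_succ_le {E : Type*} [AddCommGroup E] [Module ℂ E]
    (p : Seminorm ℂ E) {x : ℕ → E} {C : ℝ} (h : ∀ n, p (x (n + 1) - x n) ≤ C * (1 / 2) ^ n)
    {n m : ℕ} (hnm : n ≤ m) : p (x n - x m) ≤ 2 * C * (1 / 2) ^ n := by
  suffices hsharp : p (x n - x m) ≤ 2 * C * ((1 / 2) ^ n - (1 / 2) ^ m) by
    have hC : 0 ≤ C := by simpa using (apply_nonneg p _).trans (h 0)
    have : 0 ≤ C * (1 / 2) ^ m := by positivity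
    linarith
  induction m, hnm using Nat.le_induction with
  | base => simp
  | succ m _ ih =>
    have htri := le_map_sub_add_map_sub p (x n) (x m) (x (m + 1))
    rw [map_sub_rev p (x m)] at htri
    rw [pow_succ]
    linarith [h m]

theorem FaithfulTrace.IsNormal.isBallComplete [TopologicalSpace.SeparableSpace H]
    {τ : FaithfulTrace M.toStarSubalgebra} (hτ : τ.IsNormal) : τ.IsBallComplete := by
  intro C x hx hC
  obtain ⟨y, φ, hφ, hy⟩ :=
    exists_strictMono_weaklyTendsto (x := fun n => (x n : H →L[ℂ] H)) hx
  refine ⟨⟨y, hy.mem (M := M) fun n => (x (φ n)).2⟩, ?_⟩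
  have hlim : Tendsto (fun n : ℕ => 2 * C * (1 / 2) ^ n) atTop (𝓝 0) := by
    simpa using (tendsto_pow_atTop_nhds_zero_of_lt_one (r := (1 / 2 : ℝ))
      (by norm_num) (by norm_num)).const_mul (2 * C)
  refine squeeze_zero (fun n => apply_nonneg _ _) (fun n => ?_) hlim
  refine hτ.twoNorm_le_of_weaklyTendsto (x := fun m => x n - x (φ m)) (C := 2) (fun m => ?_)
    (hy.const_sub (x n : H →L[ℂ] H)) ?_
  · exact (norm_sub_le _ _).trans (by linarith [hx n, hx (φ m)])
  · filter_upwards [eventually_ge_atTop n] with m hm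
    exact map_sub_le_of_map_sub_succ_le _ hC (hm.trans (hφ.id_le m))

end NormalTrace

section StrongDensity

variable {H : Type*} [NormedAddCommGroup H] [InnerProductSpace ℂ H] [CompleteSpace H]

/-- The union of the algebras `B n` is dense in a set containing `S` for the strong operator
topology. -/
def IsStronglyDense (B : ℕ → StarSubalgebra ℂ (H →L[ℂ] H)) (S : Set (H →L[ℂ] H)) : Prop :=
  ∀ x ∈ S, ∀ s : Finset H, ∀ ε : ℝ, 0 < ε → ∃ n, ∃ a ∈ B n, ∀ ξ ∈ s, ‖(a - x) ξ‖ < ε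

variable {B : ℕ → StarSubalgebra ℂ (H →L[ℂ] H)} {S : Set (H →L[ℂ] H)}

open scoped ComplexStarModule in
theorem norm_inner_realPart_apply_le (x : H →L[ℂ] H) (η ξ : H) :
    ‖⟪η, (ℜ x : H →L[ℂ] H) ξ⟫_ℂ‖ ≤ ‖η‖ * ‖x ξ‖ + ‖x η‖ * ‖ξ‖ := by
  have h : ⟪η, (ℜ x : H →L[ℂ] H) ξ⟫_ℂ = (2⁻¹ : ℂ) * (⟪η, x ξ⟫_ℂ + ⟪x η, ξ⟫_ℂ) := by
    rw [realPart_apply_coe, ContinuousLinearMap.star_eq_adjoint, ← Complex.coe_smul, smul_apply,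
      add_apply, inner_smul_right, inner_add_right, ContinuousLinearMap.adjoint_inner_right]
    simp
  calc ‖⟪η, (ℜ x : H →L[ℂ] H) ξ⟫_ℂ‖ ≤ ‖⟪η, x ξ⟫_ℂ + ⟪x η, ξ⟫_ℂ‖ := by
        rw [h, norm_mul]
        exact mul_le_of_le_one_left (norm_nonneg _) (by norm_num)
    _ ≤ ‖η‖ * ‖x ξ‖ + ‖x η‖ * ‖ξ‖ :=
        norm_add_le_of_le (norm_inner_le_norm _ _) (norm_inner_le_norm _ _)

/-- The values on a finite family of vectors of the self-adjoint elements of an increasing union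
of algebras. -/
def selfAdjointValues {ι : Type*} (hB : Monotone B) (ξ : ι → H) :
    Submodule ℝ (PiLp 2 fun _ : ι => H) where
  carrier := {v | ∃ n, ∃ b ∈ B n, IsSelfAdjoint b ∧ ∀ i, v i = b (ξ i)}
  zero_mem' := ⟨0, 0, zero_mem _, IsSelfAdjoint.zero _, fun i => by simp⟩
  add_mem' := by
    rintro v w ⟨n, b, hb, hbs, hv⟩ ⟨m, c, hc, hcs, hw⟩
    exact ⟨max n m, b + c, add_mem (hB (le_max_left _ _) hb) (hB (le_max_right _ _) hc),
      hbs.add hcs, fun i => by simp [hv, hw]⟩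
  smul_mem' := by
    rintro r v ⟨n, b, hb, hbs, hv⟩
    exact ⟨n, (r : ℂ) • b, (B n).smul_mem hb _, IsSelfAdjoint.smul (Complex.conj_ofReal r) hbs,
      fun i => by simp [hv]⟩

open scoped ComplexStarModule in
/-- Taking adjoints is not strongly continuous, but `a ↦ ℜ a` is weakly continuous, and a subspace
of a finite sum of copies of `H` has the same weak and norm closure. -/
theorem IsStronglyDense.mem_closure_selfAdjointValues {ι : Type*} [Finite ι]
    (hd : IsStronglyDense B S) (hB : Monotone B) {d : H →L[ℂ] H} (hdS : d ∈ S)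
    (hds : IsSelfAdjoint d) (ξ : ι → H) :
    WithLp.toLp 2 (fun i => d (ξ i)) ∈ closure (selfAdjointValues hB ξ : Set _) := by
  classical
  have := Fintype.ofFinite ι
  let _ : InnerProductSpace ℝ H := InnerProductSpace.complexToReal
  let v : PiLp 2 fun _ : ι => H := WithLp.toLp 2 fun i => d (ξ i)
  rw [← Submodule.topologicalClosure_coe, ← Submodule.orthogonal_orthogonal_eq_closure,
    SetLike.mem_coe, Submodule.mem_orthogonal]
  intro η hη
  rw [Submodule.mem_orthogonal'] at hη
  refine norm_le_zero_iff.mp (le_of_forall_pos_lt_add fun δ hδ => ?_)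
  obtain ⟨K, hK⟩ : ∃ K : ℝ, K = ∑ i, (‖η i‖ + ‖ξ i‖) := ⟨_, rfl⟩
  have hK_nonneg : 0 ≤ K := hK ▸ by positivity
  obtain ⟨n, a, ha, hclose⟩ := hd d hdS (Finset.univ.image ξ ∪ Finset.univ.image fun i => η i)
    (δ / (K + 1)) (by positivity)
  have hmem : (ℜ a : H →L[ℂ] H) ∈ B n := by
    rw [realPart_apply_coe, ← Complex.coe_smul]
    exact (B n).smul_mem (add_mem ha (star_mem ha)) _
  let w : PiLp 2 fun _ : ι => H := WithLp.toLp 2 fun i => (ℜ a : H →L[ℂ] H) (ξ i)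
  have hw : ⟪η, w⟫_ℝ = 0 := hη w ⟨n, ℜ a, hmem, (ℜ a).2, fun i => rfl⟩
  have hterm : ∀ i, ‖⟪η i, (w - v) i⟫_ℝ‖ ≤ δ / (K + 1) * (‖η i‖ + ‖ξ i‖) := fun i => by
    have hwv : (w - v) i = (ℜ (a - d) : H →L[ℂ] H) (ξ i) := by simp [w, v, hds.coe_realPart]
    have hi := (hclose (ξ i) (by simp)).le
    have hη := (hclose (η i) (by simp)).le
    calc ‖⟪η i, (w - v) i⟫_ℝ‖ ≤ ‖⟪η i, (w - v) i⟫_ℂ‖ := Complex.abs_re_le_norm _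
      _ ≤ ‖η i‖ * ‖(a - d) (ξ i)‖ + ‖(a - d) (η i)‖ * ‖ξ i‖ := by
          rw [hwv]
          exact norm_inner_realPart_apply_le _ _ _
      _ ≤ ‖η i‖ * (δ / (K + 1)) + δ / (K + 1) * ‖ξ i‖ := by gcongr
      _ = δ / (K + 1) * (‖η i‖ + ‖ξ i‖) := by ring
  calc ‖⟪η, v⟫_ℝ‖ = ‖⟪η, w - v⟫_ℝ‖ := by rw [inner_sub_right, hw, zero_sub, norm_neg]
    _ ≤ ∑ i, δ / (K + 1) * (‖η i‖ + ‖ξ i‖) := by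
        rw [PiLp.inner_apply]
        exact norm_sum_le_of_le _ fun i _ => hterm i
    _ = δ * (K / (K + 1)) := by rw [← Finset.mul_sum, ← hK]; ring
    _ < 0 + δ := by
        rw [zero_add]
        exact mul_lt_of_lt_one_right hδ ((div_lt_one (by positivity)).mpr (lt_add_one K))

theorem IsStronglyDense.exists_isSelfAdjoint (hd : IsStronglyDense B S) (hB : Monotone B)
    {d : H →L[ℂ] H} (hdS : d ∈ S) (hds : IsSelfAdjoint d) (s : Finset H) {ε : ℝ} (hε : 0 < ε) :
    ∃ n, ∃ b ∈ B n, IsSelfAdjoint b ∧ ∀ ξ ∈ s, ‖(b - d) ξ‖ < ε := by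
  obtain ⟨w, ⟨n, b, hb, hbs, hw⟩, hvw⟩ := Metric.mem_closure_iff.mp
    (hd.mem_closure_selfAdjointValues hB hdS hds fun ξ : s => (ξ : H)) ε hε
  refine ⟨n, b, hb, hbs, fun ξ hξ => ?_⟩
  rw [dist_comm, dist_eq_norm] at hvw
  simpa [hw] using (PiLp.norm_apply_le _ ⟨ξ, hξ⟩).trans_lt hvw

theorem IsStronglyDense.conj_unitary (hd : IsStronglyDense B S) {u : H →L[ℂ] H}
    (hu : u ∈ unitary (H →L[ℂ] H)) {A : ℕ → StarSubalgebra ℂ (H →L[ℂ] H)} {T : Set (H →L[ℂ] H)}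
    (hA : ∀ n, ∀ b ∈ B n, u * b * star u ∈ A n) (hT : ∀ x ∈ T, star u * x * u ∈ S) :
    IsStronglyDense A T := by
  classical
  intro x hx s ε hε
  obtain ⟨n, b, hb, hclose⟩ := hd _ (hT x hx) (s.image (star u : H →L[ℂ] H)) ε hε
  refine ⟨n, _, hA n b hb, fun ξ hξ => ?_⟩
  convert hclose _ (Finset.mem_image_of_mem _ hξ) using 1
  have hx : x = u * (star u * x * u) * star u := by
    simp only [mul_assoc, Unitary.mul_star_self_of_mem hu, mul_one]
    rw [← mul_assoc, Unitary.mul_star_self_of_mem hu, one_mul]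
  conv_lhs => rw [hx, ← sub_mul, ← mul_sub, mul_assoc]
  exact Unitary.norm_map ⟨u, hu⟩ _

end StrongDensity

section StrongApproximation

variable {H : Type*} [NormedAddCommGroup H] [InnerProductSpace ℂ H]

theorem tendsto_apply_zero_of_denseRange {ι : Type*} {x : ℕ → H →L[ℂ] H} {C : NNReal}
    (hx : ∀ n, ‖x n‖ ≤ C) {e : ι → H} (he : DenseRange e)
    (h : ∀ i, Tendsto (fun n => x n (e i)) atTop (𝓝 0)) (ξ : H) :
    Tendsto (fun n => x n ξ) atTop (𝓝 0) :=
  he.induction_on (p := fun ξ => Tendsto (fun n => x n ξ) atTop (𝓝 0)) ξ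
    ((LipschitzWith.uniformEquicontinuous (fun n ξ => x n ξ) C fun n =>
      (x n).lipschitzWith_of_opNorm_le (hx n)).equicontinuous.isClosed_setOfPred_tendsto
        continuous_const) h

variable [CompleteSpace H]

namespace IsProjPartition

variable {ι κ : Type*} [Fintype ι] [Fintype κ] {e : ι → H →L[ℂ] H} (he : IsProjPartition e)
include he

theorem norm_sum_smul_apply_sq (c : ι → ℂ) (v : H) :
    ‖(∑ i, c i • e i) v‖ ^ 2 = ∑ i, ‖c i‖ ^ 2 * ‖e i v‖ ^ 2 := by
  have h : star (∑ i, c i • e i) * (∑ i, c i • e i) =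
      ∑ i, ((‖c i‖ ^ 2 : ℝ) : ℂ) • (star (e i) * e i) := by
    rw [he.star_sum_smul, he.sum_smul_mul_sum_smul]
    refine Finset.sum_congr rfl fun i _ => ?_
    rw [(he.isSelfAdjoint i).star_eq, (he.idem i).eq, RCLike.star_def, Complex.conj_mul',
      Complex.ofReal_pow]
  have hsq (x : H →L[ℂ] H) : ‖x v‖ ^ 2 = (⟪v, (star x * x) v⟫_ℂ).re :=
    x.apply_norm_sq_eq_inner_adjoint_right v
  rw [hsq, h]
  simp only [hsq, sum_apply, smul_apply, inner_sum, inner_smul_right, Complex.re_sum,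
    Complex.re_ofReal_mul]

theorem norm_sum_apply_le (t : Finset ι) {l : ι → ℂ} {m : ℂ} (h : ∀ i ∈ t, 1 ≤ 2 * ‖l i - m‖)
    (v : H) : ‖(∑ i ∈ t, e i) v‖ ≤ 2 * ‖(∑ i, l i • e i) v - m • v‖ := by
  classical
  have ht : ∑ i ∈ t, e i = ∑ i, (if i ∈ t then (1 : ℂ) else 0) • e i := by simp
  have hm : (∑ i, l i • e i) v - m • v = (∑ i, (l i - m) • e i) v := by
    simp only [sub_smul, Finset.sum_sub_distrib, ← Finset.smul_sum, he.complete]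
    simp
  rw [← sq_le_sq₀ (norm_nonneg _) (by positivity), mul_pow, ht, hm, he.norm_sum_smul_apply_sq,
    he.norm_sum_smul_apply_sq, Finset.mul_sum]
  refine Finset.sum_le_sum fun i _ => ?_
  have hi : ‖(if i ∈ t then (1 : ℂ) else 0)‖ ≤ 2 * ‖l i - m‖ := by
    split_ifs with hi
    · simpa using h i hi
    · simp
  rw [← mul_assoc, ← mul_pow 2]
  exact mul_le_mul_of_nonneg_right (pow_le_pow_left₀ (norm_nonneg _) hi 2) (sq_nonneg _)

theorem norm_sub_apply_le {f : ι → H →L[ℂ] H} (hf : IsProjPartition f) {ξ : H} {δ : ℝ}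
    (h : ∀ j k, j ≠ k → ‖e j (f k ξ)‖ ≤ δ) (hδ : 0 ≤ δ) (j : ι) :
    ‖(e j - f j) ξ‖ ≤ 2 * Fintype.card ι * δ := by
  rw [sub_apply_eq_sum hf he, sum_apply]
  suffices hk : ∀ k ∈ Finset.univ, ‖(e j * f k - e k * f j) ξ‖ ≤ 2 * δ from
    (norm_sum_le_of_le _ hk).trans_eq (by simp; ring)
  intro k _
  rcases eq_or_ne j k with rfl | hjk
  · simpa using hδ
  · calc ‖(e j * f k - e k * f j) ξ‖ ≤ ‖e j (f k ξ)‖ + ‖e k (f j ξ)‖ := norm_sub_le _ _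
      _ ≤ 2 * δ := by linarith [h j k hjk, h k j hjk.symm]

end IsProjPartition

theorem exists_forall_ne_one_le_two_mul_norm_sub {κ E : Type*} [Finite κ] [Nonempty κ]
    [SeminormedAddCommGroup E] {m : κ → E} (hm : Pairwise fun j k => 1 ≤ ‖m j - m k‖) (l : E) :
    ∃ j, ∀ k, j ≠ k → 1 ≤ 2 * ‖l - m k‖ := by
  obtain ⟨j, hj⟩ := Finite.exists_min fun j => ‖l - m j‖
  refine ⟨j, fun k hjk => ?_⟩
  have htri := norm_sub_le_norm_sub_add_norm_sub (m j) l (m k)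
  rw [norm_sub_rev (m j) l] at htri
  linarith [hj k, hm hjk]

variable {B : ℕ → StarSubalgebra ℂ (H →L[ℂ] H)} {N : StarSubalgebra ℂ (H →L[ℂ] H)}

/-- Encode `p` by the self-adjoint operator `∑ m j • p j` with separated labels `m j`; the spectral
projections of an approximating operator, grouped by nearest label, approximate `p`. -/
theorem IsStronglyDense.exists_isProjPartition_norm_sub_apply_lt {ι : Type*} [Fintype ι]
    [∀ n, FiniteDimensional ℂ (B n)] (hd : IsStronglyDense B N) (hB : Monotone B)
    {p : ι → H →L[ℂ] H} (hp : IsProjPartition p) (hpN : ∀ j, p j ∈ N) (s : Finset H) {ε : ℝ}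
    (hε : 0 < ε) : ∃ n, ∃ q : ι → H →L[ℂ] H, IsProjPartition q ∧ (∀ j, q j ∈ B n) ∧
      ∀ j, ∀ ξ ∈ s, ‖(q j - p j) ξ‖ < ε := by
  classical
  rcases isEmpty_or_nonempty ι with hι | hι
  · exact ⟨0, p, hp, isEmptyElim, isEmptyElim⟩
  obtain ⟨m, hm, -⟩ := exists_pairwise_one_le_norm_sub ι
  let δ := ε / (4 * (Fintype.card ι + 1))
  have hδ : 0 < δ := by positivity
  obtain ⟨n, b, hb, hbs, hclose⟩ := hd.exists_isSelfAdjoint hB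
    (sum_mem fun j _ => N.smul_mem (hpN j) (m j : ℂ)) (hp.isSelfAdjoint_sum_smul m)
    (Finset.univ.biUnion fun j => s.image (p j)) hδ
  obtain ⟨k, f, l, hf, hbf⟩ :=
    exists_isProjPartition_eq_sum_of_isSelfAdjoint (A := B n) (y := ⟨b, hb⟩) (Subtype.ext hbs)
  have he : IsProjPartition fun i => (f i : H →L[ℂ] H) := hf.map (B n).subtype
  have hbe : b = ∑ i, (l i : ℂ) • (f i : H →L[ℂ] H) := by
    simpa using congrArg (B n).subtype hbf
  choose g hg using fun i => exists_forall_ne_one_le_two_mul_norm_sub hm (l i : ℂ)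
  have off_diagonal : ∀ ξ ∈ s, ∀ i j, i ≠ j →
      ‖(∑ t with g t = i, (f t : H →L[ℂ] H)) (p j ξ)‖ ≤ 2 * δ := fun ξ hξ i j hij => by
    have hclose_j := hclose (p j ξ)
      (Finset.mem_biUnion.mpr ⟨j, Finset.mem_univ _, Finset.mem_image_of_mem _ hξ⟩)
    have hlabel : (∑ j, (m j : ℂ) • p j) (p j ξ) = (m j : ℂ) • p j ξ :=
      congrArg (fun T : H →L[ℂ] H => T ξ) (hp.sum_smul_mul _ j)
    rw [sub_apply, hlabel, hbe] at hclose_j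
    refine (he.norm_sum_apply_le _ (fun t ht => hg t j ?_) _).trans
      (mul_le_mul_of_nonneg_left hclose_j.le zero_le_two)
    rwa [(Finset.mem_filter.mp ht).2]
  refine ⟨n, _, he.sum_fiber g, fun j => sum_mem fun i _ => (f i).2, fun j ξ hξ => ?_⟩
  refine ((he.sum_fiber g).norm_sub_apply_le hp (off_diagonal ξ hξ) (by positivity) j).trans_lt ?_
  calc 2 * Fintype.card ι * (2 * δ) = ε * (Fintype.card ι / (Fintype.card ι + 1)) := by
        simp only [δ]; field_simp; ring
    _ < ε := mul_lt_of_lt_one_right hε ((div_lt_one (by positivity)).mpr (lt_add_one _))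

theorem FaithfulTrace.IsNormal.isNearlyIn [TopologicalSpace.SeparableSpace H]
    {M : VonNeumannAlgebra H} {τ : FaithfulTrace M.toStarSubalgebra} (hτ : τ.IsNormal)
    [∀ n, FiniteDimensional ℂ (B n)] (hd : IsStronglyDense B M.toStarSubalgebra) (hB : Monotone B)
    (hBM : ∀ n, B n ≤ M.toStarSubalgebra) {ι : Type*} [Fintype ι] {p : ι → M.toStarSubalgebra}
    (hp : IsProjPartition p) {ε : ℝ} (hε : 0 < ε) :
    τ.IsNearlyIn (fun n => (B n).comap M.toStarSubalgebra.subtype) p ε := by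
  classical
  let e := TopologicalSpace.denseSeq H
  choose n q hq hqB hclose using fun k : ℕ => hd.exists_isProjPartition_norm_sub_apply_lt hB
    (hp.map M.toStarSubalgebra.subtype) (fun j => (p j).2) ((Finset.range (k + 1)).image e)
    (ε := 1 / ((k : ℝ) + 1)) Nat.one_div_pos_of_nat
  let r (k : ℕ) (j : ι) : M.toStarSubalgebra := ⟨q k j, hBM _ (hqB k j)⟩
  have hr (k : ℕ) : IsProjPartition (r k) :=
    .of_map (φ := M.toStarSubalgebra.subtype) Subtype.val_injective (hq k)
  have hbound : ∀ j k, ‖p j - r k j‖ ≤ 2 := fun j k => (norm_sub_le _ _).trans <| by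
    linarith [(hp.isStarProjection j).norm_le, ((hr k).isStarProjection j).norm_le]
  have hstrong (j : ι) (ξ : H) :
      Tendsto (fun k => ((p j - r k j : M.toStarSubalgebra) : H →L[ℂ] H) ξ) atTop (𝓝 0) := by
    refine tendsto_apply_zero_of_denseRange (C := 2) (hbound j)
      (TopologicalSpace.denseRange_denseSeq H) (fun i => ?_) ξ
    refine squeeze_zero_norm' ?_ tendsto_one_div_add_atTop_nhds_zero_nat
    filter_upwards [eventually_ge_atTop i] with k hk
    rw [← norm_neg]
    simpa [r] using
      (hclose k j _ (Finset.mem_image_of_mem _ (Finset.mem_range_succ_iff.mpr hk))).le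
  have hlim : Tendsto (fun k => ∑ j, τ.twoNorm (p j - r k j)) atTop (𝓝 0) := by
    simpa using tendsto_finsetSum Finset.univ fun j _ =>
      hτ.tendsto_twoNorm_zero (hbound j) (hstrong j)
  obtain ⟨k, hk⟩ := (hlim.eventually_le_const hε).exists
  exact ⟨n k, r k, hr k, hqB k, hk⟩

end StrongApproximation

section Hyperfinite

variable {H : Type*} [NormedAddCommGroup H] [InnerProductSpace ℂ H] [CompleteSpace H]
  {M : VonNeumannAlgebra H} {B : ℕ → StarSubalgebra ℂ (H →L[ℂ] H)}

theorem FaithfulTrace.IsNormal.exists_monotone_finiteDimensional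
    [TopologicalSpace.SeparableSpace H] {τ : FaithfulTrace M.toStarSubalgebra} (hτ : τ.IsNormal)
    [∀ n, FiniteDimensional ℂ (B n)] (hd : IsStronglyDense B M.toStarSubalgebra) (hB : Monotone B)
    (hBM : ∀ n, B n ≤ M.toStarSubalgebra) {D : StarSubalgebra ℂ (H →L[ℂ] H)}
    (hDM : D ≤ M.toStarSubalgebra) [FiniteDimensional ℂ D] [IsMulCommutative D] :
    ∃ A : ℕ → StarSubalgebra ℂ (H →L[ℂ] H), Monotone A ∧ (∀ n, A n ≤ M.toStarSubalgebra) ∧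
      (∀ n, FiniteDimensional ℂ (A n)) ∧ (∀ n, D ≤ A n) ∧
      IsStronglyDense A M.toStarSubalgebra := by
  let val := M.toStarSubalgebra.subtype
  have hval : Function.Injective val := Subtype.val_injective
  have hB' : Monotone fun n => (B n).comap val := fun n m hnm x hx => hB hnm hx
  have (n : ℕ) := finiteDimensional_starSubalgebra_comap hval (B n)
  have := finiteDimensional_starSubalgebra_comap hval D
  have : IsMulCommutative (D.comap val) := ⟨⟨fun x y => Subtype.ext <| hval <|
    congrArg Subtype.val (mul_comm' (⟨val x, x.2⟩ : D) ⟨val y, y.2⟩)⟩⟩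
  obtain ⟨u, hu⟩ := FaithfulTrace.exists_unitary_finiteDimensional_map_sup hτ.isBallComplete hB'
    (fun _ q hq ε hε => hτ.isNearlyIn hd hB hBM hq hε) (D.comap val)
  let C (n : ℕ) : StarSubalgebra ℂ M.toStarSubalgebra :=
    ((B n).comap val).map (Unitary.conjStarAlgAut ℂ M.toStarSubalgebra u :
      M.toStarSubalgebra →⋆ₐ[ℂ] M.toStarSubalgebra) ⊔ D.comap val
  have (n : ℕ) : FiniteDimensional ℂ (C n) := hu n
  refine ⟨fun n => (C n).map val, fun n m hnm => ?_, ?_,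
    fun n => finiteDimensional_starSubalgebra_map val _,
    fun n x hx => ⟨⟨x, hDM hx⟩, StarSubalgebra.mem_sup_right hx, rfl⟩, ?_⟩
  · exact StarSubalgebra.map_mono (sup_le_sup_right (StarSubalgebra.map_mono (hB' hnm)) _)
  · rintro n _ ⟨x, -, rfl⟩
    exact x.2
  · exact hd.conj_unitary (Unitary.map_mem val u.2)
      (fun n b hb => ⟨_, StarSubalgebra.mem_sup_left ⟨⟨b, hBM n hb⟩, hb, rfl⟩, rfl⟩)
      fun x hx => mul_mem (mul_mem (star_mem u.1.2) hx) u.1.2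

end Hyperfinite

/-- Lemma 3.1 of the paper. Let `M` be a von Neumann algebra on a
separable complex Hilbert space, equipped with a faithful normal tracial state `τ`
(normality is expressed via WOT-sequential continuity on the unit ball, which suffices
since `H` is separable), and suppose `M` is hyperfinite: there is an increasing sequence
of finite-dimensional unital *-subalgebras of `M` whose union is dense in `M` in the
strong operator topology.  Let `D` be a finite-dimensional abelian unital *-subalgebra
of `M`.  Then there is an increasing chain `A 0 = D ⊆ A 1 ⊆ A 2 ⊆ ⋯` of
finite-dimensional unital *-subalgebras of `M`, each containing `D`, whose union is
dense in `M` in the strong operator topology. -/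
theorem stmt0 {H : Type*} [NormedAddCommGroup H] [InnerProductSpace ℂ H]
    [CompleteSpace H] [TopologicalSpace.SeparableSpace H]
    (M : VonNeumannAlgebra H)
    -- a faithful normal tracial state on `M`:
    (τ : (H →L[ℂ] H) →ₗ[ℂ] ℂ)
    (hτ_unital : τ 1 = 1)
    (hτ_tracial : ∀ x ∈ M, ∀ y ∈ M, τ (x * y) = τ (y * x))
    (hτ_pos : ∀ x ∈ M, 0 ≤ (τ (star x * x)).re ∧ (τ (star x * x)).im = 0)
    (hτ_faithful : ∀ x ∈ M, τ (star x * x) = 0 → x = 0)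
    (hτ_normal : ∀ (x : ℕ → H →L[ℂ] H) (y : H →L[ℂ] H),
      (∀ n, x n ∈ M) → (∀ n, ‖x n‖ ≤ 1) → y ∈ M →
      (∀ ξ η : H, Tendsto (fun n => ⟪ξ, x n η⟫_ℂ) atTop (𝓝 ⟪ξ, y η⟫_ℂ)) →
      Tendsto (fun n => τ (x n)) atTop (𝓝 (τ y)))
    -- `M` is hyperfinite:
    (hyperfinite : ∃ B : ℕ → StarSubalgebra ℂ (H →L[ℂ] H),
      Monotone B ∧ (∀ n, (B n : Set (H →L[ℂ] H)) ⊆ M) ∧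
      (∀ n, FiniteDimensional ℂ (B n)) ∧
      (∀ x ∈ M, ∀ s : Finset H, ∀ ε : ℝ, 0 < ε →
        ∃ n, ∃ a ∈ B n, ∀ ξ ∈ s, ‖(a - x) ξ‖ < ε))
    -- `D` is a finite-dimensional abelian unital *-subalgebra of `M`:
    (D : StarSubalgebra ℂ (H →L[ℂ] H))
    (hDM : (D : Set (H →L[ℂ] H)) ⊆ M)
    (hDfin : FiniteDimensional ℂ D)
    (hDab : ∀ x ∈ D, ∀ y ∈ D, x * y = y * x) :
    ∃ A : ℕ → StarSubalgebra ℂ (H →L[ℂ] H),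
      A 0 = D ∧ Monotone A ∧
      (∀ n, (A n : Set (H →L[ℂ] H)) ⊆ M) ∧
      (∀ n, FiniteDimensional ℂ (A n)) ∧
      (∀ n, D ≤ A n) ∧
      (∀ x ∈ M, ∀ s : Finset H, ∀ ε : ℝ, 0 < ε →
        ∃ n, ∃ a ∈ A n, ∀ ξ ∈ s, ‖(a - x) ξ‖ < ε) := by
  obtain ⟨B, hB, hBM, hBfin, hd⟩ := hyperfinite
  let σ : FaithfulTrace M.toStarSubalgebra :=
    { τ ∘ₗ M.toStarSubalgebra.subtype.toAlgHom.toLinearMap with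
      map_mul_comm' x y := hτ_tracial x x.2 y y.2
      map_star_mul_self_nonneg' x := Complex.nonneg_iff.mpr
        ⟨(hτ_pos x x.2).1, (hτ_pos x x.2).2.symm⟩
      eq_zero_of_map_star_mul_self' x hx := Subtype.ext (hτ_faithful x x.2 hx) }
  have hσ : σ.IsNormal := fun x y hx hxy => hτ_normal _ y (fun n => (x n).2) hx y.2 hxy
  have : IsMulCommutative D := ⟨⟨fun x y => Subtype.ext (hDab x x.2 y y.2)⟩⟩
  obtain ⟨A, hA, hAM, hAfin, hDA, hAd⟩ := hσ.exists_monotone_finiteDimensional hd hB hBM hDM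
  refine ⟨fun n => n.casesOn D A, rfl, monotone_nat_of_le_succ
    fun | 0 => hDA 0 | n + 1 => hA n.le_succ, fun | 0 => hDM | n + 1 => hAM n,
    fun | 0 => hDfin | n + 1 => hAfin n, fun | 0 => le_rfl | n + 1 => hDA n,
    fun x hx s ε hε => ?_⟩
  obtain ⟨n, h⟩ := hAd x hx s ε hε
  exact ⟨n + 1, h⟩
end

section
/- Let N and M be multimatrix algebras, each equipped with a faithful tracial state, and let φ : N → M be a unital, trace-preserving *-homomorphism. Then φ can be written as a composition of simple steps; precisely, there exist multimatrix algebras with faithful tracial states N = C_0, C_1, …, C_r, trace-preserving unital *-homomorphisms σ_k : C_{k−1} → C_k each of which is a simple step, and a trace-preserving *-isomorphism θ : C_r → M, such that φ = θ ∘ σ_r ∘ ⋯ ∘ σ_1. -/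
/-- A multimatrix algebra with a faithful tracial state: a finite direct sum
`⊕_{i} M_{dim i}(ℂ)` of complex matrix algebras, where a minimal projection of the `i`-th
summand has trace `w i > 0` and `∑ i, w i * dim i = 1`. -/
structure MMA where
  ι : Type
  [fin : Fintype ι]
  [dec : DecidableEq ι]
  dim : ι → ℕ
  dim_pos : ∀ i, 0 < dim i
  w : ι → ℝ
  w_pos : ∀ i, 0 < w i
  w_sum : ∑ i, w i * dim i = 1

attribute [instance] MMA.fin MMA.dec

/-- The underlying *-algebra `⊕_i M_{dim i}(ℂ)` of a multimatrix algebra. -/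
abbrev MMA.Alg (A : MMA) : Type := ∀ i, Matrix (Fin (A.dim i)) (Fin (A.dim i)) ℂ

/-- The faithful tracial state `τ(x) = ∑_i (w i) Tr(x_i)`. -/
noncomputable def MMA.tr (A : MMA) (x : A.Alg) : ℂ :=
  ∑ i, (A.w i : ℂ) * Matrix.trace (x i)

/-- A simple step of the first kind: `N = A ⊕ B`, `M = A ⊕ A ⊕ B`, `φ(a,b) = (a,a,b)`,
where the trace weights of the summands of `B` are unchanged and, for each matrix summand
of `A`, its two copies in `M` carry (automatically positive) weights summing to its weight
in `N`.  Here `S` is the set of indices of summands of `N` belonging to `A`. -/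
def IsSimpleStep1 {N M : MMA} (φ : N.Alg →⋆ₐ[ℂ] M.Alg) : Prop :=
  ∃ (S : Finset N.ι)
    (e : ({a // a ∈ S} ⊕ {a // a ∈ S}) ⊕ {a : N.ι // a ∉ S} ≃ M.ι)
    (hd1 : ∀ a : {a // a ∈ S}, M.dim (e (Sum.inl (Sum.inl a))) = N.dim a.1)
    (hd2 : ∀ a : {a // a ∈ S}, M.dim (e (Sum.inl (Sum.inr a))) = N.dim a.1)
    (hd3 : ∀ b : {a : N.ι // a ∉ S}, M.dim (e (Sum.inr b)) = N.dim b.1),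
    (∀ a : {a // a ∈ S},
      M.w (e (Sum.inl (Sum.inl a))) + M.w (e (Sum.inl (Sum.inr a))) = N.w a.1) ∧
    (∀ b : {a : N.ι // a ∉ S}, M.w (e (Sum.inr b)) = N.w b.1) ∧
    (∀ (x : N.Alg) (a : {a // a ∈ S}),
      φ x (e (Sum.inl (Sum.inl a))) = (x a.1).submatrix (Fin.cast (hd1 a)) (Fin.cast (hd1 a))) ∧
    (∀ (x : N.Alg) (a : {a // a ∈ S}),
      φ x (e (Sum.inl (Sum.inr a))) = (x a.1).submatrix (Fin.cast (hd2 a)) (Fin.cast (hd2 a))) ∧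
    (∀ (x : N.Alg) (b : {a : N.ι // a ∉ S}),
      φ x (e (Sum.inr b)) = (x b.1).submatrix (Fin.cast (hd3 b)) (Fin.cast (hd3 b)))

/-- A simple step of the second kind: `N = M_n ⊕ M_m ⊕ B`, `M = M_{n+m} ⊕ B`,
`φ(x,y,b) = (diag(x,y), b)`, where minimal projections of `M_n` and of `M_m` both have
trace `t` in `N`, minimal projections of `M_{n+m}` have the same trace `t` in `M`, and the
weights on `B` are unchanged.  Here `i, j` are the indices of the summands `M_n`, `M_m`
of `N`. -/
def IsSimpleStep2 {N M : MMA} (φ : N.Alg →⋆ₐ[ℂ] M.Alg) : Prop :=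
  ∃ (i j : N.ι) (_ : i ≠ j)
    (e : Unit ⊕ {k : N.ι // k ≠ i ∧ k ≠ j} ≃ M.ι)
    (hd : M.dim (e (Sum.inl ())) = N.dim i + N.dim j)
    (hd2 : ∀ b : {k : N.ι // k ≠ i ∧ k ≠ j}, M.dim (e (Sum.inr b)) = N.dim b.1),
    N.w i = N.w j ∧
    M.w (e (Sum.inl ())) = N.w i ∧
    (∀ b : {k : N.ι // k ≠ i ∧ k ≠ j}, M.w (e (Sum.inr b)) = N.w b.1) ∧
    (∀ x : N.Alg,
      φ x (e (Sum.inl ())) =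
        ((Matrix.reindex finSumFinEquiv finSumFinEquiv)
          (Matrix.fromBlocks (x i) 0 0 (x j))).submatrix (Fin.cast hd) (Fin.cast hd)) ∧
    (∀ (x : N.Alg) (b : {k : N.ι // k ≠ i ∧ k ≠ j}),
      φ x (e (Sum.inr b)) = (x b.1).submatrix (Fin.cast (hd2 b)) (Fin.cast (hd2 b)))

/-- An embedding is a *simple step* if it has one of the two forms above. -/
def IsSimpleStep {N M : MMA} (φ : N.Alg →⋆ₐ[ℂ] M.Alg) : Prop :=
  IsSimpleStep1 φ ∨ IsSimpleStep2 φ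

/-- `SimpleStepFactorization φ` says that `φ` can be written as `θ ∘ σ_r ∘ ⋯ ∘ σ_1`,
where there are traced multimatrix algebras `N = C_0, C_1, …, C_r` (the implicit
intermediate algebras below), each `σ_k : C_{k−1} → C_k` is a trace-preserving unital
*-homomorphism which is a simple step, and `θ : C_r → M` is a trace-preserving
*-isomorphism. -/
inductive SimpleStepFactorization : ∀ {A B : MMA}, (A.Alg →⋆ₐ[ℂ] B.Alg) → Prop
  | iso {A B : MMA} (θ : A.Alg ≃⋆ₐ[ℂ] B.Alg) (hθ : ∀ x, B.tr (θ x) = A.tr x)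
      (φ : A.Alg →⋆ₐ[ℂ] B.Alg) (hφ : ∀ x, φ x = θ x) : SimpleStepFactorization φ
  | comp {A B C : MMA} (σ : A.Alg →⋆ₐ[ℂ] B.Alg) (ψ : B.Alg →⋆ₐ[ℂ] C.Alg)
      (hσ : IsSimpleStep σ) (hσt : ∀ x, B.tr (σ x) = A.tr x)
      (hψ : SimpleStepFactorization ψ) : SimpleStepFactorization (ψ.comp σ)

/-!
By the representation theory of matrix algebras, up to conjugation by a unitary of the target, a
unital *-homomorphism repeats summands and then places the resulting blocks along the diagonals of
the target summands. A summand can be repeated one extra copy at a time by steps of the first kind,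
and two blocks that end up in the same target summand can be merged one pair at a time by steps of
the second kind; what is left is a permutation of summands. The weight of an intermediate summand
is always read off from the target: a block lying in a target summand carries that summand's weight,
so blocks to be merged have equal weights, and the weights of the copies of a summand add up to its
original weight because the homomorphism preserves the trace.
-/

open Matrix

section BlockReindex

variable {ι κ l : Type*} {m : ι → Type*} {n : κ → Type*} {o : l → Type*} {R : Type*}

/-- A bijection between the diagonal positions of two families of blocks sends each block of the
first family into a single block of the second. -/
def PreservesBlocks (E : (Σ i, m i) ≃ Σ j, n j) : Prop :=
  ∀ ⦃s t⦄, s.1 = t.1 → (E s).1 = (E t).1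

theorem PreservesBlocks.trans {E : (Σ i, m i) ≃ Σ j, n j} {F : (Σ j, n j) ≃ Σ k, o k}
    (hE : PreservesBlocks E) (hF : PreservesBlocks F) : PreservesBlocks (E.trans F) :=
  fun _ _ h => hF (hE h)

theorem preservesBlocks_sigmaCongrLeft_symm (e : κ ≃ ι) :
    PreservesBlocks (Equiv.sigmaCongrLeft (β := m) e).symm := by
  intro s t h
  obtain ⟨⟨k, p⟩, rfl⟩ := (Equiv.sigmaCongrLeft e).surjective s
  obtain ⟨⟨k', q⟩, rfl⟩ := (Equiv.sigmaCongrLeft e).surjective t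
  simpa only [Equiv.symm_apply_apply] using e.injective h

variable [DecidableEq ι] [DecidableEq κ] [DecidableEq l]

theorem blockDiagonal'_blockDiag'_submatrix_symm [Zero R] {E : (Σ i, m i) ≃ Σ j, n j}
    (hE : PreservesBlocks E) (x : ∀ i, Matrix (m i) (m i) R) :
    blockDiagonal' (blockDiag' ((blockDiagonal' x).submatrix E.symm E.symm)) =
      (blockDiagonal' x).submatrix E.symm E.symm := by
  ext ⟨j, p⟩ ⟨j', q⟩
  by_cases h : j = j'
  · subst h
    simp [blockDiag'_apply]
  · have hne : (E.symm ⟨j, p⟩).1 ≠ (E.symm ⟨j', q⟩).1 := fun h' => h <| by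
      simpa only [Equiv.apply_symm_apply] using hE h'
    rw [blockDiagonal'_apply_ne _ _ _ h, submatrix_apply, blockDiagonal'_apply_ne _ _ _ hne]

variable [Fintype ι] [Fintype κ] [Fintype l]
  [∀ i, Fintype (m i)] [∀ i, DecidableEq (m i)] [∀ j, Fintype (n j)] [∀ j, DecidableEq (n j)]
  [∀ k, Fintype (o k)] [∀ k, DecidableEq (o k)] [CommSemiring R] [StarRing R]

/-- The *-homomorphism of multimatrix algebras that assembles the blocks of `x` along the diagonals
of larger blocks: the entry of the block-diagonal matrix of `x` at `(s, t)` is moved to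
`(E s, E t)`. -/
def blockReindex (E : (Σ i, m i) ≃ Σ j, n j) (hE : PreservesBlocks E) :
    (∀ i, Matrix (m i) (m i) R) →⋆ₐ[R] ∀ j, Matrix (n j) (n j) R where
  toFun x := blockDiag' ((blockDiagonal' x).submatrix E.symm E.symm)
  map_one' := by rw [blockDiagonal'_one, submatrix_one_equiv, blockDiag'_one]
  map_mul' x y := by
    apply blockDiagonal'_injective
    refine Eq.trans ?_ (blockDiagonal'_mul _ _).symm
    rw [blockDiagonal'_blockDiag'_submatrix_symm hE, blockDiagonal'_blockDiag'_submatrix_symm hE,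
      blockDiagonal'_blockDiag'_submatrix_symm hE, submatrix_mul_equiv, ← blockDiagonal'_mul]
    rfl
  map_zero' := by rw [blockDiagonal'_zero, submatrix_zero]; rfl
  map_add' x y := by rw [blockDiagonal'_add]; rfl
  commutes' c := by
    ext j p q
    simp [Algebra.algebraMap_eq_smul_one, blockDiag'_apply, one_apply]
  map_star' x := by
    change blockDiag' ((blockDiagonal' fun i => (x i)ᴴ).submatrix E.symm E.symm) = _
    rw [← blockDiagonal'_conjTranspose, ← conjTranspose_submatrix]
    rfl

variable {E : (Σ i, m i) ≃ Σ j, n j} {hE : PreservesBlocks E}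

theorem blockReindex_apply (x : ∀ i, Matrix (m i) (m i) R) (j : κ) (p q : n j) :
    blockReindex E hE x j p q = blockDiagonal' x (E.symm ⟨j, p⟩) (E.symm ⟨j, q⟩) :=
  rfl

theorem blockDiagonal'_blockReindex (x : ∀ i, Matrix (m i) (m i) R) :
    blockDiagonal' (blockReindex E hE x) = (blockDiagonal' x).submatrix E.symm E.symm :=
  blockDiagonal'_blockDiag'_submatrix_symm hE x

theorem blockReindex_comp_blockReindex {F : (Σ j, n j) ≃ Σ k, o k} {hF : PreservesBlocks F} :
    (blockReindex F hF).comp (blockReindex E hE) =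
      blockReindex (R := R) (E.trans F) (hE.trans hF) := by
  ext1 x
  apply blockDiagonal'_injective
  simp only [StarAlgHom.comp_apply, blockDiagonal'_blockReindex, submatrix_submatrix]
  rfl

/-- The *-isomorphism permuting blocks of a multimatrix algebra induced by a bijection of diagonal
positions that preserves blocks in both directions. -/
def blockReindexEquiv (E : (Σ i, m i) ≃ Σ j, n j) (hE : PreservesBlocks E)
    (hE' : PreservesBlocks E.symm) :
    (∀ i, Matrix (m i) (m i) R) ≃⋆ₐ[R] ∀ j, Matrix (n j) (n j) R :=
  .ofStarAlgHom (blockReindex E hE) (blockReindex E.symm hE')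
    (by
      ext1 x
      apply blockDiagonal'_injective
      simp [blockDiagonal'_blockReindex])
    (by
      ext1 x
      apply blockDiagonal'_injective
      simp [blockDiagonal'_blockReindex])

/-- The *-homomorphism that repeats the factors of a product of *-algebras as prescribed by `f`,
with `k`-th component `x (f k)`. -/
def piPullback {ι K : Type*} (R : Type*) (A : ι → Type*) [CommSemiring R] [∀ i, Semiring (A i)]
    [∀ i, Algebra R (A i)] [∀ i, Star (A i)] (f : K → ι) :
    (∀ i, A i) →⋆ₐ[R] ∀ k, A (f k) where
  toFun x k := x (f k)
  map_one' := rfl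
  map_mul' _ _ := rfl
  map_zero' := rfl
  map_add' _ _ := rfl
  commutes' _ := rfl
  map_star' _ := rfl

theorem piPullback_eq_blockReindex (e : κ ≃ ι) :
    piPullback R (fun i => Matrix (m i) (m i) R) e =
      blockReindex (Equiv.sigmaCongrLeft e).symm (preservesBlocks_sigmaCongrLeft_symm e) := by
  ext x k p q
  exact (blockDiagonal'_apply_eq x (e k) p q).symm

theorem blockReindex_sigmaAssoc_trans_sigmaCongrRight {K : κ → Type*} [∀ j, Fintype (K j)]
    [∀ j, DecidableEq (K j)] {b : (Σ j, K j) → Type*} [∀ k, Fintype (b k)]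
    [∀ k, DecidableEq (b k)] (e : ∀ j, (Σ k, b ⟨j, k⟩) ≃ n j)
    (hE : PreservesBlocks ((Equiv.sigmaAssoc fun j k => b ⟨j, k⟩).trans (Equiv.sigmaCongrRight e)))
    (y : ∀ k, Matrix (b k) (b k) R) (j : κ) :
    blockReindex _ hE y j =
      (blockDiagonal' fun k => y ⟨j, k⟩).submatrix (e j).symm (e j).symm := by
  ext p q
  obtain ⟨⟨k, p⟩, rfl⟩ := (e j).surjective p
  obtain ⟨⟨k', q⟩, rfl⟩ := (e j).surjective q
  simp only [blockReindex_apply, submatrix_apply, Equiv.symm_trans_apply,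
    Equiv.sigmaCongrRight_symm, Equiv.sigmaCongrRight_apply, Equiv.symm_apply_apply]
  by_cases h : k = k'
  · subst h
    exact (blockDiagonal'_apply_eq y ⟨j, k⟩ p q).trans
      (blockDiagonal'_apply_eq (fun k => y ⟨j, k⟩) k p q).symm
  · rw [blockDiagonal'_apply_ne _ _ _ h]
    exact blockDiagonal'_apply_ne y _ _ fun h' => h (by simpa using h')

end BlockReindex

section Representations

universe u v w

section MatrixUnit

variable {ι : Type*} {n : ι → Type*} [DecidableEq ι] [∀ i, DecidableEq (n i)] {R : Type*}

/-- The matrix units of the multimatrix algebra `⊕ᵢ M_{n i}(R)`. -/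
def matrixUnit (R : Type*) [Zero R] [One R] (i : ι) (p q : n i) : ∀ i, Matrix (n i) (n i) R :=
  Pi.single i (single p q 1)

theorem trace_matrixUnit_self [∀ i, Fintype (n i)] [Semiring R] (i j : ι) (p : n i) :
    (matrixUnit R i p p j).trace = if j = i then 1 else 0 := by
  by_cases hj : j = i
  · subst hj
    simp [matrixUnit]
  · simp [matrixUnit, hj]

theorem star_matrixUnit [Semiring R] [StarRing R] (i : ι) (p q : n i) :
    star (matrixUnit R i p q) = matrixUnit R i q p := by
  rw [matrixUnit, ← Pi.single_star, star_eq_conjTranspose, conjTranspose_single, star_one,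
    matrixUnit]

variable [∀ i, Fintype (n i)]

theorem matrixUnit_mul_matrixUnit [Semiring R] (i : ι) (p q r : n i) :
    matrixUnit R i p q * matrixUnit R i q r = matrixUnit R i p r := by
  rw [matrixUnit, matrixUnit, ← Pi.single_mul, single_mul_single_same, mul_one, matrixUnit]

theorem sum_matrixUnit [Fintype ι] [Semiring R] : ∑ i, ∑ p : n i, matrixUnit R i p p = 1 := by
  ext1 k
  simp only [Finset.sum_apply]
  rw [Finset.sum_eq_single k (fun j _ hj => by simp [matrixUnit, hj.symm]) (by simp)]
  simp [matrixUnit, sum_single_one]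

theorem mul_matrixUnit [CommSemiring R] (x : ∀ i, Matrix (n i) (n i) R) (i : ι) (p q : n i) :
    x * matrixUnit R i p q = ∑ r, x i r p • matrixUnit R i r q := by
  ext k a b
  simp only [Finset.sum_apply, Pi.mul_apply, Pi.smul_apply, Matrix.sum_apply]
  by_cases hk : k = i
  · subst hk
    simp [matrixUnit, mul_apply, single_apply, ite_and]
  · simp [matrixUnit, hk]

end MatrixUnit

variable {𝕜 : Type w} [RCLike 𝕜]

theorem exists_isometry_mul_conjTranspose_eq {m : Type u} [Fintype m] {P : Matrix m m 𝕜}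
    (hP : IsStarProjection P) :
    ∃ (κ : Type u) (_ : Fintype κ) (_ : DecidableEq κ) (W : Matrix m κ 𝕜),
      Wᴴ * W = 1 ∧ W * Wᴴ = P := by
  classical
  have hH : P.IsHermitian := hP.isSelfAdjoint
  let U : Matrix m m 𝕜 := hH.eigenvectorUnitary
  have hUU : Uᴴ * U = 1 := Unitary.coe_star_mul_self hH.eigenvectorUnitary
  have hspec : ∀ a b, P a b = ∑ i, U a i * (hH.eigenvalues i : 𝕜) * star (U b i) := fun a b => by
    refine (congrFun₂ hH.spectral_theorem a b).trans ?_
    rw [Unitary.conjStarAlgAut_apply, mul_apply]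
    simp only [mul_diagonal, star_apply, Function.comp_apply, U]
  have heig : ∀ i, hH.eigenvalues i = 0 ∨ hH.eigenvalues i = 1 := fun i =>
    hP.isIdempotentElem.spectrum_subset ℝ (hH.eigenvalues_mem_spectrum_real i)
  let W : Matrix m {i // hH.eigenvalues i = 1} 𝕜 := U.submatrix id Subtype.val
  refine ⟨_, inferInstance, inferInstance, W, ?_, ?_⟩
  · rw [conjTranspose_submatrix, ← submatrix_mul _ _ _ _ _ Function.bijective_id, hUU,
      submatrix_one _ Subtype.val_injective]
  · ext a b
    have hzero : ∑ i : {i // ¬ hH.eigenvalues i = 1},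
        U a i * (hH.eigenvalues i : 𝕜) * star (U b i) = 0 :=
      Finset.sum_eq_zero fun i _ => by simp [(heig i).resolve_right i.2]
    rw [hspec, ← Fintype.sum_subtype_add_sum_subtype (fun i => hH.eigenvalues i = 1), hzero,
      add_zero, mul_apply]
    exact Finset.sum_congr rfl fun i _ => by simp [W, i.2]

variable {ι : Type v} {n : ι → Type*} [∀ i, Fintype (n i)]
  [∀ i, DecidableEq (n i)] [∀ i, Nonempty (n i)]

-- The isometries `T i p` are obtained from one onto the range of the image of a minimal projection
-- `e i z z` by transporting it with the matrix units `e i p z`.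
theorem exists_isometries_intertwining [Fintype ι] {m : Type u} [Fintype m] [DecidableEq m]
    (φ : (∀ i, Matrix (n i) (n i) 𝕜) →⋆ₐ[𝕜] Matrix m m 𝕜) :
    ∃ (κ : ι → Type u) (_ : ∀ i, Fintype (κ i)) (_ : ∀ i, DecidableEq (κ i))
      (T : ∀ i, n i → Matrix m (κ i) 𝕜),
      (∀ i p, (T i p)ᴴ * T i p = 1) ∧ ∑ i, ∑ p, T i p * (T i p)ᴴ = 1 ∧
        ∀ x i p, φ x * T i p = ∑ q, x i q p • T i q := by
  classical
  have z : ∀ i, n i := fun i => Classical.arbitrary (n i)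
  let e : ∀ i, n i → n i → Matrix m m 𝕜 := fun i p q => φ (matrixUnit 𝕜 i p q)
  have he_mul : ∀ i p q r, e i p q * e i q r = e i p r := fun i p q r => by
    rw [← map_mul, matrixUnit_mul_matrixUnit]
  have he_star : ∀ i p q, (e i p q)ᴴ = e i q p := fun i p q => by
    rw [← star_eq_conjTranspose, ← map_star, star_matrixUnit]
  choose κ hκ hκ' W hW hW' using fun i =>
    exists_isometry_mul_conjTranspose_eq (P := e i (z i) (z i)) ⟨he_mul _ _ _ _, he_star _ _ _⟩
  let T : ∀ i, n i → Matrix m (κ i) 𝕜 := fun i p => e i p (z i) * W i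
  have hT_star : ∀ i p, (T i p)ᴴ = (W i)ᴴ * e i (z i) p := fun i p => by
    rw [conjTranspose_mul, he_star]
  refine ⟨κ, hκ, hκ', T, fun i p => ?_, ?_, fun x i p => ?_⟩
  · calc (T i p)ᴴ * T i p = (W i)ᴴ * (e i (z i) p * e i p (z i)) * W i := by
          rw [hT_star]; simp only [T, Matrix.mul_assoc]
      _ = ((W i)ᴴ * W i) * ((W i)ᴴ * W i) := by
          rw [he_mul, ← hW']; simp only [Matrix.mul_assoc]
      _ = 1 := by rw [hW, Matrix.mul_one]
  · have hT_range : ∀ i p, T i p * (T i p)ᴴ = e i p p := fun i p => by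
      calc T i p * (T i p)ᴴ = e i p (z i) * (W i * (W i)ᴴ) * e i (z i) p := by
            rw [hT_star]; simp only [T, Matrix.mul_assoc]
        _ = e i p p := by rw [hW', he_mul, he_mul]
    simp only [hT_range, e, ← map_sum, sum_matrixUnit, map_one]
  · simp only [T, e, ← Matrix.mul_assoc, ← map_mul, mul_matrixUnit, map_sum, map_smul,
      Matrix.sum_mul, Matrix.smul_mul]

theorem exists_coisometry_intertwining_blockDiagonal' [Finite ι] {m : Type u} [Fintype m]
    [DecidableEq m]
    (φ : (∀ i, Matrix (n i) (n i) 𝕜) →⋆ₐ[𝕜] Matrix m m 𝕜) :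
    ∃ (K : Type (max u v)) (_ : Fintype K) (_ : DecidableEq K) (f : K → ι)
      (V : Matrix m (Σ k, n (f k)) 𝕜), (∀ s, (Vᴴ * V) s s = 1) ∧ V * Vᴴ = 1 ∧
        ∀ x, φ x * V = V * blockDiagonal' fun k => x (f k) := by
  classical
  cases nonempty_fintype ι
  obtain ⟨κ, _, _, T, hT, hT_sum, hφT⟩ := exists_isometries_intertwining φ
  refine ⟨Σ i, κ i, inferInstance, inferInstance, Sigma.fst,
    of fun a s => T s.1.1 s.2 a s.1.2, ?_, ?_, fun x => ?_⟩
  · rintro ⟨⟨i, k⟩, p⟩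
    change ((T i p)ᴴ * T i p) k k = 1
    rw [hT, one_apply_eq]
  · rw [← hT_sum]
    ext a b
    simp only [mul_apply, Fintype.sum_sigma, Matrix.sum_apply, conjTranspose_apply, of_apply]
    refine Finset.sum_congr rfl fun i _ => ?_
    rw [Finset.sum_comm]
  · ext a ⟨⟨i, k⟩, p⟩
    change (φ x * T i p) a k = _
    rw [hφT, mul_apply, Fintype.sum_sigma, Matrix.sum_apply]
    symm
    refine (Finset.sum_eq_single (⟨i, k⟩ : Σ i, κ i) (fun l _ hl => ?_) (by simp)).trans ?_
    · refine Finset.sum_eq_zero fun q _ => ?_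
      rw [blockDiagonal'_apply_ne _ _ _ hl, mul_zero]
    · simp [mul_comm]

-- Both index types have the cardinality `trace (V * Vᴴ) = trace (Vᴴ * V)`.
theorem nonempty_equiv_of_mul_conjTranspose_eq_one {m s : Type*} [Fintype m] [DecidableEq m]
    [Fintype s] {V : Matrix m s 𝕜} (hV : V * Vᴴ = 1) (hV' : ∀ a, (Vᴴ * V) a a = 1) :
    Nonempty (s ≃ m) := by
  have h : (Vᴴ * V).trace = (V * Vᴴ).trace := trace_mul_comm _ _
  rw [hV, trace_one] at h
  simp only [Matrix.trace, diag_apply, hV', Finset.sum_const, Finset.card_univ, nsmul_eq_mul,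
    mul_one, Nat.cast_inj] at h
  exact ⟨Fintype.equivOfCardEq h⟩

theorem exists_unitary_intertwining_blockDiagonal' [Finite ι] {m : Type u} [Fintype m]
    [DecidableEq m]
    (φ : (∀ i, Matrix (n i) (n i) 𝕜) →⋆ₐ[𝕜] Matrix m m 𝕜) :
    ∃ (K : Type (max u v)) (_ : Fintype K) (_ : DecidableEq K) (f : K → ι)
      (e : (Σ k, n (f k)) ≃ m), ∃ U ∈ unitary (Matrix m m 𝕜),
        ∀ x, φ x * U = U * (blockDiagonal' fun k => x (f k)).submatrix e.symm e.symm := by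
  obtain ⟨K, _, _, f, V, hV, hV', hφV⟩ := exists_coisometry_intertwining_blockDiagonal' φ
  obtain ⟨e⟩ := nonempty_equiv_of_mul_conjTranspose_eq_one hV' hV
  let U : Matrix m m 𝕜 := V.submatrix id e.symm
  have hU : U * Uᴴ = 1 := by
    rw [conjTranspose_submatrix, submatrix_mul_equiv, hV', submatrix_id_id]
  refine ⟨K, inferInstance, inferInstance, f, e, U,
    Unitary.mem_iff.2 ⟨mul_eq_one_comm.1 hU, hU⟩, fun x => ?_⟩
  rw [submatrix_mul_equiv, ← hφV]
  rfl

theorem exists_eq_conjStarAlgAut_blockReindex_piPullback [Finite ι] {κ : Type u} [Fintype κ]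
    [DecidableEq κ] {m : κ → Type u} [∀ j, Fintype (m j)] [∀ j, DecidableEq (m j)]
    (φ : (∀ i, Matrix (n i) (n i) 𝕜) →⋆ₐ[𝕜] ∀ j, Matrix (m j) (m j) 𝕜) :
    ∃ (K : Type (max u v)) (_ : Fintype K) (_ : DecidableEq K) (f : K → ι)
      (E : (Σ k, n (f k)) ≃ Σ j, m j) (hE : PreservesBlocks E)
      (U : unitary (∀ j, Matrix (m j) (m j) 𝕜)), ∀ x,
        φ x = Unitary.conjStarAlgAut 𝕜 _ U (blockReindex E hE (piPullback 𝕜 _ f x)) := by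
  choose K hK hK' f e U hU hφU using fun j =>
    exists_unitary_intertwining_blockDiagonal'
      ((Pi.evalStarAlgHom 𝕜 (fun j => Matrix (m j) (m j) 𝕜) j).comp φ)
  have hU' : U ∈ unitary (∀ j, Matrix (m j) (m j) 𝕜) :=
    Unitary.mem_iff.2 ⟨funext fun j => (hU j).1, funext fun j => (hU j).2⟩
  let F : (Σ j, K j) → ι := fun k => f k.1 k.2
  let E : (Σ k, n (F k)) ≃ Σ j, m j :=
    (Equiv.sigmaAssoc fun j k => n (f j k)).trans (Equiv.sigmaCongrRight e)
  have hE : PreservesBlocks E := fun _ _ h =>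
    congrArg (fun k : Σ j, K j => k.1) h
  refine ⟨Σ j, K j, inferInstance, inferInstance, F, E, hE, ⟨U, hU'⟩,
    fun x => ?_⟩
  have hcomm : φ x * U = U * blockReindex E hE (piPullback 𝕜 _ F x) := by
    ext1 j
    exact (hφU j x).trans <| congrArg (U j * ·)
      (blockReindex_sigmaAssoc_trans_sigmaCongrRight (b := fun k => n (F k)) e hE
        (piPullback 𝕜 _ F x) j).symm
  rw [Unitary.conjStarAlgAut_apply, ← hcomm, mul_assoc, Unitary.mul_star_self_of_mem hU', mul_one]

end Representations

section Trace

theorem sum_mul_comp_eq_sum_fiber_mul {ι κ R : Type*} [Fintype ι] [Fintype κ] [DecidableEq ι]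
    [NonUnitalNonAssocSemiring R] (f : κ → ι) (v : κ → R) (g : ι → R) :
    ∑ k, v k * g (f k) = ∑ i, (∑ k with f k = i, v k) * g i := by
  rw [← Finset.sum_fiberwise Finset.univ f]
  refine Finset.sum_congr rfl fun i _ => ?_
  rw [Finset.sum_mul]
  exact Finset.sum_congr rfl fun k hk => by rw [(Finset.mem_filter.1 hk).2]

theorem eq_of_sum_mul_trace_eq {ι R : Type*} [Fintype ι] [Semiring R] {n : ι → Type*}
    [∀ i, Fintype (n i)] [∀ i, Nonempty (n i)] {v w : ι → R}
    (h : ∀ x : ∀ i, Matrix (n i) (n i) R,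
      ∑ i, v i * (x i).trace = ∑ i, w i * (x i).trace) : v = w := by
  classical
  ext i
  obtain ⟨p⟩ := ‹∀ i, Nonempty (n i)› i
  simpa [trace_matrixUnit_self] using h (matrixUnit R i p p)

theorem MMA.tr_blockReindex (B : MMA) {κ : Type*} [Fintype κ] [DecidableEq κ] {n : κ → Type*}
    [∀ k, Fintype (n k)] [∀ k, DecidableEq (n k)] {v : κ → ℝ}
    {E : (Σ k, n k) ≃ Σ j, Fin (B.dim j)} {hE : PreservesBlocks E}
    (hv : ∀ s, B.w (E s).1 = v s.1) (y : ∀ k, Matrix (n k) (n k) ℂ) :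
    B.tr (blockReindex E hE y) = ∑ k, (v k : ℂ) * (y k).trace := by
  simp only [MMA.tr, Matrix.trace, Finset.mul_sum, ← Fintype.sum_sigma']
  refine (Fintype.sum_equiv E _ _ fun s => ?_).symm
  rw [hv, diag_apply, diag_apply, blockReindex_apply, Equiv.symm_apply_apply,
    blockDiagonal'_apply_eq]

theorem MMA.tr_conjStarAlgAut (A : MMA) (U : unitary A.Alg) (x : A.Alg) :
    A.tr (Unitary.conjStarAlgAut ℂ _ U x) = A.tr x := by
  rw [Unitary.conjStarAlgAut_apply]
  refine Finset.sum_congr rfl fun i _ => ?_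
  rw [Pi.mul_apply, Matrix.trace_mul_comm, ← Pi.mul_apply, ← mul_assoc,
    Unitary.star_mul_self_of_mem U.2, one_mul]

end Trace

section Split

variable (A : MMA) {K : Type} [Fintype K] [DecidableEq K]

/-- The multimatrix algebra containing, for each `k`, a copy of the summand `f k` of `A` with trace
weight `v k`; the weights of the copies of a summand add up to the weight of that summand. -/
def MMA.pullback (f : K → A.ι) (v : K → ℝ) (hv : ∀ k, 0 < v k)
    (hf : ∀ i, ∑ k with f k = i, v k = A.w i) : MMA where
  ι := K
  dim k := A.dim (f k)
  dim_pos k := A.dim_pos (f k)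
  w := v
  w_pos := hv
  w_sum := by
    rw [sum_mul_comp_eq_sum_fiber_mul f v fun i => (A.dim i : ℝ)]
    simpa only [hf] using A.w_sum

variable {A} {v : K → ℝ} {hv : ∀ k, 0 < v k}

theorem MMA.tr_piPullback {f : K → A.ι} {hf : ∀ i, ∑ k with f k = i, v k = A.w i} (x : A.Alg) :
    (A.pullback f v hv hf).tr (piPullback ℂ _ f x) = A.tr x := by
  refine (sum_mul_comp_eq_sum_fiber_mul f (fun k => (v k : ℂ)) fun i => (x i).trace).trans ?_
  simp only [← Complex.ofReal_sum, hf]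
  rfl

/-- The index set of a direct sum in which the summands indexed by `S` occur twice and the
remaining ones once, in the form used by `IsSimpleStep1`. -/
abbrev SplitIndex {ι : Type*} (S : Finset ι) : Type _ :=
  ({a // a ∈ S} ⊕ {a // a ∈ S}) ⊕ {a // a ∉ S}

/-- The map sending each summand of the direct sum indexed by `SplitIndex S` to the summand of which
it is a copy. -/
def splitMap {ι : Type*} (S : Finset ι) : SplitIndex S → ι
  | .inl (.inl a) => a
  | .inl (.inr a) => a
  | .inr a => a

theorem isSimpleStep1_piPullback_splitMap {S : Finset A.ι} {v : SplitIndex S → ℝ}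
    {hv : ∀ k, 0 < v k} {hf : ∀ i, ∑ k with splitMap S k = i, v k = A.w i} :
    IsSimpleStep1 (M := A.pullback (splitMap S) v hv hf) (piPullback ℂ _ (splitMap S)) := by
  refine ⟨S, Equiv.refl _, fun _ => rfl, fun _ => rfl, fun _ => rfl, fun a => ?_, fun b => ?_,
    fun _ _ => rfl, fun _ _ => rfl, fun _ _ => rfl⟩
  · have hfiber : ∀ k, splitMap S k = a.1 ↔ k = .inl (.inl a) ∨ k = .inl (.inr a) := by
      rintro ((k | k) | k)
      · simp [splitMap]
      · simp [splitMap]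
      · simpa [splitMap] using fun h : k.1 = a.1 => k.2 (h ▸ a.2)
    rw [← hf]
    simp only [hfiber, Finset.filter_or, Finset.filter_eq', Finset.mem_univ, if_true,
      ← Finset.insert_eq]
    rw [Finset.sum_pair (by simp)]
    rfl
  · have hfiber : ∀ k, splitMap S k = b.1 ↔ k = .inr b := by
      rintro ((k | k) | k)
      · simpa [splitMap] using fun h : k.1 = b.1 => b.2 (h ▸ k.2)
      · simpa [splitMap] using fun h : k.1 = b.1 => b.2 (h ▸ k.2)
      · simp [splitMap, Subtype.coe_inj]
    rw [← hf]
    simp only [hfiber, Finset.filter_eq', Finset.mem_univ, if_true, Finset.sum_singleton]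
    rfl

theorem not_injective_splitMap {ι : Type*} {S : Finset ι} {i : ι} (hi : i ∈ S) :
    ¬ (splitMap S).Injective := fun h => by
  simpa using @h (.inl (.inl ⟨i, hi⟩)) (.inl (.inr ⟨i, hi⟩)) rfl

theorem exists_splitMap_singleton_comp_eq {ι κ : Type*} {f : κ → ι}
    (hf : f.Surjective) (hf' : ¬ f.Injective) :
    ∃ i, ∃ g : κ → SplitIndex {i}, g.Surjective ∧ splitMap {i} ∘ g = f := by
  classical
  obtain ⟨k₁, k₂, hk, hne⟩ := Function.not_injective_iff.1 hf'
  let i := f k₁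
  have hi : i ∈ ({i} : Finset ι) := Finset.mem_singleton_self i
  refine ⟨i, fun k => if h : f k ∈ ({i} : Finset ι) then
    .inl (if k = k₁ then .inl ⟨i, hi⟩ else .inr ⟨i, hi⟩) else .inr ⟨f k, h⟩, ?_, ?_⟩
  · rintro ((⟨a, ha⟩ | ⟨a, ha⟩) | ⟨a, ha⟩)
    · obtain rfl := Finset.mem_singleton.1 ha
      exact ⟨k₁, by simp [i]⟩
    · obtain rfl := Finset.mem_singleton.1 ha
      exact ⟨k₂, by simp [i, ← hk, hne.symm]⟩
    · obtain ⟨k, rfl⟩ := hf a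
      exact ⟨k, by simp [ha]⟩
  · ext k
    by_cases h : f k ∈ ({i} : Finset ι)
    · rw [Function.comp_apply, dif_pos h]
      split_ifs <;> exact (Finset.mem_singleton.1 h).symm
    · rw [Function.comp_apply, dif_neg h]
      rfl

end Split

section Merge

theorem add_add_sum_subtype_ne_and_ne {ι M : Type*} [Fintype ι] [DecidableEq ι] [AddCommMonoid M]
    {i j : ι} (hij : i ≠ j) (F : ι → M) :
    F i + F j + ∑ k : {k // k ≠ i ∧ k ≠ j}, F k = ∑ k, F k := by
  rw [← Finset.sum_pair hij, ← Finset.sum_compl_add_sum {i, j}, add_comm]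
  congr 1
  exact (Finset.sum_subtype _ (by simp) F).symm

namespace MMA

variable {A : MMA} {i j : A.ι} (hij : i ≠ j) (hw : A.w i = A.w j)

/-- The multimatrix algebra obtained from `A` by embedding the summands `i` and `j`, which have the
same trace weight, as diagonal blocks of a single summand. -/
def merge : MMA where
  ι := Unit ⊕ {k // k ≠ i ∧ k ≠ j}
  dim := Sum.elim (fun _ => A.dim i + A.dim j) fun k => A.dim k
  dim_pos := by
    rintro (_ | k)
    · exact Nat.add_pos_left (A.dim_pos i) _
    · exact A.dim_pos k
  w := Sum.elim (fun _ => A.w i) fun k => A.w k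
  w_pos := by
    rintro (_ | k)
    · exact A.w_pos i
    · exact A.w_pos k
  w_sum := by
    rw [← A.w_sum, ← add_add_sum_subtype_ne_and_ne hij, ← hw]
    simp [mul_add]

theorem card_merge_lt : Fintype.card (merge hij hw).ι < Fintype.card A.ι := by
  have h := add_add_sum_subtype_ne_and_ne hij fun _ => 1
  have hcard : Fintype.card (merge hij hw).ι = 1 + Fintype.card {k // k ≠ i ∧ k ≠ j} :=
    Fintype.card_sum
  simp only [Finset.sum_const, Finset.card_univ, smul_eq_mul, mul_one] at h
  omega

/-- The diagonal position of `A` that becomes a given diagonal position of `merge`. -/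
def mergeIndex : (Σ k, Fin ((merge hij hw).dim k)) → Σ k, Fin (A.dim k)
  | ⟨.inl _, p⟩ => Sum.elim (Sigma.mk i) (Sigma.mk j) (finSumFinEquiv.symm p)
  | ⟨.inr k, p⟩ => ⟨k, p⟩

theorem mergeIndex_surjective : (mergeIndex hij hw).Surjective := by
  rintro ⟨k, p⟩
  by_cases hi : k = i
  · subst hi
    exact ⟨⟨.inl (), finSumFinEquiv (.inl p)⟩, by simp [mergeIndex]⟩
  by_cases hj : k = j
  · subst hj
    exact ⟨⟨.inl (), finSumFinEquiv (.inr p)⟩, by simp [mergeIndex]⟩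
  exact ⟨⟨.inr ⟨k, hi, hj⟩, p⟩, rfl⟩

theorem mergeIndex_bijective : (mergeIndex hij hw).Bijective := by
  refine (Fintype.bijective_iff_surjective_and_card _).2 ⟨mergeIndex_surjective hij hw, ?_⟩
  simp only [Fintype.card_sigma, Fintype.card_fin]
  rw [← add_add_sum_subtype_ne_and_ne hij]
  exact Fintype.sum_sum_type _

theorem mergeIndex_inl_fst (p : Fin ((merge hij hw).dim (.inl ()))) :
    (mergeIndex hij hw ⟨.inl (), p⟩).1 = i ∨ (mergeIndex hij hw ⟨.inl (), p⟩).1 = j := by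
  obtain ⟨p | p, rfl⟩ := finSumFinEquiv.surjective p
  · simp [mergeIndex]
  · simp [mergeIndex]

theorem w_mergeIndex (s : Σ k, Fin ((merge hij hw).dim k)) :
    A.w (mergeIndex hij hw s).1 = (merge hij hw).w s.1 := by
  obtain ⟨_ | k, p⟩ := s
  · rcases mergeIndex_inl_fst hij hw p with h | h
    · exact congrArg A.w h
    · exact (congrArg A.w h).trans hw.symm
  · rfl

/-- The bijection of diagonal positions underlying the inclusion of `A` in the algebra `merge`. -/
noncomputable def mergeEquiv : (Σ k, Fin (A.dim k)) ≃ Σ k, Fin ((merge hij hw).dim k) :=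
  (Equiv.ofBijective _ (mergeIndex_bijective hij hw)).symm

theorem preservesBlocks_mergeEquiv : PreservesBlocks (mergeEquiv hij hw) := by
  intro s t h
  obtain ⟨s, rfl⟩ := (mergeEquiv hij hw).symm.surjective s
  obtain ⟨t, rfl⟩ := (mergeEquiv hij hw).symm.surjective t
  rw [Equiv.apply_symm_apply, Equiv.apply_symm_apply]
  change (mergeIndex hij hw s).1 = (mergeIndex hij hw t).1 at h
  obtain ⟨_ | k, p⟩ := s <;> obtain ⟨_ | l, q⟩ := t
  · rfl
  · rcases mergeIndex_inl_fst hij hw p with hp | hp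
    · exact absurd (h.symm.trans hp) l.2.1
    · exact absurd (h.symm.trans hp) l.2.2
  · rcases mergeIndex_inl_fst hij hw q with hq | hq
    · exact absurd (h.trans hq) k.2.1
    · exact absurd (h.trans hq) k.2.2
  · exact congrArg Sum.inr (Subtype.ext h)

theorem preservesBlocks_mergeEquiv_symm_trans {κ : Type*} {n : κ → Type*}
    {E : (Σ k, Fin (A.dim k)) ≃ Σ j, n j} (hE : PreservesBlocks E) {p : Fin (A.dim i)}
    {q : Fin (A.dim j)} (hpq : (E ⟨i, p⟩).1 = (E ⟨j, q⟩).1) :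
    PreservesBlocks ((mergeEquiv hij hw).symm.trans E) := by
  have hmerged : ∀ r, (E (mergeIndex hij hw ⟨.inl (), r⟩)).1 = (E ⟨i, p⟩).1 := fun r => by
    rcases mergeIndex_inl_fst hij hw r with h | h
    · exact hE h
    · exact (hE h).trans hpq.symm
  rintro ⟨_ | k, r⟩ ⟨l, r'⟩ rfl
  · exact (hmerged r).trans (hmerged r').symm
  · exact hE rfl

/-- The *-homomorphism `(x, y, b) ↦ (diag(x, y), b)` that merges the summands `i` and `j`. -/
noncomputable def mergeHom : A.Alg →⋆ₐ[ℂ] (merge hij hw).Alg :=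
  blockReindex (mergeEquiv hij hw) (preservesBlocks_mergeEquiv hij hw)

theorem tr_mergeHom (x : A.Alg) : (merge hij hw).tr (mergeHom hij hw x) = A.tr x :=
  tr_blockReindex _ (fun s => by
    rw [← w_mergeIndex]
    exact congrArg (fun s => A.w s.1) ((mergeEquiv hij hw).symm_apply_apply s)) x

theorem isSimpleStep2_mergeHom : IsSimpleStep2 (mergeHom hij hw) := by
  refine ⟨i, j, hij, Equiv.refl _, rfl, fun _ => rfl, hw, rfl, fun _ => rfl, fun x => ?_,
    fun x k => ?_⟩
  · ext p q
    change blockDiagonal' x (mergeIndex hij hw ⟨.inl (), p⟩) (mergeIndex hij hw ⟨.inl (), q⟩) =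
      fromBlocks (x i) 0 0 (x j) (finSumFinEquiv.symm p) (finSumFinEquiv.symm q)
    obtain ⟨p, rfl⟩ := finSumFinEquiv.surjective p
    obtain ⟨q, rfl⟩ := finSumFinEquiv.surjective q
    rcases p with p | p <;> rcases q with q | q <;>
      simp [mergeIndex, blockDiagonal'_apply_ne, hij, hij.symm]
  · ext p q
    exact blockDiagonal'_apply_eq x k.1 p q

end MMA

end Merge

section Factorization

theorem SimpleStepFactorization.trans_iso {A B C : MMA} {φ : A.Alg →⋆ₐ[ℂ] B.Alg}
    (h : SimpleStepFactorization φ) (θ : B.Alg ≃⋆ₐ[ℂ] C.Alg) (hθ : ∀ x, C.tr (θ x) = B.tr x)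
    (ψ : A.Alg →⋆ₐ[ℂ] C.Alg) (hψ : ∀ x, ψ x = θ (φ x)) : SimpleStepFactorization ψ := by
  induction h with
  | iso η hη φ hφ =>
    exact .iso (η.trans θ) (fun x => (hθ _).trans (hη x)) ψ fun x => by rw [hψ, hφ]; rfl
  | comp σ χ hσ hσt _ ih =>
    have hψ' : ψ = ((θ : _ →⋆ₐ[ℂ] C.Alg).comp χ).comp σ := by
      ext1 x
      exact hψ x
    rw [hψ']
    exact .comp σ _ hσ hσt (ih θ hθ _ fun _ => rfl)

variable {A B : MMA}

theorem simpleStepFactorization_blockReindex {E : (Σ i, Fin (A.dim i)) ≃ Σ j, Fin (B.dim j)}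
    (hE : PreservesBlocks E) (hw : ∀ s, B.w (E s).1 = A.w s.1) :
    SimpleStepFactorization (blockReindex E hE) := by
  induction hn : Fintype.card A.ι using Nat.strong_induction_on generalizing A with
  | _ n ih =>
    by_cases hE' : PreservesBlocks E.symm
    · exact .iso (blockReindexEquiv E hE hE') (B.tr_blockReindex (hE := hE) hw) _ fun _ => rfl
    obtain ⟨s, t, hst, hij⟩ : ∃ s t, s.1 = t.1 ∧ (E.symm s).1 ≠ (E.symm t).1 := by
      simpa [PreservesBlocks] using hE'
    obtain ⟨⟨i, p⟩, rfl⟩ := E.surjective s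
    obtain ⟨⟨j, q⟩, rfl⟩ := E.surjective t
    simp only [Equiv.symm_apply_apply] at hij
    have hwij : A.w i = A.w j := by rw [← hw ⟨i, p⟩, hst, hw]
    let F := (MMA.mergeEquiv hij hwij).symm.trans E
    have hF : PreservesBlocks F := MMA.preservesBlocks_mergeEquiv_symm_trans hij hwij hE hst
    have hcomp : blockReindex E hE = (blockReindex F hF).comp (MMA.mergeHom hij hwij) := by
      rw [MMA.mergeHom, blockReindex_comp_blockReindex]
      simp only [F, ← Equiv.trans_assoc, Equiv.self_trans_symm, Equiv.refl_trans]
    rw [hcomp]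
    exact .comp _ _ (.inr (MMA.isSimpleStep2_mergeHom hij hwij)) (MMA.tr_mergeHom hij hwij) <|
      ih _ (hn ▸ MMA.card_merge_lt hij hwij) hF
        (fun s => (hw _).trans (MMA.w_mergeIndex hij hwij s)) rfl

theorem simpleStepFactorization_blockReindex_comp_piPullback_equiv {K : Type} [Fintype K]
    [DecidableEq K] (e : K ≃ A.ι) {E : (Σ k, Fin (A.dim (e k))) ≃ Σ j, Fin (B.dim j)}
    (hE : PreservesBlocks E) (hw : ∀ s, B.w (E s).1 = A.w (e s.1)) :
    SimpleStepFactorization ((blockReindex E hE).comp (piPullback ℂ _ e)) := by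
  rw [piPullback_eq_blockReindex, blockReindex_comp_blockReindex]
  refine simpleStepFactorization_blockReindex _ fun s => ?_
  obtain ⟨s, rfl⟩ := (Equiv.sigmaCongrLeft (β := fun i => Fin (A.dim i)) e).surjective s
  rw [Equiv.trans_apply, Equiv.symm_apply_apply, hw]
  rfl

theorem simpleStepFactorization_blockReindex_comp_piPullback {K : Type} [Fintype K] [DecidableEq K]
    {f : K → A.ι} {v : K → ℝ} (hf : ∀ i, ∑ k with f k = i, v k = A.w i)
    {E : (Σ k, Fin (A.dim (f k))) ≃ Σ j, Fin (B.dim j)} (hE : PreservesBlocks E)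
    (hw : ∀ s, B.w (E s).1 = v s.1) :
    SimpleStepFactorization ((blockReindex E hE).comp (piPullback ℂ _ f)) := by
  have hv : ∀ k, 0 < v k := fun k => (B.w_pos _).trans_eq (hw ⟨k, ⟨0, A.dim_pos (f k)⟩⟩)
  induction hn : Fintype.card K - Fintype.card A.ι using Nat.strong_induction_on
    generalizing A with
  | _ n ih =>
    have hsurj : f.Surjective := fun i => by
      obtain ⟨k, hk⟩ := Finset.nonempty_of_sum_ne_zero ((hf i).trans_ne (A.w_pos i).ne')
      exact ⟨k, (Finset.mem_filter.1 hk).2⟩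
    by_cases hinj : f.Injective
    · obtain ⟨e, rfl⟩ : ∃ e : K ≃ A.ι, ⇑e = f := ⟨Equiv.ofBijective f ⟨hinj, hsurj⟩, rfl⟩
      refine simpleStepFactorization_blockReindex_comp_piPullback_equiv e hE fun s => ?_
      simpa [Finset.filter_eq', hw] using hf (e s.1)
    · obtain ⟨i, g, hg, rfl⟩ := exists_splitMap_singleton_comp_eq hsurj hinj
      let v' := fun a => ∑ k with g k = a, v k
      have hv' : ∀ a, 0 < v' a := fun a => by
        obtain ⟨k, rfl⟩ := hg a
        exact Finset.sum_pos (fun k _ => hv k) ⟨k, by simp⟩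
      have hf' : ∀ a, ∑ b with splitMap {i} b = a, v' b = A.w a := fun a => by
        rw [← hf, Finset.sum_fiberwise_eq_sum_filter]
        simp only [Finset.mem_filter, Finset.mem_univ, true_and, Function.comp_apply]
      let A' := A.pullback (splitMap {i}) v' hv' hf'
      refine .comp (B := A') (piPullback ℂ _ (splitMap {i})) _
        (.inl isSimpleStep1_piPullback_splitMap) MMA.tr_piPullback
        (ih (A := A') (f := g) _ ?_ (fun _ => rfl) hE hw rfl)
      have hlt : Fintype.card A.ι < Fintype.card A'.ι :=
        Fintype.card_lt_of_surjective_not_injective _ hsurj.of_comp <|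
          not_injective_splitMap (Finset.mem_singleton_self i)
      have hle : Fintype.card A'.ι ≤ Fintype.card K := Fintype.card_le_of_surjective g hg
      omega

end Factorization

/-- Lemma 3.5 of the paper. Every unital trace-preserving
*-homomorphism between multimatrix algebras with faithful tracial states can be written
as a composition of simple steps followed by a trace-preserving *-isomorphism. -/
theorem stmt1 (N M : MMA) (φ : N.Alg →⋆ₐ[ℂ] M.Alg)
    (hφ : ∀ x, M.tr (φ x) = N.tr x) :
    SimpleStepFactorization φ := by
  have := fun i => Fin.pos_iff_nonempty.1 (N.dim_pos i)
  obtain ⟨K, _, _, f, E, hE, U, hU⟩ := exists_eq_conjStarAlgAut_blockReindex_piPullback φ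
  let v : K → ℝ := fun k => M.w (E ⟨k, ⟨0, N.dim_pos (f k)⟩⟩).1
  have hv : ∀ s, M.w (E s).1 = v s.1 := fun s => congrArg M.w (hE rfl)
  have htr : ∀ x : N.Alg,
      ∑ i, (∑ k with f k = i, (v k : ℂ)) * (x i).trace = ∑ i, (N.w i : ℂ) * (x i).trace :=
    fun x => calc
      _ = ∑ k, (v k : ℂ) * (x (f k)).trace :=
        (sum_mul_comp_eq_sum_fiber_mul f _ fun i => (x i).trace).symm
      _ = M.tr (blockReindex E hE (piPullback ℂ _ f x)) := (M.tr_blockReindex hv _).symm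
      _ = M.tr (φ x) := by rw [hU, M.tr_conjStarAlgAut]
      _ = N.tr x := hφ x
  have hf : ∀ i, ∑ k with f k = i, v k = N.w i := fun i => by
    exact_mod_cast congrFun (eq_of_sum_mul_trace_eq htr) i
  exact (simpleStepFactorization_blockReindex_comp_piPullback hf hE hv)
    |>.trans_iso (Unitary.conjStarAlgAut ℂ M.Alg U) (M.tr_conjStarAlgAut U) φ hU
end

section
/- Let (X, 𝒜, μ) be a finite measure space and let Q be a finite measurable partition of X. Then there exists a sequence (P_n)_{n≥1} of finite measurable partitions of X such that each P_n refines Q, each P_{n+1} refines P_n, and every set S ∈ P_n either has μ(S) < 2^{−n} or is an atom of μ. -/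
open MeasureTheory

/-- A finite measurable partition of the space: a finite collection of pairwise disjoint
measurable sets whose union is all of `X`. -/
def IsFinMeasPartition {X : Type*} [MeasurableSpace X] (P : Finset (Set X)) : Prop :=
  (∀ S ∈ P, MeasurableSet S) ∧
  (∀ S ∈ P, ∀ T ∈ P, S ≠ T → Disjoint S T) ∧
  ⋃₀ (P : Set (Set X)) = Set.univ

/-- A partition `P` refines a partition `Q` if every element of `P` is contained in some
element of `Q`. -/
def PartitionRefines {X : Type*} (P Q : Finset (Set X)) : Prop :=
  ∀ S ∈ P, ∃ T ∈ Q, S ⊆ T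

/-- `S` is an atom of `μ`: `μ(S) > 0` and every measurable subset `T ⊆ S` satisfies
`μ(T) = 0` or `μ(T) = μ(S)`. -/
def IsMeasAtom {X : Type*} [MeasurableSpace X] (μ : Measure X) (S : Set X) : Prop :=
  0 < μ S ∧ ∀ T ⊆ S, MeasurableSet T → μ T = 0 ∨ μ T = μ S

/-!
Call a set divisible if it is a finite disjoint union of measurable sets, each of measure `< ε` or
an atom. If a set of finite measure is not divisible, then by an ordering principle of
Brezis–Browder type it contains a measurable non-divisible set `T` such that every measurable
non-divisible subset of `T` has the same measure as `T`; the principle applies because continuity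
from above makes the intersection of a decreasing sequence of non-divisible sets non-divisible.
Given a measurable `U ⊆ T`, one of `U` and `T \ U` is not divisible and so carries the whole measure
of `T`. As `μ T ≥ ε > 0`, it follows that `T` is an atom, contradicting its non-divisibility.
Dividing the members of `Q`, then the members of the partition so obtained for a smaller `ε`, and so
on, gives the sequence.
-/

open Filter Topology TopologicalSpace
open scoped ENNReal

section OrderingPrinciple

variable {α β : Type*} [Preorder α] [LinearOrder β] [DenselyOrdered β] [TopologicalSpace β]
  [OrderClosedTopology β] [SeparableSpace β]

theorem exists_forall_le_apply_le_of_antitone_seq_bddBelow [Nonempty α] {f : α → β}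
    (hf : Monotone f) (hbdd : ∀ a : ℕ → α, Antitone a → BddBelow (Set.range a)) :
    ∃ x, ∀ y ≤ x, f x ≤ f y := by
  obtain ⟨a₀⟩ := ‹Nonempty α›
  have : Nonempty β := ⟨f a₀⟩
  -- At step `n`, descend so that `f` falls below the `n`-th point of a dense sequence, if possible.
  have hstep : ∀ (n : ℕ) (a : α), ∃ b ≤ a, ∀ y ≤ a, f y < denseSeq β n → f b < denseSeq β n := by
    intro n a
    by_cases h : ∃ y ≤ a, f y < denseSeq β n
    · obtain ⟨b, hba, hb⟩ := h
      exact ⟨b, hba, fun _ _ _ => hb⟩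
    · exact ⟨a, le_rfl, fun y hya hy => (h ⟨y, hya, hy⟩).elim⟩
  choose next hnext_le hnext_lt using hstep
  let a : ℕ → α := fun n => Nat.rec a₀ next n
  obtain ⟨x, hx⟩ := hbdd a (antitone_nat_of_succ_le fun n => hnext_le n (a n))
  have hxa : ∀ n, x ≤ a n := fun n => hx (Set.mem_range_self n)
  refine ⟨x, fun y hyx => not_lt.1 fun hlt => ?_⟩
  obtain ⟨_, ⟨n, rfl⟩, hyn, hnx⟩ := (denseRange_denseSeq β).exists_between hlt
  have hxn : f x < denseSeq β n :=
    (hf (hxa (n + 1))).trans_lt (hnext_lt n (a n) y (hyx.trans (hxa n)) hyn)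
  exact hxn.not_gt hnx

end OrderingPrinciple

section FinDisjUnion

variable {X : Type*} {𝒞 : Set (Set X)} {S T : Set X}

/-- `S` is the union of a finite pairwise disjoint subfamily of `𝒞`. This is the local form of a
finite partition into members of `𝒞`; the empty family is allowed, so `∅` always qualifies. -/
def IsFinDisjUnion (𝒞 : Set (Set X)) (S : Set X) : Prop :=
  ∃ P : Finset (Set X), (∀ T ∈ P, T ∈ 𝒞) ∧ (P : Set (Set X)).PairwiseDisjoint id ∧
    ⋃₀ (P : Set (Set X)) = S

namespace IsFinDisjUnion

theorem of_mem (hS : S ∈ 𝒞) : IsFinDisjUnion 𝒞 S :=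
  ⟨{S}, by simpa using hS, by simp, by simp⟩

theorem union (hS : IsFinDisjUnion 𝒞 S) (hT : IsFinDisjUnion 𝒞 T) (hST : Disjoint S T) :
    IsFinDisjUnion 𝒞 (S ∪ T) := by
  classical
  obtain ⟨P, hP𝒞, hPd, rfl⟩ := hS
  obtain ⟨R, hR𝒞, hRd, rfl⟩ := hT
  refine ⟨P ∪ R, fun A hA => (Finset.mem_union.1 hA).elim (hP𝒞 A) (hR𝒞 A), ?_, ?_⟩
  · rw [Finset.coe_union]
    exact hPd.union hRd fun A hA B hB _ =>
      hST.mono (Set.subset_sUnion_of_mem hA) (Set.subset_sUnion_of_mem hB)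
  · rw [Finset.coe_union, Set.sUnion_union]

theorem of_sdiff (hT : IsFinDisjUnion 𝒞 T) (hST : IsFinDisjUnion 𝒞 (S \ T)) (h : T ⊆ S) :
    IsFinDisjUnion 𝒞 S :=
  Set.union_sdiff_cancel h ▸ hT.union hST Set.disjoint_sdiff_right

end IsFinDisjUnion

end FinDisjUnion

section SmallOrAtom

variable {X : Type*} [MeasurableSpace X] {μ : Measure X} {ε : ℝ≥0∞} {S : Set X}

theorem IsMeasAtom.of_forall_eq_or_sdiff_eq (hS : μ S ≠ ∞) (hpos : 0 < μ S)
    (h : ∀ T ⊆ S, MeasurableSet T → μ T = μ S ∨ μ (S \ T) = μ S) : IsMeasAtom μ S := by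
  refine ⟨hpos, fun T hTS hT => (h T hTS hT).symm.imp_left fun hdiff => ?_⟩
  have hadd : μ S + μ T = μ S + 0 := by
    simpa only [Set.inter_eq_right.2 hTS, hdiff, add_zero] using
      measure_sdiff_add_inter (μ := μ) S hT
  exact (ENNReal.add_right_inj hS).1 hadd

/-- The measurable sets that have measure less than `ε` or are atoms of `μ`: the pieces allowed in
a partition of fineness `ε`. -/
def smallOrAtomSets (μ : Measure X) (ε : ℝ≥0∞) : Set (Set X) :=
  {S | MeasurableSet S ∧ (μ S < ε ∨ IsMeasAtom μ S)}

theorem IsFinDisjUnion.exists_of_iInter (hε : 0 < ε) {A : ℕ → Set X}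
    (hA : ∀ n, MeasurableSet (A n)) (hanti : Antitone A) (hfin : ∃ n, μ (A n) ≠ ∞)
    (h : IsFinDisjUnion (smallOrAtomSets μ ε) (⋂ n, A n)) :
    ∃ n, IsFinDisjUnion (smallOrAtomSets μ ε) (A n) := by
  have hI : MeasurableSet (⋂ n, A n) := MeasurableSet.iInter hA
  have hI_fin : μ (⋂ n, A n) ≠ ∞ :=
    hfin.elim fun n hn => measure_ne_top_of_subset (Set.iInter_subset A n) hn
  have hlim : Tendsto (μ ∘ A) atTop (𝓝 (μ (⋂ n, A n))) :=
    tendsto_measure_iInter_atTop (fun n => (hA n).nullMeasurableSet) hanti hfin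
  obtain ⟨n, hn⟩ :=
    (hlim.eventually_lt_const (ENNReal.lt_add_right hI_fin hε.ne')).exists
  have hsub : ⋂ n, A n ⊆ A n := Set.iInter_subset A n
  have hsmall : μ (A n \ ⋂ n, A n) < ε :=
    measure_sdiff_lt_of_lt_add hI.nullMeasurableSet hsub hI_fin hn
  exact ⟨n, h.of_sdiff (.of_mem ⟨(hA n).diff hI, Or.inl hsmall⟩) hsub⟩

theorem exists_measure_eq_of_not_isFinDisjUnion (hε : 0 < ε) (hS : MeasurableSet S)
    (hS_fin : μ S ≠ ∞) (hSd : ¬ IsFinDisjUnion (smallOrAtomSets μ ε) S) :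
    ∃ T, MeasurableSet T ∧ μ T ≠ ∞ ∧ ¬ IsFinDisjUnion (smallOrAtomSets μ ε) T ∧
      ∀ U ⊆ T, MeasurableSet U → ¬ IsFinDisjUnion (smallOrAtomSets μ ε) U → μ U = μ T := by
  let 𝒩 := {T : Set X // MeasurableSet T ∧ μ T ≠ ∞ ∧ ¬ IsFinDisjUnion (smallOrAtomSets μ ε) T}
  have : Nonempty 𝒩 := ⟨⟨S, hS, hS_fin, hSd⟩⟩
  have hmono : Monotone fun T : 𝒩 => μ T.1 := fun _ _ h => measure_mono h
  have hbdd : ∀ A : ℕ → 𝒩, Antitone A → BddBelow (Set.range A) := by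
    intro A hA
    have hsub : ∀ n, ⋂ n, (A n).1 ⊆ (A n).1 := Set.iInter_subset _
    have hId : ¬ IsFinDisjUnion (smallOrAtomSets μ ε) (⋂ n, (A n).1) := fun h =>
      have ⟨n, hn⟩ := h.exists_of_iInter hε (fun n => (A n).2.1) hA ⟨0, (A 0).2.2.1⟩
      (A n).2.2.2 hn
    refine ⟨⟨⋂ n, (A n).1, .iInter fun n => (A n).2.1,
      measure_ne_top_of_subset (hsub 0) (A 0).2.2.1, hId⟩, ?_⟩
    rintro _ ⟨n, rfl⟩
    exact hsub n
  obtain ⟨⟨T, hT, hT_fin, hTd⟩, hmin⟩ :=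
    exists_forall_le_apply_le_of_antitone_seq_bddBelow hmono hbdd
  exact ⟨T, hT, hT_fin, hTd, fun U hUT hU hUd => (measure_mono hUT).antisymm
    (hmin ⟨U, hU, measure_ne_top_of_subset hUT hT_fin, hUd⟩ hUT)⟩

theorem isFinDisjUnion_smallOrAtomSets (hε : 0 < ε) (hS : MeasurableSet S)
    (hS_fin : μ S ≠ ∞) : IsFinDisjUnion (smallOrAtomSets μ ε) S := by
  by_contra hSd
  obtain ⟨T, hT, hT_fin, hTd, hT_eq⟩ :=
    exists_measure_eq_of_not_isFinDisjUnion hε hS hS_fin hSd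
  have hεT : ε ≤ μ T := not_lt.1 fun hlt => hTd (.of_mem ⟨hT, Or.inl hlt⟩)
  have hatom : IsMeasAtom μ T := by
    refine .of_forall_eq_or_sdiff_eq hT_fin (hε.trans_le hεT) fun U hUT hU => ?_
    by_cases hUd : IsFinDisjUnion (smallOrAtomSets μ ε) U
    · exact Or.inr (hT_eq _ Set.sdiff_subset (hT.diff hU) fun h => hTd (hUd.of_sdiff h hUT))
    · exact Or.inl (hT_eq U hUT hU hUd)
  exact hTd (.of_mem ⟨hT, Or.inr hatom⟩)

end SmallOrAtom

section Refinement

variable {X : Type*}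

theorem PartitionRefines.refl (P : Finset (Set X)) : PartitionRefines P P :=
  fun S hS => ⟨S, hS, subset_rfl⟩

theorem PartitionRefines.trans {P Q R : Finset (Set X)} (hPQ : PartitionRefines P Q)
    (hQR : PartitionRefines Q R) : PartitionRefines P R := by
  intro S hS
  obtain ⟨T, hT, hST⟩ := hPQ S hS
  obtain ⟨U, hU, hTU⟩ := hQR T hT
  exact ⟨U, hU, hST.trans hTU⟩

theorem IsFinMeasPartition.exists_refines_of_isFinDisjUnion [MeasurableSpace X]
    {𝒞 : Set (Set X)} {Q : Finset (Set X)} (hQ : IsFinMeasPartition Q)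
    (h𝒞 : ∀ S ∈ 𝒞, MeasurableSet S) (h : ∀ S ∈ Q, IsFinDisjUnion 𝒞 S) :
    ∃ P, IsFinMeasPartition P ∧ PartitionRefines P Q ∧ ∀ S ∈ P, S ∈ 𝒞 := by
  classical
  obtain ⟨-, hQd, hQu⟩ := hQ
  choose! f hf𝒞 hfd hfS using h
  have hP𝒞 : ∀ A ∈ Q.biUnion f, A ∈ 𝒞 := fun A hA =>
    have ⟨S, hS, hAS⟩ := Finset.mem_biUnion.1 hA
    hf𝒞 S hS A hAS
  have hPd : (Q.biUnion f : Set (Set X)).PairwiseDisjoint id := by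
    rw [Finset.coe_biUnion]
    refine Set.PairwiseDisjoint.biUnion_finset (fun S hS T hT hST => ?_) hfd
    simpa only [Function.onFun, Finset.sup_id_set_eq_sUnion, hfS S hS, hfS T hT]
      using hQd S hS T hT hST
  have hPu : ⋃₀ (Q.biUnion f : Set (Set X)) = Set.univ := by
    rw [Finset.coe_biUnion, ← hQu, Set.sUnion_eq_biUnion (s := (Q : Set (Set X)))]
    simp only [Set.sUnion_iUnion]
    exact Set.iUnion₂_congr hfS
  refine ⟨Q.biUnion f, ⟨fun A hA => h𝒞 A (hP𝒞 A hA), fun A hA B hB => hPd hA hB, hPu⟩,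
    fun A hA => ?_, hP𝒞⟩
  obtain ⟨S, hS, hAS⟩ := Finset.mem_biUnion.1 hA
  exact ⟨S, hS, hfS S hS ▸ Set.subset_sUnion_of_mem (Finset.mem_coe.2 hAS)⟩

theorem IsFinMeasPartition.exists_refines_lt_or_isMeasAtom [MeasurableSpace X] (μ : Measure X)
    [IsFiniteMeasure μ] {ε : ℝ≥0∞} (hε : 0 < ε) {Q : Finset (Set X)}
    (hQ : IsFinMeasPartition Q) :
    ∃ P, IsFinMeasPartition P ∧ PartitionRefines P Q ∧ ∀ S ∈ P, μ S < ε ∨ IsMeasAtom μ S := by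
  obtain ⟨P, hP, hPQ, hPε⟩ :=
    hQ.exists_refines_of_isFinDisjUnion (𝒞 := smallOrAtomSets μ ε) (fun _ hS => hS.1)
      fun S hS => isFinDisjUnion_smallOrAtomSets hε (hQ.1 S hS) (measure_ne_top μ S)
  exact ⟨P, hP, hPQ, fun S hS => (hPε S hS).2⟩

end Refinement

theorem stmt3_general {X : Type*} [MeasurableSpace X] (μ : Measure X) [IsFiniteMeasure μ]
    {ε : ℕ → ℝ≥0∞} (hε : ∀ n, 0 < ε n) {Q : Finset (Set X)} (hQ : IsFinMeasPartition Q) :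
    ∃ P : ℕ → Finset (Set X),
      (∀ n, IsFinMeasPartition (P n)) ∧
      (∀ n, PartitionRefines (P n) Q) ∧
      (∀ n, PartitionRefines (P (n + 1)) (P n)) ∧
      (∀ n, ∀ S ∈ P n, μ S < ε n ∨ IsMeasAtom μ S) := by
  choose next hnext hnext_refines hnext_small using
    fun (n : ℕ) (R : {R : Finset (Set X) // IsFinMeasPartition R}) =>
      R.2.exists_refines_lt_or_isMeasAtom μ (hε n)
  let R : ℕ → {R : Finset (Set X) // IsFinMeasPartition R} := fun n =>
    Nat.rec ⟨Q, hQ⟩ (fun n R => ⟨next n R, hnext n R⟩) n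
  have hstep : ∀ n, PartitionRefines (R (n + 1)).1 (R n).1 := fun n => hnext_refines n (R n)
  have hRQ : ∀ n, PartitionRefines (R n).1 Q := fun n => by
    induction n with
    | zero => exact .refl Q
    | succ n ih => exact (hstep n).trans ih
  exact ⟨fun n => (R (n + 1)).1, fun n => (R (n + 1)).2, fun n => hRQ (n + 1),
    fun n => hstep (n + 1), fun n => hnext_small n (R n)⟩

/-- Given a finite measure space `(X, 𝒜, μ)` and a finite measurable
partition `Q` of `X`, there is a sequence `(P_n)_{n ≥ 1}` of finite measurable partitions
of `X`, each refining `Q`, with `P_{n+1}` refining `P_n`, such that every `S ∈ P_n` either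
has `μ(S) < 2^{−n}` or is an atom of `μ`. -/
theorem stmt3 {X : Type*} [MeasurableSpace X] (μ : Measure X) [IsFiniteMeasure μ]
    (Q : Finset (Set X)) (hQ : IsFinMeasPartition Q) :
    ∃ P : ℕ → Finset (Set X),
      (∀ n, 1 ≤ n → IsFinMeasPartition (P n)) ∧
      (∀ n, 1 ≤ n → PartitionRefines (P n) Q) ∧
      (∀ n, 1 ≤ n → PartitionRefines (P (n + 1)) (P n)) ∧
      (∀ n, 1 ≤ n → ∀ S ∈ P n, μ S < (2 : ENNReal)⁻¹ ^ n ∨ IsMeasAtom μ S) := by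
  obtain ⟨P, hP, hPQ, hstep, hsmall⟩ := stmt3_general μ (ε := fun n => (2 : ℝ≥0∞)⁻¹ ^ n)
    (ENNReal.pow_pos (ENNReal.inv_pos.2 ENNReal.ofNat_ne_top)) hQ
  exact ⟨P, fun n _ => hP n, fun n _ => hPQ n, fun n _ => hstep n, fun n _ => hsmall n⟩
end
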